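/- arXiv:1508.05813 — 2 statements merged into one kernel-verified Lean document; each statement's English description precedes it below -/
import Mathlib

section
/- Let R be a commutative Noetherian ring and let C be a semidualizing R-module. Then C is pointwise dualizing if and only if for every prime ideal p of R, π_i(p, Hom_R(C, E(R/p))) equals 1 when i = ht(p) and equals 0 when i ≠ ht(p). -/
/-! The argument rests on the isomorphism
`Tor_i^{R_p}(k(p), Hom_R(R_p, Hom_R(C, E))) ≃ Hom(Ext^i_{R_p}(k(p), C_p), Hom_R(R_p, E))`
for `E` injective (`PD.dualBass_eq`, obtained from `PD.homDom_adj` and `PD.tor_ext`). When `E` is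
the injective hull of `R/p`, the elements of `Hom_R(R_p, E)` killed by the maximal ideal form a
copy of `k(p)` (`PD.hull_socle`), so the dual Bass number is `0` exactly when
`Ext^i(k(p), C_p) = 0`, and it is `1` when that Ext module is cyclic and nonzero.

The theorem becomes a statement about the local rings `R_p`. The key point is `PD.main_local`: if
`C` is semidualizing over a Noetherian local ring of dimension `d` and `Ext^i(k, C)` vanishes for
large `i`, then `Ext^i(k, C) = 0` for `i ≠ d` and `Ext^d(k, C)` is cyclic and nonzero. The proof is
an induction on `d`. An element regular on `R` and `C` is factored out by Rees' theorem
`PD.reesMap_bijective`. If there is none, a nonzero element of `R` is killed by the maximal ideal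
(a nonzero map `C → k → C` is a homothety), and `PD.depthZero_main` shows that then
`Ext^i(k, C) = 0` for `i > 0`, that `Hom(k, C)` is cyclic, and that the dimension is `0`.

Forward direction: finite injective dimension of `C_m` kills `Ext^i(R/p, C)` locally at `m` for
large `i`, hence locally at every `p ≤ m`, because Ext commutes with localization for finitely
generated modules (`PD.ext_loc`). Backward direction: for `p` maximal, vanishing of
`Ext^i(k(p), C_p)` for `i > ht p` propagates to all cyclic modules by Noetherian induction
(`PD.sub_cyclic_of_residue`), which by Baer's criterion bounds the injective dimension
(`PD.sub_cyclic_of_sub_cyclic`). Injective hulls are constructed in `PD.exists_hull`.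

Most homological work is done with `CategoryTheory.Abelian.Ext`; `PD.subsingleton_extM_iff`
compares it with the derived-functor definition of Ext in the statement. -/

open CategoryTheory

universe u

noncomputable section

variable (R : Type u) [CommRing R]

/-- The Ext module `Ext^i_R(M, N)`, via the derived functor definition. -/
noncomputable def extM (M N : Type u) [AddCommGroup M] [Module R M]
    [AddCommGroup N] [Module R N] (i : ℕ) : ModuleCat R :=
  ((Ext R (ModuleCat.{u} R) i).obj (Opposite.op (ModuleCat.of R M))).obj (ModuleCat.of R N)

/-- The Tor module `Tor_i^R(M, N)`, via the derived functor definition. -/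
noncomputable def torM (M N : Type u) [AddCommGroup M] [Module R M]
    [AddCommGroup N] [Module R N] (i : ℕ) : ModuleCat R :=
  ((Tor (ModuleCat.{u} R) i).obj (ModuleCat.of R M)).obj (ModuleCat.of R N)

/-- `C` is a semidualizing `R`-module: it is finitely generated, the homothety map
`R → Hom_R(C,C)` is bijective, and `Ext^i_R(C,C) = 0` for all `i > 0`. -/
def IsSemidualizing (C : Type u) [AddCommGroup C] [Module R C] : Prop :=
  Module.Finite R C ∧
  Function.Bijective (fun r : R => r • (LinearMap.id : C →ₗ[R] C)) ∧
  ∀ i : ℕ, 0 < i → Subsingleton (extM R C C i)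

/-- Injective dimension of a module, characterized via vanishing of Ext. -/
noncomputable def injDim (M : Type u) [AddCommGroup M] [Module R M] : ℕ∞ :=
  sInf {n : ℕ∞ | ∀ (N : Type u) (_ : AddCommGroup N) (_ : Module R N) (i : ℕ),
    n < i → Subsingleton (extM R N M i)}

/-- Flat dimension of a module, characterized via vanishing of Tor. -/
noncomputable def flatDim (M : Type u) [AddCommGroup M] [Module R M] : ℕ∞ :=
  sInf {n : ℕ∞ | ∀ (N : Type u) (_ : AddCommGroup N) (_ : Module R N) (i : ℕ),
    n < i → Subsingleton (torM R N M i)}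

/-- The length of a module, as the height of `⊤` in its submodule lattice. -/
noncomputable def mLength (M : Type u) [AddCommGroup M] [Module R M] : ℕ∞ :=
  Order.height (⊤ : Submodule R M)

/-- Depth of a module over a local ring: the least `i` with `Ext^i(k, M) ≠ 0`. -/
noncomputable def depth [IsLocalRing R] (M : Type u) [AddCommGroup M] [Module R M] : ℕ∞ :=
  sInf {n : ℕ∞ | ∃ i : ℕ, n = i ∧ Nontrivial (extM R (IsLocalRing.ResidueField R) M i)}

/-- Depth, as a natural number. -/
noncomputable def depthNat [IsLocalRing R] (M : Type u) [AddCommGroup M] [Module R M] : ℕ :=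
  sInf {i : ℕ | Nontrivial (extM R (IsLocalRing.ResidueField R) M i)}

/-- The type of a module: `r_R(M) = dim_k Ext^t_R(k, M)` where `t = depth_R(M)`. -/
noncomputable def rtype [IsLocalRing R] (M : Type u) [AddCommGroup M] [Module R M] : ℕ∞ :=
  mLength R (extM R (IsLocalRing.ResidueField R) M (depthNat R M))

/-- A dualizing module: a semidualizing module of finite injective dimension. -/
def IsDualizing (C : Type u) [AddCommGroup C] [Module R C] : Prop :=
  IsSemidualizing R C ∧ injDim R C < ⊤

/-- A pointwise dualizing module: the localization at every maximal ideal is dualizing. -/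
def IsPointwiseDualizing (C : Type u) [AddCommGroup C] [Module R C] : Prop :=
  IsSemidualizing R C ∧ ∀ (p : Ideal R) [p.IsPrime], p.IsMaximal →
    IsDualizing (Localization.AtPrime p) (LocalizedModule p.primeCompl C)

/-- Height of a prime ideal. -/
noncomputable def primeHeight (p : Ideal R) [hp : p.IsPrime] : ℕ∞ :=
  Order.height (⟨p, hp⟩ : PrimeSpectrum R)

/-- A totally `C`-reflexive module. -/
def IsTotallyCReflexive (C M : Type u) [AddCommGroup C] [Module R C]
    [AddCommGroup M] [Module R M] : Prop :=
  Module.Finite R M ∧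
  Function.Bijective ((LinearMap.id : (M →ₗ[R] C) →ₗ[R] (M →ₗ[R] C)).flip) ∧
  ∀ i : ℕ, 0 < i →
    Subsingleton (extM R M C i) ∧ Subsingleton (extM R (M →ₗ[R] C) C i)

/-- `G_C`-dimension of `M` is at most `n`. -/
def gcDimLE (C : Type u) [AddCommGroup C] [Module R C] :
    ℕ → (M : Type u) → [AddCommGroup M] → [Module R M] → Prop
  | 0, M, _, _ => IsTotallyCReflexive R C M
  | n+1, M, _, _ => ∃ (G K : Type u) (_ : AddCommGroup G) (_ : Module R G)
      (_ : AddCommGroup K) (_ : Module R K) (f : K →ₗ[R] G) (g : G →ₗ[R] M),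
      IsTotallyCReflexive R C G ∧ Function.Injective f ∧ Function.Surjective g ∧
      LinearMap.range f = LinearMap.ker g ∧ gcDimLE C n K

/-- `M` has finite `G_C`-dimension. -/
def HasFiniteGCDim (C M : Type u) [AddCommGroup C] [Module R C]
    [AddCommGroup M] [Module R M] : Prop :=
  ∃ n : ℕ, gcDimLE R C n M

/-- A finitely generated module over a local ring is Cohen-Macaulay if its depth
equals its Krull dimension. -/
def IsCohenMacaulayModule [IsLocalRing R] (M : Type u) [AddCommGroup M] [Module R M] : Prop :=
  Module.Finite R M ∧ (depth R M : WithBot ℕ∞) = Order.krullDim (Module.support R M)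

/-- The `S`-module structure on `Hom_R(S, M)` through the domain, for an `R`-algebra `S`. -/
instance homDomModule (S : Type u) [CommRing S] [Algebra R S]
    (M : Type u) [AddCommGroup M] [Module R M] : Module S (S →ₗ[R] M) where
  smul s f := f.comp (LinearMap.mul R S s)
  one_smul f := by ext x; show f (1 * x) = f x; rw [one_mul]
  mul_smul s t f := by ext x; show f (s * t * x) = f (t * (s * x)); ring_nf
  smul_zero s := by ext x; rfl
  smul_add s f g := by ext x; rfl
  add_smul s t f := by
    ext x; show f ((s + t) * x) = f (s * x) + f (t * x); rw [add_mul, map_add]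
  zero_smul f := by ext x; show f (0 * x) = 0; rw [zero_mul, map_zero]

/-- The Bass number `μ^i(p, M) = dim_{k(p)} Ext^i_{R_p}(k(p), M_p)`. -/
noncomputable def bassNumber (p : Ideal R) [p.IsPrime] (i : ℕ)
    (M : Type u) [AddCommGroup M] [Module R M] : ℕ∞ :=
  mLength (Localization.AtPrime p)
    (extM (Localization.AtPrime p) (IsLocalRing.ResidueField (Localization.AtPrime p))
      (LocalizedModule p.primeCompl M) i)

/-- The dual Bass number `π_i(p, M) = dim_{k(p)} Tor_i^{R_p}(k(p), Hom_R(R_p, M))`. -/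
noncomputable def dualBassNumber (p : Ideal R) [p.IsPrime] (i : ℕ)
    (M : Type u) [AddCommGroup M] [Module R M] : ℕ∞ :=
  mLength (Localization.AtPrime p)
    (torM (Localization.AtPrime p) (IsLocalRing.ResidueField (Localization.AtPrime p))
      (Localization.AtPrime p →ₗ[R] M) i)

/-- A cotorsion module: `Ext^1_R(F, M) = 0` for every flat module `F`. -/
def IsCotorsion (M : Type u) [AddCommGroup M] [Module R M] : Prop :=
  ∀ (F : Type u) (_ : AddCommGroup F) (_ : Module R F), Module.Flat R F →
    Subsingleton (extM R F M 1)

/-- A `C`-flat module: one isomorphic to `C ⊗_R F` with `F` flat. -/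
def IsCFlat (C M : Type u) [AddCommGroup C] [Module R C] [AddCommGroup M] [Module R M] : Prop :=
  ∃ (F : Type u) (_ : AddCommGroup F) (_ : Module R F), Module.Flat R F ∧
    Nonempty (M ≃ₗ[R] TensorProduct R C F)

/-- A `C`-injective module: one isomorphic to `Hom_R(C, I)` with `I` injective. -/
def IsCInjective (C M : Type u) [AddCommGroup C] [Module R C]
    [AddCommGroup M] [Module R M] : Prop :=
  ∃ (I : Type u) (_ : AddCommGroup I) (_ : Module R I), Module.Injective R I ∧
    Nonempty (M ≃ₗ[R] (C →ₗ[R] I))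

/-- `φ : F → M` is a flat cover of `M`. -/
def IsFlatCover (M F : Type u) [AddCommGroup M] [Module R M] [AddCommGroup F] [Module R F]
    (φ : F →ₗ[R] M) : Prop :=
  Module.Flat R F ∧
  (∀ (G : Type u) (_ : AddCommGroup G) (_ : Module R G), Module.Flat R G →
    ∀ ψ : G →ₗ[R] M, ∃ h : G →ₗ[R] F, φ.comp h = ψ) ∧
  (∀ ψ : F →ₗ[R] F, φ.comp ψ = φ → Function.Bijective ψ)

/-- `E` is an injective hull of `N`: `E` is injective and contains `N` as an
essential submodule. -/
def IsInjectiveHull (N E : Type u) [AddCommGroup N] [Module R N]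
    [AddCommGroup E] [Module R E] : Prop :=
  Module.Injective R E ∧ ∃ ι : N →ₗ[R] E, Function.Injective ι ∧
    ∀ K : Submodule R E, K ≠ ⊥ → K ⊓ LinearMap.range ι ≠ ⊥

end

/-! ### Comparison of the two definitions of Ext -/

namespace PD

/-- In positive degrees, vanishing of `extM` agrees with vanishing of `Abelian.Ext`. -/
theorem subsingleton_extM_iff (R : Type u) [CommRing R] (M N : Type u) [AddCommGroup M] [Module R M]
    [AddCommGroup N] [Module R N] (i : ℕ) :
    Subsingleton (extM R M N (i+1)) ↔
      Subsingleton (Abelian.Ext (ModuleCat.of R M) (ModuleCat.of R N) (i+1)) := by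
  let P : ProjectiveResolution (ModuleCat.of R M) := projectiveResolution _
  let K := P.complex.linearYonedaObj R (ModuleCat.of R N)
  have e : extM R M N (i+1) ≅ K.homology (i+1) := P.isoExt (R := R) (i+1) (ModuleCat.of R N)
  rw [← ModuleCat.isZero_iff_subsingleton, e.isZero_iff,
    ← HomologicalComplex.exactAt_iff_isZero_homology,
    HomologicalComplex.exactAt_iff' K i (i+1) (i+1+1) (by simp) (by simp),
    ShortComplex.moduleCat_exact_iff]
  constructor
  · intro h
    refine ⟨fun a b => ?_⟩
    suffices ∀ a : Abelian.Ext (ModuleCat.of R M) (ModuleCat.of R N) (i+1), a = 0 by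
      rw [this a, this b]
    intro a
    obtain ⟨f, hf, rfl⟩ := P.extMk_surjective a (i+1+1) rfl
    rw [P.extMk_eq_zero_iff f _ _ hf i rfl]
    exact h f hf
  · intro h f hf
    have := Subsingleton.elim (P.extMk (f : P.complex.X (i+1) ⟶ _) (i+1+1) rfl hf) 0
    rw [P.extMk_eq_zero_iff _ _ _ hf i rfl] at this
    exact this

end PD

/-! ### Vanishing of Ext and injective dimension -/

namespace PD
open Abelian

section basic
variable {R : Type u} [CommRing R]

theorem sub_of_iso {M M' N N' : ModuleCat.{u} R} (e : M ≅ M') (f : N ≅ N') (n : ℕ)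
    (h : Subsingleton (Ext M N n)) : Subsingleton (Ext M' N' n) := by
  refine subsingleton_of_forall_eq 0 fun x => ?_
  have h1 : ((Ext.mk₀ e.hom).comp x (zero_add n)).comp (Ext.mk₀ f.inv) (add_zero n) = 0 :=
    Subsingleton.elim _ _
  have h2 : x = (Ext.mk₀ e.inv).comp ((((Ext.mk₀ e.hom).comp x (zero_add n)).comp
      (Ext.mk₀ f.inv) (add_zero n)).comp (Ext.mk₀ f.hom) (add_zero n)) (zero_add n) := by
    simp
  rw [h2, h1]; simp

theorem sub_middle {S : ShortComplex (ModuleCat.{u} R)} (hS : S.ShortExact) {N : ModuleCat.{u} R}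
    {n : ℕ} (h1 : Subsingleton (Ext S.X₁ N n)) (h3 : Subsingleton (Ext S.X₃ N n)) :
    Subsingleton (Ext S.X₂ N n) := by
  refine subsingleton_of_forall_eq 0 fun x => ?_
  obtain ⟨y, rfl⟩ := Ext.contravariant_sequence_exact₂ hS N x (Subsingleton.elim _ _)
  rw [Subsingleton.elim y 0]; simp

theorem sub_of_isZero_left {M N : ModuleCat.{u} R} (h : Subsingleton M) (n : ℕ) :
    Subsingleton (Ext M N n) := by
  refine subsingleton_of_forall_eq 0 fun x => ?_
  have : (Ext.mk₀ (𝟙 M)).comp x (zero_add n) = x := by simp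
  rw [← this, (ModuleCat.isZero_of_subsingleton M).eq_of_src (𝟙 M) 0]; simp

theorem sub_of_isZero_right {M N : ModuleCat.{u} R} (h : Subsingleton N) (n : ℕ) :
    Subsingleton (Ext M N n) := by
  refine subsingleton_of_forall_eq 0 fun x => ?_
  have : x.comp (Ext.mk₀ (𝟙 N)) (add_zero n) = x := by simp
  rw [← this, (ModuleCat.isZero_of_subsingleton N).eq_of_src (𝟙 N) 0]; simp

theorem mk₀_comp_of_eq_smul {M N : ModuleCat.{u} R} (x : R) {f : M ⟶ M} (hf : f = x • 𝟙 M)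
    {n : ℕ} (z : Ext M N n) : (Ext.mk₀ f).comp z (zero_add n) = x • z := by
  rw [hf, Ext.mk₀_smul, Ext.smul_comp]; simp

theorem comp_mk₀_of_eq_smul {M N : ModuleCat.{u} R} (x : R) {f : N ⟶ N} (hf : f = x • 𝟙 N)
    {n : ℕ} (z : Ext M N n) : z.comp (Ext.mk₀ f) (add_zero n) = x • z := by
  rw [hf, Ext.mk₀_smul, Ext.comp_smul]; simp

/-- Multiplication by `x` embeds `R/J` into `R/I` when `J = (I : x)`; the cokernel is
`R/(I + xR)`. -/
def mulQuot (I J : Ideal R) (x : R) (h : ∀ r, x * r ∈ I ↔ r ∈ J) : (R ⧸ J) →ₗ[R] (R ⧸ I) :=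
  Submodule.mapQ J I (LinearMap.lsmul R R x) (fun r hr => (h r).2 hr)

/-- The short complex `R/(I : x) → R/I → R/(I + xR)`. -/
abbrev quotSES (I J : Ideal R) (x : R) (h : ∀ r, x * r ∈ I ↔ r ∈ J) :
    ShortComplex (ModuleCat.{u} R) :=
  ModuleCat.shortComplexOfCompEqZero (mulQuot I J x h)
    (Submodule.factor (le_sup_left : I ≤ I ⊔ Ideal.span {x})) (by
      ext
      simp only [mulQuot, LinearMap.coe_comp, Function.comp_apply]
      change Submodule.Quotient.mk (x * 1) = _
      rw [mul_one]
      exact (Submodule.Quotient.mk_eq_zero _).2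
        (Ideal.mem_sup_right (Ideal.mem_span_singleton_self x)))

theorem quotSES_shortExact (I J : Ideal R) (x : R) (h : ∀ r, x * r ∈ I ↔ r ∈ J) :
    (quotSES I J x h).ShortExact := by
  refine ModuleCat.shortComplex_shortExact _ ?_ ?_ ?_
  · intro y
    obtain ⟨r, rfl⟩ := Submodule.Quotient.mk_surjective _ y
    constructor
    · intro hr
      have hr' : r ∈ I ⊔ Ideal.span {x} := (Submodule.Quotient.mk_eq_zero _).1 hr
      obtain ⟨a, ha, b, hb, rfl⟩ := Submodule.mem_sup.1 hr'
      obtain ⟨c, rfl⟩ := Ideal.mem_span_singleton.1 hb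
      refine ⟨Submodule.Quotient.mk c, ?_⟩
      refine (Submodule.Quotient.eq I).2 ?_
      simpa using ha
    · rintro ⟨z, hz⟩
      obtain ⟨s, rfl⟩ := Submodule.Quotient.mk_surjective _ z
      rw [← hz]
      refine (Submodule.Quotient.mk_eq_zero _).2 ?_
      exact Ideal.mem_sup_right (Ideal.mul_mem_right _ _ (Ideal.mem_span_singleton_self x))
  · refine (injective_iff_map_eq_zero (mulQuot I J x h)).2 ?_
    intro z hz
    obtain ⟨s, rfl⟩ := Submodule.Quotient.mk_surjective _ z
    exact (Submodule.Quotient.mk_eq_zero _).2 ((h s).1 ((Submodule.Quotient.mk_eq_zero _).1 hz))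
  · exact Submodule.factor_surjective le_sup_left

/-- Baer's criterion in terms of `Ext^1` against cyclic modules. -/
theorem injective_of_cyclic (C : ModuleCat.{u} R)
    (h : ∀ I : Ideal R, Subsingleton (Ext (ModuleCat.of R (R ⧸ I)) C 1)) :
    Module.Injective R C := by
  refine Module.Baer.injective fun I g => ?_
  have hS : (ShortComplex.mk (ModuleCat.ofHom I.subtype) (ModuleCat.ofHom I.mkQ)
      (by ext x; exact Ideal.Quotient.eq_zero_iff_mem.2 x.2)).ShortExact := by
    refine ModuleCat.shortComplex_shortExact _ ?_ I.injective_subtype I.mkQ_surjective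
    exact LinearMap.exact_subtype_mkQ I
  have := h I
  obtain ⟨y, hy⟩ := Ext.contravariant_sequence_exact₁ hS C (Ext.mk₀ (ModuleCat.ofHom g)) rfl
    (Subsingleton.elim (α := Ext (ModuleCat.of R (R ⧸ I)) C 1) _ _)
  obtain ⟨y, rfl⟩ := (Ext.mk₀_bijective _ _).2 y
  rw [Ext.mk₀_comp_mk₀] at hy
  have hy := (Ext.mk₀_bijective _ _).1 hy
  refine ⟨y.hom, fun x hx => ?_⟩
  exact congrArg (fun f => f.hom ⟨x, hx⟩) hy

/-- A Baer-type criterion for injective dimension: `Ext^{n+1}(R/I, C) = 0` for all ideals `I`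
suffices. Embedding `C` in an injective module shifts the degree down to Baer's criterion. -/
theorem sub_cyclic_of_sub_cyclic (n : ℕ) : ∀ (C : ModuleCat.{u} R),
    (∀ I : Ideal R, Subsingleton (Ext (ModuleCat.of R (R ⧸ I)) C (n + 1))) →
    HasInjectiveDimensionLT C (n + 1) := by
  induction n with
  | zero =>
    intro C h
    have := injective_of_cyclic C h
    have : Injective C := Module.injective_object_of_injective_module (R := R) (M := C)
    infer_instance
  | succ n ih =>
    intro C h
    let S : ShortComplex (ModuleCat.{u} R) :=
      ShortComplex.mk (Injective.ι C) (Limits.cokernel.π (Injective.ι C)) (by simp)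
    have hS : S.ShortExact :=
      { exact := ShortComplex.exact_cokernel _
        mono_f := inferInstanceAs (Mono (Injective.ι C))
        epi_g := inferInstanceAs (Epi (Limits.cokernel.π (Injective.ι C))) }
    have hinj : Injective S.X₂ := inferInstanceAs (Injective (Injective.under C))
    refine (hS.hasInjectiveDimensionLT_X₃_iff n hinj).1 (ih _ fun I => ?_)
    refine subsingleton_of_forall_eq 0 fun x => ?_
    have h0 : x.comp hS.extClass rfl = 0 := (h I).elim _ _
    obtain ⟨y, rfl⟩ := Ext.covariant_sequence_exact₃ _ hS x rfl h0
    rw [y.eq_zero_of_injective]; simp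

end basic

section localvanish
variable {R : Type u} [CommRing R] [IsLocalRing R] [IsNoetherianRing R]
open IsLocalRing

/-- Over a Noetherian local ring, vanishing of `Ext^j(k, C)` for all `j ≥ t` passes from the residue
field to every cyclic module, by Noetherian induction on `I` and Nakayama's lemma. -/
theorem sub_cyclic_of_residue (C : ModuleCat.{u} R) [Module.Finite R C] (t : ℕ)
    (h : ∀ j ≥ t, Subsingleton (Ext (ModuleCat.of R (R ⧸ maximalIdeal R)) C j)) :
    ∀ (I : Ideal R), ∀ j ≥ t, Subsingleton (Ext (ModuleCat.of R (R ⧸ I)) C j) := by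
  intro I
  induction I using WellFoundedGT.induction with
  | ind I ih =>
  intro j hj
  by_cases htop : I = ⊤
  · subst htop
    exact sub_of_isZero_left (Ideal.Quotient.subsingleton_iff.2 rfl) j
  by_cases hp : I.IsPrime
  · by_cases hm : I = maximalIdeal R
    · subst hm; exact h j hj
    obtain ⟨x, hx, hxI⟩ := SetLike.exists_of_lt
      (lt_of_le_of_ne (le_maximalIdeal htop) hm)
    have hcol : ∀ r, x * r ∈ I ↔ r ∈ I := fun r =>
      ⟨fun hr => (hp.mem_or_mem hr).resolve_left hxI, fun hr => I.mul_mem_left _ hr⟩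
    have hS := quotSES_shortExact I I x hcol
    have hlt : I < I ⊔ Ideal.span {x} := lt_of_le_of_ne le_sup_left (fun he => hxI (by
      rw [he]; exact Ideal.mem_sup_right (Ideal.mem_span_singleton_self x)))
    have h3 := ih _ hlt
    -- multiplication by `x` is surjective on `Ext^j(R/I, C)`, so Nakayama applies
    have hsurj : ∀ y : Ext (ModuleCat.of R (R ⧸ I)) C j, ∃ z, y = x • z := by
      intro y
      have := h3 (1 + j) (by omega)
      obtain ⟨z, hz⟩ := Ext.contravariant_sequence_exact₁ hS C y rfl
        (Subsingleton.elim (α := Ext (ModuleCat.of R (R ⧸ (I ⊔ Ideal.span {x}))) C (1 + j)) _ _)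
      refine ⟨z, ?_⟩
      rw [← hz]
      have hf : (quotSES I I x hcol).f = x • 𝟙 (ModuleCat.of R (R ⧸ I)) := by
        refine ModuleCat.hom_ext (LinearMap.ext fun y => ?_)
        obtain ⟨r, rfl⟩ := Submodule.Quotient.mk_surjective _ y
        rfl
      exact mk₀_comp_of_eq_smul x hf z
    have : (⊤ : Submodule R (Ext (ModuleCat.of R (R ⧸ I)) C j)) = ⊥ := by
      refine Submodule.eq_bot_of_le_smul_of_le_jacobson_bot (Ideal.span {x}) ⊤
        Module.Finite.fg_top ?_ ?_
      · intro y _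
        obtain ⟨z, rfl⟩ := hsurj y
        exact Submodule.smul_mem_smul (Ideal.mem_span_singleton_self x) trivial
      · rw [jacobson_eq_maximalIdeal ⊥ bot_ne_top]
        exact (Ideal.span_singleton_le_iff_mem _).2 hx
    exact (Submodule.subsingleton_iff R).1 (subsingleton_of_bot_eq_top this.symm)
  · rw [Ideal.isPrime_iff] at hp
    push Not at hp
    obtain ⟨a, b, hab, ha, hb⟩ := hp htop
    let J : Ideal R := Submodule.comap (LinearMap.lsmul R R a) I
    have hcol : ∀ r, a * r ∈ I ↔ r ∈ J := fun r => Iff.rfl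
    have hS := quotSES_shortExact I J a hcol
    refine sub_middle hS (ih J ?_ j hj) (ih (I ⊔ Ideal.span {a}) ?_ j hj)
    · refine lt_of_le_of_ne (fun r hr => I.mul_mem_left _ hr) (fun he => hb ?_)
      rw [he]; exact hab
    · exact lt_of_le_of_ne le_sup_left (fun he => ha (by
        rw [he]; exact Ideal.mem_sup_right (Ideal.mem_span_singleton_self a)))

end localvanish
end PD

/-! ### Rees change of rings -/

namespace PD
open Abelian

section rees
variable {R B : Type u} [CommRing R] [CommRing B] (f : R →+* B)

/-- Restriction of scalars along a ring homomorphism `f : R →+* B`. -/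
noncomputable abbrev resF : ModuleCat.{u} B ⥤ ModuleCat.{u} R := ModuleCat.restrictScalars.{u} f

theorem res_full (hf : Function.Surjective f) {M N : ModuleCat.{u} B}
    (g : (resF f).obj M ⟶ (resF f).obj N) : ∃ h : M ⟶ N, (resF f).map h = g := by
  let g' : M →+ N := AddMonoidHom.mk' (fun m => g.hom m) (fun a b => g.hom.map_add a b)
  refine ⟨ModuleCat.ofHom { g' with map_smul' := ?_ }, ?_⟩
  · intro b m
    obtain ⟨r, rfl⟩ := hf b
    exact g.hom.map_smul r m
  · rfl

theorem res_smul (M : ModuleCat.{u} B) (r : R) :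
    (resF f).map (f r • 𝟙 M) = r • 𝟙 ((resF f).obj M) := rfl

theorem mapExact_res_smul {M N : ModuleCat.{u} B} {n : ℕ} (r : R) (e : Ext M N n) :
    (f r • e).mapExactFunctor (resF f) = r • e.mapExactFunctor (resF f) := by
  rw [← mk₀_comp_of_eq_smul (f r) (f := f r • 𝟙 M) rfl e, Ext.mapExactFunctor_comp,
    Ext.mapExactFunctor_mk₀, mk₀_comp_of_eq_smul r (res_smul f M r)]

/-- If `B = R/xR` with `x` regular, free `B`-modules have projective dimension at most one over `R`. -/
theorem res_free_vanish (hf : Function.Surjective f) (x : R) (hx : ∀ r, f r = 0 ↔ ∃ s, r = x * s)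
    (hreg : IsSMulRegular R x) (ι : Type u) (N : ModuleCat.{u} R) (i : ℕ) :
    Subsingleton (Ext ((resF f).obj (ModuleCat.of B (ι →₀ B))) N (i + 2)) := by
  have hfx : f x = 0 := (hx x).2 ⟨1, by simp⟩
  let q : (ι →₀ R) →ₗ[R] (resF f).obj (ModuleCat.of B (ι →₀ B)) :=
    { toFun := fun v => (Finsupp.mapRange f f.map_zero v : ι →₀ B)
      map_add' := fun v w => Finsupp.mapRange_add (fun a b => f.map_add a b) v w
      map_smul' := fun r v => by
        refine Finsupp.ext fun j => ?_
        change f (r * v j) = f r * f (v j)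
        simp }
  have hq : ∀ v j, (show ι →₀ B from q v) j = f (v j) := fun v j => rfl
  let S : ShortComplex (ModuleCat.{u} R) := ModuleCat.shortComplexOfCompEqZero
    (LinearMap.lsmul R (ι →₀ R) x) q (by
      refine LinearMap.ext fun v => ?_
      change (show ι →₀ B from q (x • v)) = 0
      refine Finsupp.ext fun j => ?_
      rw [hq]; simp [hfx])
  have hS : S.ShortExact := by
    refine ModuleCat.shortComplex_shortExact _ ?_ ?_ ?_
    · intro v
      constructor
      · intro hv
        have hv' : ∀ j, f ((show ι →₀ R from v) j) = 0 := fun j =>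
          DFunLike.congr_fun (F := ι →₀ B) hv j
        choose s hs using fun j => (hx _).1 (hv' j)
        refine ⟨Finsupp.onFinset (show ι →₀ R from v).support s ?_, ?_⟩
        · intro j hj
          rw [Finsupp.mem_support_iff, hs j]
          intro h0
          exact hj (hreg (by simpa using h0))
        · refine Finsupp.ext fun j => ?_
          exact (hs j).symm
      · rintro ⟨w, rfl⟩
        refine Finsupp.ext fun j => ?_
        change f (x * (show ι →₀ R from w) j) = 0
        simp [hfx]
    · intro v w hvw
      refine Finsupp.ext fun j => hreg ?_
      exact DFunLike.congr_fun (F := ι →₀ R) hvw j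
    · intro v
      obtain ⟨w, hw⟩ := Finsupp.mapRange_surjective f f.map_zero hf (show ι →₀ B from v)
      exact ⟨w, hw⟩
  have hp : Projective S.X₁ := ModuleCat.projective_of_free (Finsupp.basisSingleOne (R := R) (ι := ι))
  have hp2 : Projective S.X₂ := hp
  refine subsingleton_of_forall_eq 0 fun z => ?_
  obtain ⟨y, rfl⟩ := Ext.contravariant_sequence_exact₃ hS N z (Ext.eq_zero_of_projective _)
    (n₀ := i + 1) (by omega)
  rw [Ext.eq_zero_of_projective y]; simp

/-- The change of rings map `Ext_B^i(M, N') → Ext_R^{i+1}(M, N)` attached to a short exact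
sequence `0 → N → N → N' → 0` of `R`-modules. -/
noncomputable def reesMap {N : ModuleCat.{u} R} {N' : ModuleCat.{u} B}
    {g : N ⟶ N} {π : N ⟶ (resF f).obj N'} {w : g ≫ π = 0}
    (hS : (ShortComplex.mk g π w).ShortExact) {M : ModuleCat.{u} B} {i : ℕ}
    (e : Ext M N' i) : Ext ((resF f).obj M) N (i + 1) :=
  (e.mapExactFunctor (resF f)).comp hS.extClass rfl

variable {N : ModuleCat.{u} R} {N' : ModuleCat.{u} B}
    {g : N ⟶ N} {π : N ⟶ (resF f).obj N'} {w : g ≫ π = 0}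
    (hS : (ShortComplex.mk g π w).ShortExact)

theorem reesMap_smul {M : ModuleCat.{u} B} {i : ℕ} (r : R) (e : Ext M N' i) :
    reesMap f hS (f r • e) = r • reesMap f hS e := by
  rw [reesMap, mapExact_res_smul, Ext.smul_comp]; rfl

theorem reesMap_zero {M : ModuleCat.{u} B} {i : ℕ} :
    reesMap f hS (0 : Ext M N' i) = 0 := by
  rw [reesMap, Ext.mapExactFunctor_zero, Ext.zero_comp]

theorem reesMap_sub {M : ModuleCat.{u} B} {i : ℕ} (a b : Ext M N' i) :
    reesMap f hS (a - b) = reesMap f hS a - reesMap f hS b := by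
  have h : ∀ a b : Ext M N' i, reesMap f hS (a + b) = reesMap f hS a + reesMap f hS b := by
    intro a b
    rw [reesMap, Ext.mapExactFunctor_add, Ext.add_comp]; rfl
  exact (AddMonoidHom.mk' _ h).map_sub a b

theorem reesMap_comp {M K : ModuleCat.{u} B} {i j k : ℕ} (α : Ext M K j) (e : Ext K N' i)
    (h : j + i = k) :
    reesMap f hS (α.comp e h) = (α.mapExactFunctor (resF f)).comp (reesMap f hS e)
      (show j + (i + 1) = k + 1 by omega) := by
  rw [reesMap, Ext.mapExactFunctor_comp, reesMap]
  exact Ext.comp_assoc _ _ _ h rfl (by omega)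

/-- Rees' change of rings theorem. -/
theorem reesMap_bijective (hf : Function.Surjective f) (x : R)
    (hx : ∀ r, f r = 0 ↔ ∃ s, r = x * s)
    (hreg : IsSMulRegular R x) (hregN : IsSMulRegular N x) (hg : g = x • 𝟙 N) (i : ℕ) :
    ∀ (M : ModuleCat.{u} B), Function.Bijective (reesMap f hS (M := M) (i := i)) := by
  have hfx : f x = 0 := (hx x).2 ⟨1, by simp⟩
  have hinj : ∀ {M : ModuleCat.{u} B} {i : ℕ}, (∀ e : Ext M N' i, reesMap f hS e = 0 → e = 0) →
      Function.Injective (reesMap f hS (M := M) (i := i)) := by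
    intro M i h a b hab
    refine sub_eq_zero.1 (h _ ?_)
    rw [reesMap_sub, hab, sub_self]
  induction i with
  | zero =>
    intro M
    have hxM : x • 𝟙 ((resF f).obj M) = 0 := by
      rw [← res_smul, hfx, zero_smul, Functor.map_zero]
    constructor
    · refine hinj fun e he => ?_
      obtain ⟨e, rfl⟩ := (Ext.mk₀_bijective _ _).2 e
      rw [reesMap, Ext.mapExactFunctor_mk₀] at he
      obtain ⟨y, hy⟩ := Ext.covariant_sequence_exact₃ _ hS _ rfl he
      obtain ⟨y, rfl⟩ := (Ext.mk₀_bijective _ _).2 y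
      have hy0 : y = 0 := by
        refine ModuleCat.hom_ext (LinearMap.ext fun m => hregN ?_)
        have : x • m = 0 := by
          have := congrArg (fun h => h.hom m) hxM
          exact this
        change x • y.hom m = x • (0 : N)
        rw [smul_zero, ← map_smul, this, map_zero]
      rw [hy0, Ext.mk₀_zero, Ext.zero_comp] at hy
      have h0 : (resF f).map e = 0 := (Ext.mk₀_bijective _ _).1 (by rw [← hy, Ext.mk₀_zero])
      have : e = 0 := (resF f).map_injective (by rw [h0, Functor.map_zero])
      rw [this, Ext.mk₀_zero]
    · intro z
      have h0 : z.comp (Ext.mk₀ g) (add_zero _) = 0 := by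
        rw [comp_mk₀_of_eq_smul x hg, ← mk₀_comp_of_eq_smul x (f := x • 𝟙 _) rfl, hxM,
          Ext.mk₀_zero, Ext.zero_comp]
      obtain ⟨y, hy⟩ := Ext.covariant_sequence_exact₁ _ hS z h0 (n₀ := 0) rfl
      obtain ⟨y, rfl⟩ := (Ext.mk₀_bijective _ _).2 y
      obtain ⟨e, rfl⟩ := res_full f hf y
      refine ⟨Ext.mk₀ e, ?_⟩
      rw [reesMap, Ext.mapExactFunctor_mk₀]
      exact hy
  | succ i ih =>
    intro M
    have hsurj : Function.Surjective (Finsupp.linearCombination B (id : M → M)) := fun m =>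
      ⟨Finsupp.single m 1, by simp⟩
    have hT := LinearMap.shortExact_shortComplexKer hsurj
    have hFT := hT.map_of_exact (resF f)
    have hp : Projective (ModuleCat.of B (M →₀ B)) :=
      ModuleCat.projective_of_free (Finsupp.basisSingleOne (R := B) (ι := M))
    have hcl : hT.extClass.mapExactFunctor (resF f) = hFT.extClass :=
      Ext.mapExactFunctor_extClass (resF f) hT
    constructor
    · refine hinj fun e he => ?_
      obtain ⟨e', rfl⟩ := Ext.contravariant_sequence_exact₃ hT N' e
        (Ext.eq_zero_of_projective (P := ModuleCat.of B (M →₀ B)) _) (n₀ := i) (by omega)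
      rw [reesMap_comp, hcl] at he
      obtain ⟨v, hv⟩ := Ext.contravariant_sequence_exact₁ hFT N _ _ he
      obtain ⟨e'', rfl⟩ := (ih (ModuleCat.of B (M →₀ B))).2 v
      have h1 : (Ext.mk₀ ((Finsupp.linearCombination B (id : M → M)).shortComplexKer.f)).comp e''
          (zero_add i) = e' := by
        refine (ih _).1 ?_
        rw [reesMap_comp, Ext.mapExactFunctor_mk₀]
        exact hv
      rw [← h1]
      exact hT.extClass_comp_assoc _
    · intro z
      have := res_free_vanish f hf x hx hreg M N i
      obtain ⟨v, rfl⟩ := Ext.contravariant_sequence_exact₃ hFT N z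
        (Subsingleton.elim (α := Ext ((resF f).obj (ModuleCat.of B (M →₀ B))) N (i + 2)) _ _)
        (n₀ := i + 1) (by omega)
      obtain ⟨e, rfl⟩ := (ih _).2 v
      refine ⟨hT.extClass.comp e (by omega), ?_⟩
      rw [reesMap_comp, hcl]
      rfl

end rees
end PD

/-! ### Ext and localization -/

namespace PD
open Abelian

section loc
variable {R : Type u} [CommRing R] (S : Submonoid R)

/-- Localization of modules, as an exact functor. -/
noncomputable abbrev locF : ModuleCat.{u} R ⥤ ModuleCat.{u} (Localization S) :=
  ModuleCat.localizedModuleFunctor.{u} S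

noncomputable instance locModule (M : ModuleCat.{u} R) : Module R ((locF S).obj M) :=
  inferInstanceAs (Module R (M.localizedModule S))

instance locTower (M : ModuleCat.{u} R) :
    IsScalarTower R (Localization S) ((locF S).obj M) :=
  inferInstanceAs (IsScalarTower R (Localization S) (M.localizedModule S))

/-- The localization map `M → S⁻¹M`. -/
noncomputable def locMk (M : ModuleCat.{u} R) : M →ₗ[R] (locF S).obj M :=
  M.localizedModuleMkLinearMap S

instance locMk_isLocalizedModule (M : ModuleCat.{u} R) : IsLocalizedModule S (locMk S M) :=
  inferInstanceAs (IsLocalizedModule S (M.localizedModuleMkLinearMap S))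

theorem loc_free (M : ModuleCat.{u} R) [Module.Free R M] :
    Module.Free (Localization S) ((locF S).obj M) :=
  Module.free_of_isLocalizedModule S (locMk S M)

theorem locF_map_mk {M N : ModuleCat.{u} R} (f : M ⟶ N) (m : M) :
    ((locF S).map f).hom (locMk S M m) = locMk S N (f.hom m) :=
  IsLocalizedModule.map_apply S (M.localizedModuleMkLinearMap S)
    (N.localizedModuleMkLinearMap S) f.hom m

theorem loc_hom_ext {M N : ModuleCat.{u} R} {f g : (locF S).obj M ⟶ (locF S).obj N}
    (h : ∀ m, f.hom (locMk S M m) = g.hom (locMk S M m)) : f = g := by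
  refine ModuleCat.hom_ext ?_
  apply LinearMap.restrictScalars_injective R
  exact IsLocalizedModule.ext S (locMk S M)
    (IsLocalizedModule.map_units (locMk S N)) (LinearMap.ext h)

theorem locF_smul (M : ModuleCat.{u} R) (r : R) :
    (locF S).map (r • 𝟙 M) = algebraMap R (Localization S) r • 𝟙 ((locF S).obj M) := by
  refine loc_hom_ext S fun m => ?_
  refine (locF_map_mk S (r • 𝟙 M) m).trans ?_
  refine ((locMk S M).map_smul r m).trans ?_
  exact (algebraMap_smul (Localization S) r (locMk S M m)).symm

theorem mapExact_loc_smul {M N : ModuleCat.{u} R} {n : ℕ} (r : R) (e : Ext M N n) :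
    (r • e).mapExactFunctor (locF S) =
      algebraMap R (Localization S) r • e.mapExactFunctor (locF S) := by
  rw [← mk₀_comp_of_eq_smul r (f := r • 𝟙 M) rfl e, Ext.mapExactFunctor_comp,
    Ext.mapExactFunctor_mk₀, mk₀_comp_of_eq_smul _ (locF_smul S M r)]

theorem mapExact_sub {C D : Type*} [Category C] [Category D] [Abelian C] [Abelian D]
    [HasExt C] [HasExt D] (F : C ⥤ D) [F.Additive] [Limits.PreservesFiniteLimits F]
    [Limits.PreservesFiniteColimits F]
    {M N : C} {n : ℕ} (a b : Ext M N n) :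
    (a - b).mapExactFunctor F = a.mapExactFunctor F - b.mapExactFunctor F :=
  (F.mapExtAddHom M N n).map_sub a b

theorem smul_comp_eq {B : Type u} [CommRing B] {X Y Z : ModuleCat.{u} B} {a b c : ℕ}
    (α : Ext X Y a) (β β' : Ext Y Z b) (h : a + b = c) (s : B) (hβ : s • β = β') :
    s • α.comp β h = α.comp β' h := by
  rw [← Ext.comp_smul, hβ]

/-- `Ext` out of a finitely generated module commutes with localization, stated elementwise: the
kernel of `Ext^n_R(M, N) → Ext^n(S⁻¹M, S⁻¹N)` is `S`-torsion and every element of the target is a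
fraction. The proof is by dimension shifting in `M`. -/
theorem ext_loc [IsNoetherianRing R] (N : ModuleCat.{u} R) (n : ℕ) :
    ∀ (M : ModuleCat.{u} R) [Module.Finite R M],
    (∀ e : Ext M N n, e.mapExactFunctor (locF S) = 0 → ∃ s ∈ S, s • e = 0) ∧
    (∀ y : Ext ((locF S).obj M) ((locF S).obj N) n, ∃ s ∈ S, ∃ e : Ext M N n,
      algebraMap R (Localization S) s • y = e.mapExactFunctor (locF S)) := by
  induction n with
  | zero =>
    intro M _
    have : Module.FinitePresentation R M := Module.finitePresentation_of_finite R M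
    constructor
    · intro e he
      obtain ⟨e, rfl⟩ := (Ext.mk₀_bijective _ _).2 e
      rw [Ext.mapExactFunctor_mk₀] at he
      have he : (locF S).map e = 0 := (Ext.mk₀_bijective _ _).1 (by rw [he, Ext.mk₀_zero])
      obtain ⟨s, hs⟩ := Module.Finite.exists_smul_of_comp_eq_of_isLocalizedModule S
        (locMk S N) e.hom 0 (by
          refine LinearMap.ext fun m => ?_
          have h1 := locF_map_mk S e m
          rw [he] at h1
          exact h1.symm.trans (map_zero (locMk S N)).symm)
      refine ⟨s, s.2, ?_⟩
      rw [← Ext.mk₀_smul]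
      have h2 : (s : R) • e = 0 := by
        refine ModuleCat.hom_ext ?_
        have h3 := hs
        rw [smul_zero] at h3
        exact h3
      rw [h2, Ext.mk₀_zero]
    · intro y
      obtain ⟨y, rfl⟩ := (Ext.mk₀_bijective _ _).2 y
      obtain ⟨h, s, hs⟩ := Module.FinitePresentation.exists_lift_of_isLocalizedModule S
        (locMk S N) ((y.hom.restrictScalars R).comp (locMk S M))
      refine ⟨s, s.2, Ext.mk₀ (ModuleCat.ofHom h), ?_⟩
      rw [Ext.mapExactFunctor_mk₀, ← Ext.mk₀_smul]
      congr 1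
      refine loc_hom_ext S fun m => ?_
      refine Eq.trans ?_ (locF_map_mk S (ModuleCat.ofHom h) m).symm
      refine Eq.trans ?_ (LinearMap.congr_fun hs m).symm
      exact algebraMap_smul (Localization S) (s : R) (y.hom (locMk S M m))
  | succ n ih =>
    intro M _
    obtain ⟨P, _, _, _, _, p, hsurj⟩ := Module.exists_finite_presentation R M
    have hT := LinearMap.shortExact_shortComplexKer hsurj
    have hFT := hT.map_of_exact (locF S)
    have hp : Projective (ModuleCat.of R P) :=
      ModuleCat.projective_of_free (Module.Free.chooseBasis R P)
    have hFp : Projective ((locF S).obj (ModuleCat.of R P)) := by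
      have : Module.Free (Localization S) ((locF S).obj (ModuleCat.of R P)) :=
        loc_free S (ModuleCat.of R P)
      exact ModuleCat.projective_of_free (Module.Free.chooseBasis (Localization S)
        ((locF S).obj (ModuleCat.of R P)))
    have hcl : hT.extClass.mapExactFunctor (locF S) = hFT.extClass :=
      Ext.mapExactFunctor_extClass (locF S) hT
    have hK : Module.Finite R p.shortComplexKer.X₁ :=
      inferInstanceAs (Module.Finite R (LinearMap.ker p))
    have hM : Module.Finite R (ModuleCat.of R P) := inferInstanceAs (Module.Finite R P)
    obtain ⟨ihKa, ihKb⟩ := ih p.shortComplexKer.X₁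
    obtain ⟨ihPa, ihPb⟩ := ih (ModuleCat.of R P)
    constructor
    · intro e he
      obtain ⟨e', rfl⟩ := Ext.contravariant_sequence_exact₃ hT N e
        (Ext.eq_zero_of_projective (P := ModuleCat.of R P) _) (n₀ := n) (by omega)
      rw [Ext.mapExactFunctor_comp, hcl] at he
      obtain ⟨v, hv⟩ := Ext.contravariant_sequence_exact₁ hFT ((locF S).obj N) _ _ he
      obtain ⟨s, hs, w, hw⟩ := ihPb v
      have h0 : (s • e' - (Ext.mk₀ p.shortComplexKer.f).comp w
          (zero_add n)).mapExactFunctor (locF S) = 0 := by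
        rw [mapExact_sub, mapExact_loc_smul, ← hv, Ext.mapExactFunctor_comp,
          Ext.mapExactFunctor_mk₀, sub_eq_zero]
        exact smul_comp_eq _ _ _ _ _ hw
      obtain ⟨t, ht, h1⟩ := ihKa _ h0
      refine ⟨t * s, S.mul_mem ht hs, ?_⟩
      rw [smul_sub, sub_eq_zero, smul_smul] at h1
      rw [← Ext.comp_smul, h1, Ext.comp_smul]
      have h2 := hT.extClass_comp_assoc w (h := (by omega : 1 + n = n + 1))
      exact (congrArg (t • ·) h2).trans (smul_zero t)
    · intro y
      obtain ⟨y', rfl⟩ := Ext.contravariant_sequence_exact₃ hFT ((locF S).obj N) y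
        (Ext.eq_zero_of_projective (P := (locF S).obj (ModuleCat.of R P)) _) (n₀ := n) (by omega)
      obtain ⟨s, hs, e, he⟩ := ihKb y'
      refine ⟨s, hs, hT.extClass.comp e (by omega), ?_⟩
      rw [Ext.mapExactFunctor_comp, hcl]
      exact smul_comp_eq _ _ _ _ _ he

end loc
end PD

/-! ### The Tor complex -/

namespace PD
open Abelian MonoidalCategory

section tor
variable {R : Type u} [CommRing R]

/-- The functor `M ⊗ -`. -/
noncomputable abbrev tens (M : ModuleCat.{u} R) : ModuleCat.{u} R ⥤ ModuleCat.{u} R :=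
  (tensoringLeft (ModuleCat.{u} R)).obj M

variable {H : ModuleCat.{u} R} (Q : ProjectiveResolution H)

/-- The complex `M ⊗ Q`. -/
noncomputable abbrev tcx (M : ModuleCat.{u} R) : ChainComplex (ModuleCat.{u} R) ℕ :=
  ((tens M).mapHomologicalComplex _).obj Q.complex

/-- The map of complexes `M ⊗ Q → N ⊗ Q` induced by `f : M → N`. -/
noncomputable abbrev tcxMap {M N : ModuleCat.{u} R} (f : M ⟶ N) : tcx Q M ⟶ tcx Q N :=
  (NatTrans.mapHomologicalComplex ((tensoringLeft (ModuleCat.{u} R)).map f) _).app Q.complex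

/-- The short complex of complexes `S.X₁ ⊗ Q → S.X₂ ⊗ Q → S.X₃ ⊗ Q`. -/
noncomputable def tSES (S : ShortComplex (ModuleCat.{u} R)) :
    ShortComplex (ChainComplex (ModuleCat.{u} R) ℕ) :=
  ShortComplex.mk (tcxMap Q S.f) (tcxMap Q S.g) (by
    ext i : 1
    change S.f ▷ Q.complex.X i ≫ S.g ▷ Q.complex.X i = 0
    rw [← comp_whiskerRight, S.zero]
    exact (tensorRight (Q.complex.X i)).map_zero _ _)

theorem flat_of_projective (P : ModuleCat.{u} R) [hP : Projective P] : Module.Flat R P := by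
  have : Module.Projective R P := (IsProjective.iff_projective (P := P)).2 hP
  infer_instance

theorem tSES_shortExact {S : ShortComplex (ModuleCat.{u} R)} (hS : S.ShortExact) :
    (tSES Q S).ShortExact := by
  refine HomologicalComplex.shortExact_of_degreewise_shortExact _ fun i => ?_
  have := flat_of_projective (Q.complex.X i)
  exact hS.map_of_exact (tensorRight (Q.complex.X i))

theorem tcx_isZero (P : ModuleCat.{u} R) [Module.Flat R P] (n : ℕ) :
    Limits.IsZero ((tcx Q P).homology (n + 1)) := by
  rw [← HomologicalComplex.exactAt_iff_isZero_homology]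
  have h := Module.Flat.lTensor_shortComplex_exact P _ (Q.exact_succ n)
  rw [HomologicalComplex.exactAt_iff' _ (n + 2) (n + 1) n (by simp) (by simp)]
  exact h

/-- `H_0(M ⊗ Q) = M ⊗ H`. -/
noncomputable def tzero (M : ModuleCat.{u} R) : (tcx Q M).homology 0 ≅ M ⊗ H :=
  (tcx Q M).isoHomologyι₀ ≪≫
    @asIso _ _ _ _ (Q.fromLeftDerivedZero' (tens M))
      (haveI : Limits.PreservesFiniteColimits (tens M) :=
        inferInstanceAs (Limits.PreservesFiniteColimits (tensorLeft M))
       inferInstance)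

theorem tzero_nat {M N : ModuleCat.{u} R} (f : M ⟶ N) :
    HomologicalComplex.homologyMap (tcxMap Q f) 0 ≫ (tzero Q N).hom =
      (tzero Q M).hom ≫ f ▷ H := by
  have h1 : HomologicalComplex.opcyclesMap (tcxMap Q f) 0 ≫ Q.fromLeftDerivedZero' (tens N) =
      Q.fromLeftDerivedZero' (tens M) ≫ f ▷ H := by
    rw [← cancel_epi (HomologicalComplex.pOpcycles _ _)]
    rw [HomologicalComplex.p_opcyclesMap_assoc,
      ProjectiveResolution.pOpcycles_comp_fromLeftDerivedZero',
      ProjectiveResolution.pOpcycles_comp_fromLeftDerivedZero'_assoc]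
    exact (whisker_exchange f (Q.π.f 0)).symm
  simp only [tzero, Iso.trans_hom, asIso_hom, Category.assoc]
  rw [← h1]
  have h2 := ChainComplex.isoHomologyι₀_inv_naturality (tcxMap Q f)
  rw [← cancel_epi (tcx Q M).isoHomologyι₀.inv, reassoc_of% h2]
  simp

end tor
end PD

/-! ### Tor of Hom into an injective module -/

namespace PD
open Abelian MonoidalCategory

section tor2
variable {R : Type u} [CommRing R] {H : ModuleCat.{u} R} (Q : ProjectiveResolution H)

theorem tcx_shift {S : ShortComplex (ModuleCat.{u} R)} (hS : S.ShortExact)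
    [Module.Flat R S.X₂] (n : ℕ) :
    Nonempty ((tcx Q S.X₃).homology (n + 2) ≅ (tcx Q S.X₁).homology (n + 1)) :=
  ⟨(tSES_shortExact Q hS).δIso (n + 2) (n + 1) (by simp)
    (tcx_isZero Q S.X₂ (n + 1)) (tcx_isZero Q S.X₂ n)⟩

/-- `Tor_1` of the cokernel of `S.X₁ → S.X₂`, with `S.X₂` flat, is the kernel of `S.X₁ ⊗ H → S.X₂ ⊗ H`. -/
theorem tcx_one {S : ShortComplex (ModuleCat.{u} R)} (hS : S.ShortExact)
    [Module.Flat R S.X₂] :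
    Nonempty ((tcx Q S.X₃).homology 1 ≃ₗ[R] LinearMap.ker (S.f.hom.rTensor H)) := by
  have hT := tSES_shortExact Q hS
  have hmono : Mono (hT.δ 1 0 (by simp)) := hT.mono_δ 1 0 (by simp) (tcx_isZero Q S.X₂ 0)
  have hex := hT.homology_exact₁ 1 0 (by simp)
  have hinj := (ModuleCat.mono_iff_injective _).1 hmono
  have hex' := (ShortComplex.ShortExact.moduleCat_exact_iff_function_exact _).1 hex
  let d : (tcx Q S.X₃).homology 1 →ₗ[R] (tcx Q S.X₁).homology 0 := (hT.δ 1 0 (by simp)).hom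
  let z : (tcx Q S.X₁).homology 0 ≃ₗ[R] TensorProduct R S.X₁ H := (tzero Q S.X₁).toLinearEquiv
  let z' : (tcx Q S.X₂).homology 0 ≃ₗ[R] TensorProduct R S.X₂ H := (tzero Q S.X₂).toLinearEquiv
  have hz : ∀ a, z' ((HomologicalComplex.homologyMap (tcxMap Q S.f) 0).hom a) =
      S.f.hom.rTensor H (z a) := fun a =>
    congrArg (fun t => t.hom a) (tzero_nat Q S.f)
  have hker : ∀ a, (S.f.hom.rTensor H) (z a) = 0 ↔ ∃ b, d b = a := by
    intro a
    rw [← hz, LinearEquiv.map_eq_zero_iff]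
    exact hex' a
  refine ⟨LinearEquiv.ofBijective
    ((z.toLinearMap.comp d).codRestrict _ (fun b => (hker (d b)).2 ⟨b, rfl⟩)) ⟨?_, ?_⟩⟩
  · intro a b hab
    exact hinj (z.injective (congrArg Subtype.val hab))
  · rintro ⟨t, ht⟩
    obtain ⟨a, rfl⟩ := z.surjective t
    obtain ⟨b, rfl⟩ := (hker a).1 ht
    exact ⟨b, rfl⟩

end tor2

section theta
variable {R : Type u} [CommRing R] (N E : Type u) [AddCommGroup N] [Module R N]
  [AddCommGroup E] [Module R E]

/-- The evaluation map `M ⊗ Hom(N, E) → Hom(Hom(M, N), E)`. -/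
noncomputable def theta (M : Type u) [AddCommGroup M] [Module R M] :
    TensorProduct R M (N →ₗ[R] E) →ₗ[R] ((M →ₗ[R] N) →ₗ[R] E) :=
  TensorProduct.lift (LinearMap.mk₂ R
    (fun m h => h.comp (LinearMap.applyₗ m))
    (fun a b h => by ext f; simp) (fun r a h => by ext f; simp)
    (fun a g h => by ext f; simp) (fun r a h => by ext f; simp))

@[simp] theorem theta_tmul (M : Type u) [AddCommGroup M] [Module R M] (m : M) (h : N →ₗ[R] E)
    (f : M →ₗ[R] N) : theta N E M (m ⊗ₜ h) f = h (f m) := rfl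

theorem theta_nat {M M' : Type u} [AddCommGroup M] [Module R M] [AddCommGroup M'] [Module R M']
    (g : M →ₗ[R] M') (t : TensorProduct R M (N →ₗ[R] E)) (f : M' →ₗ[R] N) :
    theta N E M' (g.rTensor _ t) f = theta N E M t (f.comp g) := by
  induction t with
  | zero => simp
  | tmul m h => simp
  | add a b ha hb => simp [ha, hb]

theorem theta_free (P : Type u) [AddCommGroup P] [Module R P] [Module.Free R P]
    [Module.Finite R P] : Function.Bijective (theta (R := R) N E P) := by
  classical
  let b := Module.Free.chooseBasis R P
  let g : ((P →ₗ[R] N) →ₗ[R] E) → TensorProduct R P (N →ₗ[R] E) := fun φ =>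
    ∑ i, b i ⊗ₜ (φ.comp (LinearMap.smulRightₗ (b.coord i)))
  have hg : ∀ t, g (theta N E P t) = t := by
    intro t
    induction t with
    | zero => simp [g]
    | tmul p h =>
      have h1 : ∀ i, (theta N E P (p ⊗ₜ h)).comp (LinearMap.smulRightₗ (b.coord i)) =
          b.coord i p • h := by
        intro i; ext n; simp
      simp only [g, h1, TensorProduct.tmul_smul, TensorProduct.smul_tmul']
      rw [← TensorProduct.sum_tmul]
      congr 1
      exact b.sum_repr p
    | add x y hx hy =>
      conv_rhs => rw [← hx, ← hy]
      simp only [g, ← Finset.sum_add_distrib, ← TensorProduct.tmul_add, map_add,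
        LinearMap.add_comp]
  refine ⟨Function.LeftInverse.injective hg, fun φ => ⟨g φ, ?_⟩⟩
  ext f
  simp only [g, map_sum, LinearMap.sum_apply, theta_tmul, LinearMap.comp_apply]
  rw [← map_sum]
  congr 1
  ext p
  conv_rhs => rw [← b.sum_repr p, map_sum]
  simp

variable {N E}

theorem theta_surj (hE : Module.Injective R E) (M : Type u) [AddCommGroup M] [Module R M]
    [Module.Finite R M] : Function.Surjective (theta (R := R) N E M) := by
  obtain ⟨P, _, _, _, _, p, hsurj⟩ := Module.exists_finite_presentation R M
  intro φ
  have hinj : Function.Injective (LinearMap.lcomp R N p) := fun a b hab => by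
    ext m
    obtain ⟨q, rfl⟩ := hsurj m
    exact LinearMap.congr_fun hab q
  obtain ⟨ψ, hψ⟩ := hE.out _ hinj φ
  obtain ⟨t, rfl⟩ := (theta_free N E P).2 ψ
  refine ⟨p.rTensor _ t, ?_⟩
  ext f
  rw [theta_nat]
  exact hψ f

/-- Hom evaluation `M ⊗ Hom(N, E) → Hom(Hom(M, N), E)` is bijective for `M` finitely generated over a
Noetherian ring and `E` injective. -/
theorem theta_bij [IsNoetherianRing R] (hE : Module.Injective R E) (M : Type u) [AddCommGroup M] [Module R M]
    [Module.Finite R M] : Function.Bijective (theta (R := R) N E M) := by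
  refine ⟨?_, theta_surj hE M⟩
  obtain ⟨P, _, _, _, _, p, hsurj⟩ := Module.exists_finite_presentation R M
  rw [injective_iff_map_eq_zero]
  intro t ht
  obtain ⟨t, rfl⟩ := LinearMap.rTensor_surjective _ hsurj t
  let K := LinearMap.ker p
  -- `theta t` vanishes on maps factoring through `p`, so it extends along `Hom(P,N) → Hom(K,N)`
  have h1 : ∀ f, K.subtype.lcomp R N f = 0 → theta N E P t f = 0 := by
    intro f hf
    have hf' : LinearMap.ker p ≤ LinearMap.ker f := fun x hx =>
      LinearMap.congr_fun hf ⟨x, hx⟩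
    obtain ⟨g, rfl⟩ : ∃ g : M →ₗ[R] N, g.comp p = f := by
      refine ⟨((LinearMap.ker p).liftQ f hf').comp
        (p.quotKerEquivOfSurjective hsurj).symm.toLinearMap, ?_⟩
      ext x
      have : (p.quotKerEquivOfSurjective hsurj).symm (p x) = (LinearMap.ker p).mkQ x := by
        rw [LinearEquiv.symm_apply_eq]; rfl
      simp [this]
    rw [← theta_nat, ht, LinearMap.zero_apply]
  let ρ := K.subtype.lcomp R N
  obtain ⟨ψ, hψ⟩ : ∃ ψ : (K →ₗ[R] N) →ₗ[R] E, ∀ f, ψ (ρ f) = theta N E P t f := by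
    have h2 : LinearMap.ker ρ ≤ LinearMap.ker (theta N E P t) := fun f hf => h1 f hf
    obtain ⟨ψ, hψ⟩ := hE.out ((LinearMap.ker ρ).liftQ ρ le_rfl)
      (LinearMap.ker_eq_bot.1 (Submodule.ker_liftQ_eq_bot _ _ _ le_rfl))
      ((LinearMap.ker ρ).liftQ (theta N E P t) h2)
    exact ⟨ψ, fun f => hψ (Submodule.Quotient.mk f)⟩
  obtain ⟨s, rfl⟩ := theta_surj hE K ψ
  have h3 : K.subtype.rTensor _ s = t := by
    apply (theta_free N E P).1
    ext f
    rw [theta_nat]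
    exact hψ f
  rw [← h3, ← LinearMap.comp_apply, ← LinearMap.rTensor_comp]
  have : p.comp K.subtype = 0 := by ext x; exact x.2
  rw [this, LinearMap.rTensor_zero, LinearMap.zero_apply]

end theta

section torExt
variable {R : Type u} [CommRing R] [IsNoetherianRing R] (N : ModuleCat.{u} R)
  (E : Type u) [AddCommGroup E] [Module R E]

/-- `Tor_i(M, Hom(N, E)) = Hom(Ext^i(M, N), E)` for `E` injective and `M` finite. -/
theorem tcx_homology (hE : Module.Injective R E)
    (Q : ProjectiveResolution (ModuleCat.of R (N →ₗ[R] E))) (n : ℕ) :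
    ∀ (M : ModuleCat.{u} R) [Module.Finite R M],
      Nonempty ((tcx Q M).homology n ≃ₗ[R] (Ext M N n →ₗ[R] E)) := by
  induction n with
  | zero =>
    intro M _
    let e : Ext M N 0 ≃ₗ[R] (M →ₗ[R] N) := Ext.linearEquiv₀.trans ModuleCat.homLinearEquiv
    let z : (tcx Q M).homology 0 ≃ₗ[R] TensorProduct R M (N →ₗ[R] E) :=
      (tzero Q M).toLinearEquiv
    exact ⟨z.trans ((LinearEquiv.ofBijective _ (theta_bij hE M)).trans
      (e.symm.congrLeft E R))⟩
  | succ n ih =>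
    intro M _
    obtain ⟨P, _, _, _, _, p, hsurj⟩ := Module.exists_finite_presentation R M
    have hT := LinearMap.shortExact_shortComplexKer hsurj
    have hP : Module.Free R p.shortComplexKer.X₂ := inferInstanceAs (Module.Free R P)
    have hpr : Projective p.shortComplexKer.X₂ :=
      ModuleCat.projective_of_free (Module.Free.chooseBasis R P)
    have hK : Module.Finite R p.shortComplexKer.X₁ :=
      inferInstanceAs (Module.Finite R (LinearMap.ker p))
    let d : ∀ j, Ext p.shortComplexKer.X₁ N j →ₗ[R] Ext p.shortComplexKer.X₃ N (j + 1) :=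
      fun j =>
      { toFun := fun e => hT.extClass.comp e (by omega)
        map_add' := fun a b => Ext.comp_add _ _ _ _
        map_smul' := fun r a => Ext.comp_smul _ _ _ _ }
    have hd : ∀ j, Function.Surjective (d j) := fun j e => by
      obtain ⟨e', he⟩ := Ext.contravariant_sequence_exact₃ hT N e
        (Ext.eq_zero_of_projective _) (n₀ := j) (by omega)
      exact ⟨e', he⟩
    cases n with
    | succ n =>
      obtain ⟨z⟩ := tcx_shift Q hT n
      obtain ⟨w⟩ := ih p.shortComplexKer.X₁
      have hdb : Function.Bijective (d (n + 1)) := by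
        refine ⟨?_, hd _⟩
        rw [injective_iff_map_eq_zero]
        intro e he
        obtain ⟨v, rfl⟩ := Ext.contravariant_sequence_exact₁ hT N e (by omega) he
        rw [Ext.eq_zero_of_projective v, Ext.comp_zero]
      exact ⟨z.toLinearEquiv.trans (w.trans
        ((LinearEquiv.ofBijective _ hdb).congrLeft E R))⟩
    | zero =>
      obtain ⟨z⟩ := tcx_one Q hT
      let T := p.shortComplexKer
      let θ := LinearEquiv.ofBijective _ (theta_bij (N := N) hE T.X₁)
      let ε : Ext T.X₁ N 0 ≃ₗ[R] (T.X₁ →ₗ[R] N) := Ext.linearEquiv₀.trans ModuleCat.homLinearEquiv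
      let D : (T.X₁ →ₗ[R] N) →ₗ[R] Ext T.X₃ N 1 := (d 0).comp ε.symm.toLinearMap
      have hDs : Function.Surjective D := (hd 0).comp ε.symm.surjective
      have hε : ∀ h : T.X₁ →ₗ[R] N, ε.symm h = Ext.mk₀ (ModuleCat.ofHom h) := fun h => rfl
      have hD0 : ∀ h : T.X₁ →ₗ[R] N, D h = 0 ↔ ∃ g : T.X₂ →ₗ[R] N, g.comp T.f.hom = h := by
        intro h
        constructor
        · intro hh
          obtain ⟨v, hv⟩ := Ext.contravariant_sequence_exact₁ hT N (ε.symm h) (by omega) hh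
          obtain ⟨g, rfl⟩ := (Ext.mk₀_bijective _ _).2 v
          rw [Ext.mk₀_comp_mk₀, hε] at hv
          exact ⟨g.hom, congrArg ModuleCat.Hom.hom ((Ext.mk₀_bijective _ _).1 hv)⟩
        · rintro ⟨g, rfl⟩
          have h1 := hT.extClass_comp_assoc (Ext.mk₀ (ModuleCat.ofHom g)) (h := (by omega : 1 + 0 = 1))
          rw [Ext.mk₀_comp_mk₀] at h1
          exact h1
      have hkey : ∀ t : TensorProduct R T.X₁ (N →ₗ[R] E), T.f.hom.rTensor _ t = 0 ↔
          ∀ h, D h = 0 → θ t h = 0 := by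
        intro t
        constructor
        · intro ht h hh
          obtain ⟨g, rfl⟩ := (hD0 h).1 hh
          refine (theta_nat N E T.f.hom t g).symm.trans ?_
          rw [ht, map_zero, LinearMap.zero_apply]
        · intro ht
          apply (theta_free N E P).1
          rw [map_zero]
          refine LinearMap.ext fun g => ?_
          exact (theta_nat N E T.f.hom t g).trans (ht _ ((hD0 _).2 ⟨g, rfl⟩))
      let G : (Ext T.X₃ N 1 →ₗ[R] E) →ₗ[R] LinearMap.ker (T.f.hom.rTensor (N →ₗ[R] E)) :=
        LinearMap.codRestrict _ (θ.symm.toLinearMap.comp (LinearMap.lcomp R E D))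
          (fun l => (hkey _).2 fun h hh => by
            have : θ (θ.symm (LinearMap.lcomp R E D l)) = LinearMap.lcomp R E D l :=
              θ.apply_symm_apply _
            refine (LinearMap.congr_fun this h).trans ?_
            change l (D h) = 0
            rw [hh, map_zero])
      have hG : Function.Bijective G := by
        constructor
        · intro a b hab
          have h1 : LinearMap.lcomp R E D a = LinearMap.lcomp R E D b :=
            θ.symm.injective (congrArg Subtype.val hab)
          refine LinearMap.ext fun y => ?_
          obtain ⟨h, rfl⟩ := hDs y
          exact LinearMap.congr_fun h1 h
        · rintro ⟨t, ht⟩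
          have h2 : LinearMap.ker D ≤ LinearMap.ker (θ t) := fun h hh => (hkey t).1 ht h hh
          refine ⟨((LinearMap.ker D).liftQ (θ t) h2).comp
            (D.quotKerEquivOfSurjective hDs).symm.toLinearMap, Subtype.ext ?_⟩
          refine (θ.symm_apply_eq).2 (LinearMap.ext fun h => ?_)
          have h3 : (D.quotKerEquivOfSurjective hDs).symm (D h) = (LinearMap.ker D).mkQ h := by
            rw [LinearEquiv.symm_apply_eq]; rfl
          change (LinearMap.ker D).liftQ (θ t) h2 ((D.quotKerEquivOfSurjective hDs).symm (D h)) = _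
          rw [h3]
          rfl
      exact ⟨z.trans (LinearEquiv.ofBijective G hG).symm⟩

/-- The duality `Tor_i(M, Hom(N, E)) ≃ Hom(Ext^i(M, N), E)` for `M` finitely generated and `E` injective. -/
theorem tor_ext (hE : Module.Injective R E) (M : Type u) [AddCommGroup M] [Module R M]
    [Module.Finite R M] (i : ℕ) :
    Nonempty (torM R M (N →ₗ[R] E) i ≃ₗ[R] (Ext (ModuleCat.of R M) N i →ₗ[R] E)) := by
  let Q := projectiveResolution (ModuleCat.of R (N →ₗ[R] E))
  obtain ⟨w⟩ := tcx_homology N E hE Q i (ModuleCat.of R M)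
  exact ⟨(Q.isoLeftDerivedObj (tens (ModuleCat.of R M)) i).toLinearEquiv.trans w⟩

end torExt

end PD

/-! ### Depth zero -/

namespace PD
open Abelian IsLocalRing

section depthZero
variable {R : Type u} [CommRing R]

theorem projective_quot_bot : Projective (ModuleCat.of R (R ⧸ (⊥ : Ideal R))) := by
  have : Module.Free R (R ⧸ (⊥ : Ideal R)) :=
    Module.Free.of_equiv (Submodule.quotEquivOfEqBot (⊥ : Ideal R) rfl).symm
  exact ModuleCat.projective_of_free (Module.Free.chooseBasis R _)

variable [IsLocalRing R]

/-- The residue field as a module. -/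
abbrev kk (R : Type u) [CommRing R] [IsLocalRing R] : ModuleCat.{u} R :=
  ModuleCat.of R (R ⧸ maximalIdeal R)

theorem kk_simple : IsSimpleModule R (kk R) :=
  (isSimpleModule_iff_isCoatom).2 (Ideal.isMaximal_def.1 (maximalIdeal.isMaximal R))

variable [IsNoetherianRing R]

/-- If `R` has depth zero, witnessed by the socle element `y`, and `Ext^i(k, C) = 0` for `i > n`, then
`Ext^i(k, C) = 0` for all `i ≥ 1`. Indeed `y` embeds `k` in `R`, and the vanishing of `Ext` out of
`R` and out of `R/yR` in high degrees lowers the bound by one at each step. -/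
theorem depthZero_vanish (C : ModuleCat.{u} R) [Module.Finite R C]
    {y : R} (hy0 : y ≠ 0) (hy : ∀ r ∈ maximalIdeal R, r * y = 0) (n : ℕ)
    (hn : ∀ i > n, Subsingleton (Ext (kk R) C i)) (i : ℕ) (hi : 1 ≤ i) :
    Subsingleton (Ext (kk R) C i) := by
  have hstep : ∀ t, (∀ j ≥ t + 2, Subsingleton (Ext (kk R) C j)) →
      ∀ j ≥ t + 1, Subsingleton (Ext (kk R) C j) := by
    intro t ht j hj
    rcases Nat.lt_or_ge j (t + 2) with h | h
    swap
    · exact ht j h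
    obtain rfl : j = t + 1 := by omega
    have hcyc := sub_cyclic_of_residue C (t + 2) ht
    have hmul : ∀ r, y * r ∈ (⊥ : Ideal R) ↔ r ∈ maximalIdeal R := by
      intro r
      constructor
      · intro hr
        by_contra hrm
        have hu : IsUnit r := by simpa using hrm
        exact hy0 (hu.mul_left_eq_zero.1 (by simpa using hr))
      · intro hr
        rw [mul_comm]; exact (Submodule.mem_bot R).2 (hy r hr)
    have hS := quotSES_shortExact (⊥ : Ideal R) (maximalIdeal R) y hmul
    refine subsingleton_of_forall_eq 0 fun e => ?_
    obtain ⟨v, hv⟩ := Ext.contravariant_sequence_exact₁ hS C e (n₁ := t + 2) (by omega)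
      (@Subsingleton.elim _ (hcyc _ _ le_rfl) _ _)
    have hp : Projective (quotSES (⊥ : Ideal R) (maximalIdeal R) y hmul).X₂ := projective_quot_bot
    rw [← hv, Ext.eq_zero_of_projective v, Ext.comp_zero]
  have hall : ∀ m, (∀ j ≥ m + 1, Subsingleton (Ext (kk R) C j)) →
      ∀ j ≥ 1, Subsingleton (Ext (kk R) C j) := by
    intro m
    induction m with
    | zero => exact fun h => h
    | succ m ih => exact fun h => ih (hstep m h)
  exact hall n (fun j hj => hn j hj) i hi

/-- A nonzero finitely generated `C` with `Ext^i(k, C) = 0` for `i ≥ 1` has `Hom(k, C) ≠ 0`: otherwise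
every `Ext^0(R/I, C)` vanishes, including `Hom(R, C)`. -/
theorem exists_socle (C : ModuleCat.{u} R) [Module.Finite R C] [Nontrivial C]
    (hv : ∀ i ≥ 1, Subsingleton (Ext (kk R) C i)) : ∃ φ : kk R ⟶ C, φ ≠ 0 := by
  by_contra! hcon
  have h0 : ∀ j ≥ 0, Subsingleton (Ext (kk R) C j) := by
    intro j _
    rcases j with _ | j
    · refine subsingleton_of_forall_eq 0 fun e => ?_
      obtain ⟨φ, rfl⟩ := (Ext.mk₀_bijective _ _).2 e
      rw [hcon φ, Ext.mk₀_zero]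
    · exact hv _ (by omega)
  have h1 := sub_cyclic_of_residue C 0 h0 ⊥ 0 le_rfl
  obtain ⟨c, hc⟩ := exists_ne (0 : C)
  let f : (R ⧸ (⊥ : Ideal R)) →ₗ[R] C :=
    Submodule.liftQ _ (LinearMap.toSpanSingleton R C c) bot_le
  have hf : f (Submodule.Quotient.mk 1) = c := one_smul R c
  have h2 : Ext.mk₀ (ModuleCat.ofHom f) = Ext.mk₀ (0 : ModuleCat.of R (R ⧸ (⊥ : Ideal R)) ⟶ C) :=
    Subsingleton.elim _ _
  have h3 := congrArg ModuleCat.Hom.hom ((Ext.mk₀_bijective _ _).1 h2)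
  apply hc
  rw [← hf]
  exact LinearMap.congr_fun h3 _

/-- A local ring with a finitely generated injective module having nonzero socle has dimension zero:
for a non-maximal prime `p`, the `p`-torsion of such a module is divisible by some `x` in the maximal
ideal, hence zero by Nakayama's lemma. -/
theorem depthZero_dim (C : ModuleCat.{u} R) [Module.Finite R C]
    (hE : Module.Injective R C) (φ : kk R ⟶ C) (hφ : φ ≠ 0) : ringKrullDim R = 0 := by
  have hmax : ∀ p : Ideal R, p.IsPrime → p = maximalIdeal R := by
    intro p hp
    by_contra hne
    have hle := le_maximalIdeal hp.ne_top
    obtain ⟨x, hxm, hxp⟩ := SetLike.exists_of_lt (lt_of_le_of_ne hle hne)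
    let C' := Submodule.torsionBySet R C (p : Set R)
    have hdiv : C' ≤ maximalIdeal R • C' := by
      intro c hc
      have hc' : p ≤ LinearMap.ker (LinearMap.toSpanSingleton R C c) := fun a ha =>
        (Submodule.mem_torsionBySet_iff _ _).1 hc ⟨a, ha⟩
      let f : (R ⧸ p) →ₗ[R] C := Submodule.liftQ _ (LinearMap.toSpanSingleton R C c) hc'
      have hinj : Function.Injective (LinearMap.lsmul R (R ⧸ p) x) := by
        rw [injective_iff_map_eq_zero]
        intro a ha
        obtain ⟨a, rfl⟩ := Ideal.Quotient.mk_surjective a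
        have ha' : Ideal.Quotient.mk p (x * a) = 0 := ha
        rw [Ideal.Quotient.eq_zero_iff_mem] at ha' ⊢
        exact (hp.mem_or_mem ha').resolve_left hxp
      obtain ⟨g, hg⟩ := hE.out _ hinj f
      have h1 : x • g (Ideal.Quotient.mk p 1) = c := by
        rw [← map_smul]
        refine (hg _).trans ?_
        exact one_smul R c
      rw [← h1]
      refine Submodule.smul_mem_smul hxm ((Submodule.mem_torsionBySet_iff _ _).2 ?_)
      rintro ⟨a, ha⟩
      change a • g _ = 0
      rw [← map_smul]
      have : a • (Ideal.Quotient.mk p 1) = 0 := by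
        change Ideal.Quotient.mk p (a * 1) = 0
        rw [mul_one]; exact Ideal.Quotient.eq_zero_iff_mem.2 ha
      rw [this, map_zero]
    have hbot : C' = ⊥ := Submodule.eq_bot_of_le_smul_of_le_jacobson_bot (maximalIdeal R) C'
      (IsNoetherian.noetherian C') hdiv (maximalIdeal_le_jacobson ⊥)
    apply hφ
    refine ModuleCat.hom_ext (LinearMap.ext fun a => ?_)
    have ha : φ.hom a ∈ C' := by
      refine (Submodule.mem_torsionBySet_iff _ _).2 ?_
      rintro ⟨r, hr⟩
      change r • φ.hom a = 0
      rw [← map_smul]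
      obtain ⟨a, rfl⟩ := Ideal.Quotient.mk_surjective a
      have : r • (Ideal.Quotient.mk (maximalIdeal R) a) = 0 := by
        change Ideal.Quotient.mk _ (r * a) = 0
        exact Ideal.Quotient.eq_zero_iff_mem.2 (Ideal.mul_mem_right _ _ (hle hr))
      exact (congrArg φ.hom this).trans (map_zero φ.hom)
    rw [hbot] at ha
    exact (Submodule.mem_bot R).1 ha
  have : Ring.KrullDimLE 0 R := Ring.krullDimLE_zero_iff.2 fun I hI => by
    rw [hmax I hI]; infer_instance
  exact ringKrullDimZero_iff_ringKrullDim_eq_zero.1 this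

/-- The depth-zero case: a module whose endomorphisms are all homotheties and for which `Ext^i(k, C)`
eventually vanishes is injective over an Artinian ring, and `Hom(k, C)` is one-dimensional. -/
theorem depthZero_main (C : ModuleCat.{u} R) [Module.Finite R C] [Nontrivial C]
    (hsurj : ∀ φ : C →ₗ[R] C, ∃ r : R, φ = r • LinearMap.id)
    {y : R} (hy0 : y ≠ 0) (hy : ∀ r ∈ maximalIdeal R, r * y = 0) (n : ℕ)
    (hn : ∀ i > n, Subsingleton (Ext (kk R) C i)) :
    ringKrullDim R = 0 ∧ (∀ i ≥ 1, Subsingleton (Ext (kk R) C i)) ∧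
      ∃ e : Ext (kk R) C 0, e ≠ 0 ∧ ∀ z, ∃ r : R, z = r • e := by
  have hv := depthZero_vanish C hy0 hy n hn
  have hE : Module.Injective R C := injective_of_cyclic C fun I =>
    sub_cyclic_of_residue C 1 hv I 1 le_rfl
  obtain ⟨φ, hφ⟩ := exists_socle C hv
  refine ⟨depthZero_dim C hE φ hφ, hv, Ext.mk₀ φ, fun h => hφ ?_, fun z => ?_⟩
  · exact (Ext.mk₀_bijective _ _).1 (h.trans (Ext.mk₀_zero _ _).symm)
  · obtain ⟨ψ, rfl⟩ := (Ext.mk₀_bijective _ _).2 z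
    have := kk_simple (R := R)
    have hinj : Function.Injective φ.hom :=
      (LinearMap.injective_or_eq_zero φ.hom).resolve_right fun h => hφ (ModuleCat.hom_ext h)
    obtain ⟨h, hh⟩ := hE.out _ hinj ψ.hom
    obtain ⟨r, rfl⟩ := hsurj h
    refine ⟨r, ?_⟩
    rw [← Ext.mk₀_smul]
    congr 1
    exact ModuleCat.hom_ext (LinearMap.ext fun a => (hh a).symm)

end depthZero
end PD

/-! ### Reduction modulo a regular element -/

namespace PD
open Abelian IsLocalRing

section step
variable {R : Type u} [CommRing R]

theorem resF_kk [IsLocalRing R] {B : Type u} [CommRing B] [IsLocalRing B] (f : R →+* B)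
    (hf : Function.Surjective f) : Nonempty ((resF f).obj (kk B) ≅ kk R) := by
  have hm : (maximalIdeal B).comap f = maximalIdeal R :=
    eq_maximalIdeal (Ideal.comap_isMaximal_of_surjective f hf)
  let q : R →ₗ[R] (resF f).obj (kk B) :=
    { toFun := fun r => (Ideal.Quotient.mk (maximalIdeal B) (f r) : B ⧸ maximalIdeal B)
      map_add' := fun a b => by rw [map_add, map_add]; rfl
      map_smul' := fun r a => by
        rw [smul_eq_mul, map_mul, map_mul]; rfl }
  have hq : Function.Surjective q := by
    intro b
    obtain ⟨b, rfl⟩ := Ideal.Quotient.mk_surjective (I := maximalIdeal B) b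
    obtain ⟨r, rfl⟩ := hf b
    exact ⟨r, rfl⟩
  have hk : LinearMap.ker q = maximalIdeal R := by
    rw [← hm]
    ext r
    rw [LinearMap.mem_ker, Ideal.mem_comap]
    exact Ideal.Quotient.eq_zero_iff_mem
  exact ⟨(((Submodule.quotEquivOfEq _ _ hk.symm).trans
    (q.quotKerEquivOfSurjective hq)).toModuleIso).symm⟩

/-- An element of the maximal ideal that is regular on `C` forces `Hom(k, C) = 0`. -/
theorem kk_hom_zero [IsLocalRing R] (C : ModuleCat.{u} R) (x : R) (hx : x ∈ maximalIdeal R)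
    (hreg : IsSMulRegular C x) : Subsingleton (Ext (kk R) C 0) := by
  refine subsingleton_of_forall_eq 0 fun e => ?_
  obtain ⟨φ, rfl⟩ := (Ext.mk₀_bijective _ _).2 e
  have : φ = 0 := by
    refine ModuleCat.hom_ext (LinearMap.ext fun a => hreg ?_)
    obtain ⟨a, rfl⟩ := Ideal.Quotient.mk_surjective (I := maximalIdeal R) a
    have h1 : x • (Ideal.Quotient.mk (maximalIdeal R) a) = 0 := by
      change Ideal.Quotient.mk _ (x * a) = 0
      exact Ideal.Quotient.eq_zero_iff_mem.2 (Ideal.mul_mem_right _ _ hx)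
    refine (map_smul φ.hom x _).symm.trans ?_
    refine (congrArg φ.hom h1).trans ?_
    exact (map_zero φ.hom).trans (smul_zero x).symm
  rw [this, Ext.mk₀_zero]

/-- The quotient `C / xC` as a module over `R / x`. -/
noncomputable abbrev redMod (C : ModuleCat.{u} R) (x : R) : ModuleCat.{u} (R ⧸ Ideal.span {x}) :=
  ModuleCat.of _ (C ⧸ (Ideal.span {x} • ⊤ : Submodule R C))

/-- The projection `C → C/xC`, as an `R`-linear map. -/
noncomputable def redPi (C : ModuleCat.{u} R) (x : R) :
    C ⟶ (resF (Ideal.Quotient.mk (Ideal.span {x}))).obj (redMod C x) :=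
  ModuleCat.ofHom
    { toFun := fun c => (Submodule.Quotient.mk c : C ⧸ (Ideal.span {x} • ⊤ : Submodule R C))
      map_add' := fun _ _ => rfl
      map_smul' := fun _ _ => rfl }

theorem redPi_surj (C : ModuleCat.{u} R) (x : R) : Function.Surjective (redPi C x).hom :=
  fun c => Submodule.Quotient.mk_surjective _ c

theorem redPi_ker (C : ModuleCat.{u} R) (x : R) (c : C) :
    (redPi C x).hom c = 0 ↔ ∃ c', x • c' = c := by
  refine (Submodule.Quotient.mk_eq_zero _).trans ?_
  rw [Submodule.ideal_span_singleton_smul]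
  constructor
  · rintro ⟨c', _, h⟩
    exact ⟨c', h⟩
  · rintro ⟨c', h⟩
    exact ⟨c', trivial, h⟩

theorem red_shortExact (C : ModuleCat.{u} R) (x : R) (hreg : IsSMulRegular C x) :
    ∃ w : (x • 𝟙 C) ≫ redPi C x = 0, (ShortComplex.mk (x • 𝟙 C) (redPi C x) w).ShortExact := by
  refine ⟨?_, ?_⟩
  · refine ModuleCat.hom_ext (LinearMap.ext fun c => ?_)
    exact (redPi_ker C x _).2 ⟨c, rfl⟩
  · refine ModuleCat.shortComplex_shortExact _ ?_ ?_ ?_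
    · exact fun c => redPi_ker C x c
    · exact hreg
    · exact redPi_surj C x

/-- `C` is semidualizing, phrased with Yoneda `Ext`. -/
structure SD {R : Type u} [CommRing R] (C : ModuleCat.{u} R) : Prop where
  fin : Module.Finite R C
  inj : ∀ r : R, (∀ c : C, r • c = 0) → r = 0
  surj : ∀ φ : C →ₗ[R] C, ∃ r : R, ∀ c, φ c = r • c
  ext : ∀ i, Subsingleton (Ext C C (i + 1))

/-- A semidualizing module `C` reduces to a semidualizing module `C/xC` over `R/xR`. -/
theorem SD.red {C : ModuleCat.{u} R} (hC : SD C) {x : R} (hregR : IsSMulRegular R x)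
    (hreg : IsSMulRegular C x) : SD (redMod C x) := by
  obtain ⟨w, hS⟩ := red_shortExact C x hreg
  have hf : Function.Surjective (Ideal.Quotient.mk (Ideal.span {x})) := Ideal.Quotient.mk_surjective
  have hx : ∀ r, Ideal.Quotient.mk (Ideal.span {x}) r = 0 ↔ ∃ s, r = x * s := fun r => by
    rw [Ideal.Quotient.eq_zero_iff_mem, Ideal.mem_span_singleton]; rfl
  have hfin := hC.fin
  refine ⟨?_, ?_, ?_, ?_⟩
  · have : Module.Finite R (C ⧸ (Ideal.span {x} • ⊤ : Submodule R C)) := inferInstance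
    exact Module.Finite.of_restrictScalars_finite R _ _
  · intro b hb
    obtain ⟨r, rfl⟩ := hf b
    rw [hx]
    have h0 : (r • 𝟙 C) ≫ redPi C x = 0 :=
      ModuleCat.hom_ext (LinearMap.ext fun c => hb (Submodule.Quotient.mk c))
    obtain ⟨v, hv⟩ := Ext.covariant_sequence_exact₂ C hS (Ext.mk₀ (r • 𝟙 C)) (by
      rw [Ext.mk₀_comp_mk₀]; exact (congrArg Ext.mk₀ h0).trans (Ext.mk₀_zero _ _))
    obtain ⟨v, rfl⟩ := (Ext.mk₀_bijective _ _).2 v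
    rw [Ext.mk₀_comp_mk₀] at hv
    have hv := (Ext.mk₀_bijective _ _).1 hv
    obtain ⟨s, hs⟩ := hC.surj v.hom
    refine ⟨s, sub_eq_zero.1 (hC.inj _ fun c => ?_)⟩
    have h1 : x • v.hom c = r • c := LinearMap.congr_fun (congrArg ModuleCat.Hom.hom hv) c
    rw [hs c, smul_smul] at h1
    rw [sub_smul, h1, sub_self]
  · intro φ
    let ψ : C ⟶ (resF (Ideal.Quotient.mk (Ideal.span {x}))).obj (redMod C x) :=
      redPi C x ≫ (resF _).map (ModuleCat.ofHom φ)
    have := hC.ext 0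
    obtain ⟨v, hv⟩ := Ext.covariant_sequence_exact₃ C hS (Ext.mk₀ ψ) (n₁ := 1) (by omega)
      (Subsingleton.elim _ _)
    obtain ⟨v, rfl⟩ := (Ext.mk₀_bijective _ _).2 v
    rw [Ext.mk₀_comp_mk₀] at hv
    have hv := (Ext.mk₀_bijective _ _).1 hv
    obtain ⟨r, hr⟩ := hC.surj v.hom
    refine ⟨Ideal.Quotient.mk _ r, fun c => ?_⟩
    obtain ⟨c, rfl⟩ := Submodule.Quotient.mk_surjective _ c
    have h1 : (redPi C x).hom (v.hom c) = φ (Submodule.Quotient.mk c) :=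
      LinearMap.congr_fun (congrArg ModuleCat.Hom.hom hv) c
    rw [hr c] at h1
    exact h1.symm
  · intro i
    have h1 := reesMap_bijective _ hS hf x hx hregR hreg rfl (i + 1) (redMod C x)
    have h2 : Subsingleton (Ext ((resF (Ideal.Quotient.mk (Ideal.span {x}))).obj (redMod C x))
        C (i + 1 + 1)) := by
      refine subsingleton_of_forall_eq 0 fun e => ?_
      have := hC.ext (i + 1)
      obtain ⟨v, hv⟩ := Ext.contravariant_sequence_exact₃ hS C e (n₀ := i + 1)
        (Subsingleton.elim (α := Ext C C (i + 1 + 1)) _ _) (by omega)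
      have h3 : v = 0 := Subsingleton.elim (h := hC.ext i) _ _
      rw [← hv, h3, Ext.comp_zero]
    exact h1.1.subsingleton

/-- Rees's isomorphism `Ext^i_{R/x}(k, C/xC) ≃ Ext^{i+1}_R(k, C)`, compatible with scalars. -/
theorem red_kk [IsLocalRing R] {C : ModuleCat.{u} R} {x : R} [IsLocalRing (R ⧸ Ideal.span {x})]
    (hregR : IsSMulRegular R x)
    (hreg : IsSMulRegular C x) (i : ℕ) :
    ∃ Φ : Ext (kk (R ⧸ Ideal.span {x})) (redMod C x) i → Ext (kk R) C (i + 1),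
      Function.Bijective Φ ∧ Φ 0 = 0 ∧
      ∀ (r : R) e, Φ (Ideal.Quotient.mk (Ideal.span {x}) r • e) = r • Φ e := by
  obtain ⟨w, hS⟩ := red_shortExact C x hreg
  have hf : Function.Surjective (Ideal.Quotient.mk (Ideal.span {x})) := Ideal.Quotient.mk_surjective
  have hx : ∀ r, Ideal.Quotient.mk (Ideal.span {x}) r = 0 ↔ ∃ s, r = x * s := fun r => by
    rw [Ideal.Quotient.eq_zero_iff_mem, Ideal.mem_span_singleton]; rfl
  have h1 := reesMap_bijective _ hS hf x hx hregR hreg rfl i (kk _)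
  obtain ⟨ι⟩ := resF_kk _ hf
  refine ⟨fun e => (Ext.mk₀ ι.inv).comp (reesMap _ hS e) (zero_add _), ⟨?_, ?_⟩, ?_, ?_⟩
  · intro a b hab
    apply h1.1
    have := congrArg (fun t => (Ext.mk₀ ι.hom).comp t (zero_add _)) hab
    simpa using this
  · intro y
    obtain ⟨e, he⟩ := h1.2 ((Ext.mk₀ ι.hom).comp y (zero_add _))
    refine ⟨e, ?_⟩
    dsimp only
    rw [he]
    simp
  · dsimp only
    rw [reesMap_zero, Ext.comp_zero]
  · intro r e
    dsimp only
    rw [reesMap_smul, Ext.comp_smul]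

end step
end PD

/-! ### The local theorem -/

namespace PD
open Abelian IsLocalRing

section mainlocal
variable {R : Type u} [CommRing R]

theorem SD.nontrivial [Nontrivial R] {C : ModuleCat.{u} R} (hC : SD C) : Nontrivial C := by
  by_contra h
  rw [not_nontrivial_iff_subsingleton] at h
  exact one_ne_zero (hC.inj 1 fun c => Subsingleton.elim _ _)

variable [IsLocalRing R]

/-- If a nonzero element of `C` is killed by the maximal ideal then `C → k → C` is a nonzero
homothety, hence a nonzero element of `R` is killed by the maximal ideal. -/
theorem SD.socle {C : ModuleCat.{u} R} (hC : SD C) {c : C} (hc : c ≠ 0)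
    (hmc : ∀ r ∈ maximalIdeal R, r • c = 0) :
    ∃ y : R, y ≠ 0 ∧ ∀ r ∈ maximalIdeal R, r * y = 0 := by
  have := hC.fin
  have := hC.nontrivial
  obtain ⟨N, hN, -⟩ := (eq_top_or_exists_le_coatom (⊥ : Submodule R C)).resolve_left bot_ne_top
  have hs : IsSimpleModule R (C ⧸ N) := isSimpleModule_iff_isCoatom.2 hN
  obtain ⟨I, hI, ⟨e⟩⟩ := isSimpleModule_iff_quot_maximal.1 hs
  obtain rfl := eq_maximalIdeal hI
  let g : (R ⧸ maximalIdeal R) →ₗ[R] C :=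
    Submodule.liftQ _ (LinearMap.toSpanSingleton R C c) hmc
  have hg : g (Submodule.Quotient.mk 1) = c := one_smul R c
  obtain ⟨y, hy⟩ := hC.surj (g.comp (e.toLinearMap.comp N.mkQ))
  have hsurj : Function.Surjective (e.toLinearMap.comp N.mkQ) :=
    e.surjective.comp N.mkQ_surjective
  obtain ⟨c', hc'⟩ := hsurj (Submodule.Quotient.mk 1)
  refine ⟨y, ?_, fun r hr => hC.inj _ fun a => ?_⟩
  · rintro rfl
    apply hc
    rw [← hg, ← hc', ← zero_smul R c', ← hy c']
    rfl
  · rw [mul_smul, ← hy a]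
    obtain ⟨b, hb⟩ := Submodule.Quotient.mk_surjective _ ((e.toLinearMap.comp N.mkQ) a)
    rw [LinearMap.comp_apply, ← hb]
    change r • (b • c) = 0
    rw [smul_comm, hmc r hr, smul_zero]

/-- In positive depth some element of the maximal ideal is regular on both `R` and `C`. By prime
avoidance on `R × C` it suffices that a socle element of `C` would produce one of `R ≃ End(C)`. -/
theorem SD.exists_regular [IsNoetherianRing R] {C : ModuleCat.{u} R} (hC : SD C)
    (h : ¬ ∃ y : R, y ≠ 0 ∧ ∀ r ∈ maximalIdeal R, r * y = 0) :
    ∃ x ∈ maximalIdeal R, IsSMulRegular R x ∧ IsSMulRegular C x := by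
  have := hC.fin
  by_contra! hcon
  have h1 : (maximalIdeal R : Set R) ⊆ ⋃ p ∈ associatedPrimes R (R × C), (p : Set R) := by
    rw [biUnion_associatedPrimes_eq_compl_regular]
    intro x hx hreg
    have hreg : IsSMulRegular (R × C) x := hreg
    refine hcon x hx (fun a b hab => ?_) (fun a b hab => ?_)
    · have : ((a, 0) : R × C) = (b, 0) := hreg (Prod.ext hab rfl)
      exact congrArg Prod.fst this
    · have : ((0, a) : R × C) = (0, b) := hreg (Prod.ext rfl hab)
      exact congrArg Prod.snd this
  rw [Ideal.subset_union_prime_finite (associatedPrimes.finite R (R × C)) ⊥ ⊥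
    (fun p hp _ _ => hp.isPrime)] at h1
  obtain ⟨p, hp, hmp⟩ := h1
  obtain ⟨hpp, ⟨a, b⟩, hab⟩ := isAssociatedPrime_iff.1 hp
  have hk : ∀ r ∈ maximalIdeal R, r * a = 0 ∧ r • b = 0 := by
    intro r hr
    have h2 : r ∈ p := hmp hr
    rw [hab, Submodule.mem_colon_singleton, Submodule.mem_bot] at h2
    exact ⟨congrArg Prod.fst h2, congrArg Prod.snd h2⟩
  by_cases ha : a = 0
  · by_cases hb : b = 0
    · apply hpp.ne_top
      rw [hab, ha, hb, Ideal.eq_top_iff_one, Submodule.mem_colon_singleton]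
      simp
    · exact h (hC.socle hb fun r hr => (hk r hr).2)
  · exact h ⟨a, ha, fun r hr => (hk r hr).1⟩

end mainlocal

theorem wb_cancel {a : WithBot ℕ∞} {d : ℕ} (h : a + 1 = (d : WithBot ℕ∞) + 1) : a = d := by
  induction a using WithBot.recBotCoe with
  | bot => exact absurd h (by exact_mod_cast WithBot.bot_ne_coe)
  | coe a =>
    have h1 : a + 1 = (d : ℕ∞) + 1 := by exact_mod_cast h
    have h2 : a = (d : ℕ∞) := (ENat.add_left_injective_of_ne_top ENat.one_ne_top) h1
    exact congrArg _ h2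

/-- Over a local ring a semidualizing module `C` with `Ext^i(k, C) = 0` for `i ≫ 0` satisfies
`Ext^i(k, C) = 0` for `i ≠ dim R`, and `Ext^{dim R}(k, C)` is cyclic and nonzero. -/
theorem main_local (d : ℕ) : ∀ (R : Type u) [CommRing R] [IsNoetherianRing R] [IsLocalRing R]
    (C : ModuleCat.{u} R), ringKrullDim R = d → SD C →
    (∃ n, ∀ i > n, Subsingleton (Ext (kk R) C i)) →
    (∀ i ≠ d, Subsingleton (Ext (kk R) C i)) ∧
      ∃ e : Ext (kk R) C d, e ≠ 0 ∧ ∀ z, ∃ r : R, z = r • e := by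
  induction d with
  | zero =>
    intro R _ _ _ C hd hC ⟨n, hn⟩
    have := hC.fin
    have := hC.nontrivial
    by_cases h : ∃ y : R, y ≠ 0 ∧ ∀ r ∈ maximalIdeal R, r * y = 0
    · obtain ⟨y, hy0, hy⟩ := h
      obtain ⟨-, h1, h2⟩ := depthZero_main C
        (fun φ => (hC.surj φ).imp fun r hr => LinearMap.ext hr) hy0 hy n hn
      exact ⟨fun i hi => h1 i (Nat.one_le_iff_ne_zero.2 hi), h2⟩
    · obtain ⟨x, hx, hregR, hreg⟩ := hC.exists_regular h
      have h3 := ringKrullDim_quotient_span_singleton_succ_eq_ringKrullDim hregR hx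
      rw [hd] at h3
      have : Nontrivial (R ⧸ Ideal.span {x}) := Ideal.Quotient.nontrivial_iff.2
        fun h => (Ideal.IsPrime.ne_top inferInstance : maximalIdeal R ≠ ⊤)
          (top_le_iff.1 (h ▸ (Ideal.span_singleton_le_iff_mem _).2 hx))
      have h4 : 0 ≤ ringKrullDim (R ⧸ Ideal.span {x}) := ringKrullDim_nonneg_of_nontrivial
      obtain ⟨m, hm⟩ := WithBot.ne_bot_iff_exists.1 (ne_of_gt (lt_of_lt_of_le (WithBot.bot_lt_coe 0) h4))
      exfalso
      rw [← hm] at h3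
      have h5 : m + 1 = 0 := by exact_mod_cast h3
      simp at h5
  | succ d ih =>
    intro R _ _ _ C hd hC ⟨n, hn⟩
    have := hC.fin
    have := hC.nontrivial
    by_cases h : ∃ y : R, y ≠ 0 ∧ ∀ r ∈ maximalIdeal R, r * y = 0
    · obtain ⟨y, hy0, hy⟩ := h
      have h1 := (depthZero_main C
        (fun φ => (hC.surj φ).imp fun r hr => LinearMap.ext hr) hy0 hy n hn).1
      rw [hd] at h1
      exfalso
      have h5 : d + 1 = 0 := by exact_mod_cast h1
      simp at h5
    · obtain ⟨x, hx, hregR, hreg⟩ := hC.exists_regular h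
      have h3 := ringKrullDim_quotient_span_singleton_succ_eq_ringKrullDim hregR hx
      rw [hd] at h3
      have : Nontrivial (R ⧸ Ideal.span {x}) := Ideal.Quotient.nontrivial_iff.2
        fun h => (Ideal.IsPrime.ne_top inferInstance : maximalIdeal R ≠ ⊤)
          (top_le_iff.1 (h ▸ (Ideal.span_singleton_le_iff_mem _).2 hx))
      have hloc : IsLocalRing (R ⧸ Ideal.span {x}) :=
        .of_surjective' (Ideal.Quotient.mk _) Ideal.Quotient.mk_surjective
      have h4 : ringKrullDim (R ⧸ Ideal.span {x}) = d := by
        have h5 : ringKrullDim (R ⧸ Ideal.span {x}) + 1 = (d : WithBot ℕ∞) + 1 := by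
          rw [h3]; push_cast; rfl
        exact wb_cancel h5 --.add_one_inj.1 h5
      have key : ∀ i, Subsingleton (Ext (kk R) C (i + 1)) ↔
          Subsingleton (Ext (kk (R ⧸ Ideal.span {x})) (redMod C x) i) := by
        intro i
        obtain ⟨Φ, hΦ, -, -⟩ := red_kk (C := C) hregR hreg i
        exact (Equiv.ofBijective Φ hΦ).subsingleton_congr.symm
      obtain ⟨h6, e, he0, he⟩ := ih _ (redMod C x) h4 (hC.red hregR hreg)
        ⟨n, fun i hi => (key i).1 (hn _ (by omega))⟩
      refine ⟨fun i hi => ?_, ?_⟩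
      · cases i with
        | zero => exact kk_hom_zero C x hx hreg
        | succ i => exact (key i).2 (h6 i (by omega))
      · obtain ⟨Φ, hΦ, hΦ0, hΦs⟩ := red_kk (C := C) hregR hreg d
        refine ⟨Φ e, fun h => he0 (hΦ.1 (h.trans hΦ0.symm)), fun z => ?_⟩
        obtain ⟨w, rfl⟩ := hΦ.2 z
        obtain ⟨r, rfl⟩ := he w
        obtain ⟨r, rfl⟩ := Ideal.Quotient.mk_surjective r
        exact ⟨r, hΦs r e⟩
end PD

/-! ### Hom from a localization and injective hulls -/

namespace PD
open Abelian IsLocalRing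

section homdom
variable {R : Type u} [CommRing R] (A : Type u) [CommRing A] [Algebra R A]

theorem homDom_apply {E : Type u} [AddCommGroup E] [Module R E] (a : A) (f : A →ₗ[R] E) (b : A) :
    (a • f) b = f (a * b) := rfl

instance homDomTower (E : Type u) [AddCommGroup E] [Module R E] :
    IsScalarTower R A (A →ₗ[R] E) where
  smul_assoc r a f := by
    ext x
    change f ((r • a) * x) = r • f (a * x)
    rw [smul_mul_assoc, map_smul]

/-- For an `R`-algebra `A`, coextension of scalars `Hom_R(A, E)` preserves injectivity. -/
theorem homDom_injective (E : Type u) [AddCommGroup E] [Module R E] (hE : Module.Injective R E) :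
    Module.Injective A (A →ₗ[R] E) where
  out X Y _ _ _ _ f hf g := by
    let _ := Module.compHom X (algebraMap R A)
    let _ := Module.compHom Y (algebraMap R A)
    have : IsScalarTower R A X := .of_algebraMap_smul fun _ _ => rfl
    have : IsScalarTower R A Y := .of_algebraMap_smul fun _ _ => rfl
    let g₁ : X →ₗ[R] E :=
      { toFun := fun x => g x 1
        map_add' := fun x y => by rw [map_add]; rfl
        map_smul' := fun r x => by
          rw [← algebraMap_smul A r x, map_smul, homDom_apply, ← Algebra.smul_def, map_smul]
          rfl }
    obtain ⟨h, hh⟩ := hE.out (f.restrictScalars R) hf g₁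
    refine ⟨
      { toFun := fun y => h.comp ((LinearMap.toSpanSingleton A Y y).restrictScalars R)
        map_add' := fun y z => by
          ext b
          change h (b • (y + z)) = h (b • y) + h (b • z)
          rw [smul_add, map_add]
        map_smul' := fun a y => by
          ext b
          change h (b • a • y) = h ((a * b) • y)
          rw [smul_smul, mul_comm] }, fun x => ?_⟩
    ext b
    change h (b • f x) = g x b
    rw [← map_smul]
    refine (hh (b • x)).trans ?_
    change g (b • x) 1 = _
    rw [map_smul, homDom_apply, mul_one]

variable (S : Submonoid R) [IsLocalization S A]

/-- `Hom_R(A, Hom_R(C, E)) ≃ Hom_A(C_S, Hom_R(A, E))` for a localization `A = S⁻¹R`. -/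
theorem homDom_adj (C E : Type u) [AddCommGroup C] [Module R C] [AddCommGroup E] [Module R E]
    (CS : Type u) [AddCommGroup CS] [Module R CS] [Module A CS] [IsScalarTower R A CS]
    (f : C →ₗ[R] CS) [IsLocalizedModule S f] :
    Nonempty ((A →ₗ[R] (C →ₗ[R] E)) ≃ₗ[A] (CS →ₗ[A] (A →ₗ[R] E))) := by
  have hu : ∀ (E : Type u) [AddCommGroup E] [Module R E] (x : S),
      IsUnit (algebraMap R (Module.End R (A →ₗ[R] E)) x) := by
    intro E _ _ x
    obtain ⟨a, ha⟩ := IsLocalization.map_units A x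
    have hx : ∀ g : A →ₗ[R] E, (x : R) • g = (a : A) • g := fun g => by
      rw [ha, algebraMap_smul]
    refine (Module.End.isUnit_iff _).2 ⟨fun g h hgh => ?_, fun g => ⟨(↑a⁻¹ : A) • g, ?_⟩⟩
    · have h1 : (a : A) • g = (a : A) • h := (hx g).symm.trans (hgh.trans (hx h))
      simpa [smul_smul] using congrArg (fun k => (↑a⁻¹ : A) • k) h1
    · refine (hx _).trans ?_
      change (a : A) • ((↑a⁻¹ : A) • g) = g
      rw [smul_smul, Units.mul_inv, one_smul]
  let B : (CS →ₗ[A] (A →ₗ[R] E)) →ₗ[A] (A →ₗ[R] (C →ₗ[R] E)) :=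
    { toFun := fun φ => ((φ.restrictScalars R).comp f).flip
      map_add' := fun φ ψ => rfl
      map_smul' := fun a φ => rfl }
  refine ⟨(LinearEquiv.ofBijective B ⟨?_, ?_⟩).symm⟩
  · intro φ ψ h
    have h1 : (φ.restrictScalars R).comp f = (ψ.restrictScalars R).comp f := by
      ext c a
      exact congrArg (fun F : A →ₗ[R] (C →ₗ[R] E) => F a c) h
    exact LinearMap.ext fun x =>
      LinearMap.congr_fun (IsLocalizedModule.ext S f (hu E) h1) x
  · intro F
    let h := IsLocalizedModule.lift S f F.flip (hu E)
    refine ⟨h.extendScalarsOfIsLocalization S A, ?_⟩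
    ext a c
    change h (f c) a = F a c
    rw [IsLocalizedModule.lift_apply]
    rfl

end homdom

section hull
variable {R : Type u} [CommRing R] {p : Ideal R} [p.IsPrime] {E : Type u} [AddCommGroup E]
  [Module R E]

/-- Elements outside `p` act bijectively on `E(R/p)`. -/
theorem hull_bij (hE : IsInjectiveHull R (R ⧸ p) E) {s : R} (hs : s ∉ p) :
    Function.Bijective (fun e : E => s • e) := by
  obtain ⟨hinj, ι, hι, hess⟩ := hE
  let f : E →ₗ[R] E := LinearMap.lsmul R E s
  have hf : Function.Injective f := by
    rw [← LinearMap.ker_eq_bot]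
    by_contra hne
    obtain ⟨y, ⟨hy1, z, rfl⟩, hy0⟩ := Submodule.exists_mem_ne_zero_of_ne_bot (hess _ hne)
    obtain ⟨z, rfl⟩ := Ideal.Quotient.mk_surjective z
    have h1 : ι (s • Ideal.Quotient.mk p z) = 0 := by rw [map_smul]; exact hy1
    rw [map_eq_zero_iff ι hι] at h1
    have h2 : s * z ∈ p := Ideal.Quotient.eq_zero_iff_mem.1 h1
    have h3 := (Ideal.IsPrime.mem_or_mem ‹_› h2).resolve_left hs
    apply hy0
    rw [Ideal.Quotient.eq_zero_iff_mem.2 h3, map_zero]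
  refine ⟨hf, fun e => ?_⟩
  obtain ⟨h, hh⟩ := hinj.out f hf LinearMap.id
  refine ⟨h e, ?_⟩
  change s • h e = e
  rw [← map_smul]
  exact hh e

variable (p) in
/-- The elements of `Hom_R(R_p, E(R/p))` killed by the maximal ideal form a cyclic module. -/
theorem hull_socle (hE : IsInjectiveHull R (R ⧸ p) E) :
    ∃ e : Localization.AtPrime p →ₗ[R] E, e ≠ 0 ∧
      (∀ a ∈ maximalIdeal (Localization.AtPrime p), a • e = 0) ∧
      ∀ f : Localization.AtPrime p →ₗ[R] E,
        (∀ a ∈ maximalIdeal (Localization.AtPrime p), a • f = 0) →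
        ∃ a : Localization.AtPrime p, f = a • e := by
  have hb := fun {s} (hs : s ∉ p) => hull_bij hE hs
  obtain ⟨hinj, ι, hι, hess⟩ := hE
  have hext : ∀ f g : Localization.AtPrime p →ₗ[R] E, f 1 = g 1 → f = g := by
    intro f g h
    ext x
    obtain ⟨a, s, rfl⟩ := IsLocalization.exists_mk'_eq p.primeCompl x
    apply (hb s.2).1
    change (s : R) • f _ = (s : R) • g _
    rw [← map_smul, ← map_smul, Algebra.smul_def, IsLocalization.mk'_spec',
      Algebra.algebraMap_eq_smul_one, map_smul, map_smul, h]
  have hlift : ∀ y : E, ∃ f : Localization.AtPrime p →ₗ[R] E, f 1 = y := by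
    intro y
    have hu : ∀ x : p.primeCompl, IsUnit (algebraMap R (Module.End R E) x) := fun x =>
      (Module.End.isUnit_iff _).2 (hb x.2)
    refine ⟨IsLocalizedModule.lift p.primeCompl
      (Algebra.linearMap R (Localization.AtPrime p)) (LinearMap.toSpanSingleton R E y) hu, ?_⟩
    have := IsLocalizedModule.lift_apply p.primeCompl
      (Algebra.linearMap R (Localization.AtPrime p)) (LinearMap.toSpanSingleton R E y) hu 1
    rw [Algebra.linearMap_apply, map_one] at this
    rw [this]
    exact one_smul R y
  have hmem : ∀ {a : R} {s : p.primeCompl}, IsLocalization.mk' (Localization.AtPrime p) a s ∈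
      maximalIdeal (Localization.AtPrime p) ↔ a ∈ p := by
    intro a s
    exact IsLocalization.AtPrime.mk'_mem_maximal_iff _ p a s
  obtain ⟨e, he⟩ := hlift (ι 1)
  have he0 : ι 1 ≠ 0 := fun h => by
    rw [map_eq_zero_iff ι hι] at h
    exact one_ne_zero h
  refine ⟨e, ?_, ?_, ?_⟩
  · rintro rfl
    exact he0 he.symm
  · intro a ha
    obtain ⟨a, s, rfl⟩ := IsLocalization.exists_mk'_eq p.primeCompl a
    apply hext
    apply (hb s.2).1
    change (s : R) • e (_ * 1) = (s : R) • 0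
    rw [mul_one, ← map_smul, Algebra.smul_def, IsLocalization.mk'_spec',
      Algebra.algebraMap_eq_smul_one, map_smul, he, ← map_smul, smul_zero]
    have : a • (1 : R ⧸ p) = 0 := by
      rw [← Ideal.Quotient.eq_zero_iff_mem.2 (hmem.1 ha), ← map_one (Ideal.Quotient.mk p)]
      exact congrArg (Ideal.Quotient.mk p) (mul_one a)
    rw [this, map_zero]
  · intro f hf
    by_cases h0 : f = 0
    · exact ⟨0, by rw [zero_smul, h0]⟩
    have hy : f 1 ≠ 0 := fun h => h0 (hext _ _ h)
    have hpy : ∀ a ∈ p, a • f 1 = 0 := by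
      intro a ha
      have := congrArg (fun g : Localization.AtPrime p →ₗ[R] E => g 1)
        (hf (algebraMap R _ a) ((IsLocalization.AtPrime.to_map_mem_maximal_iff _ p a).2 ha))
      change f (algebraMap R _ a * 1) = 0 at this
      rwa [← Algebra.smul_def, map_smul] at this
    have hK : Submodule.span R {f 1} ≠ ⊥ := by rwa [Ne, Submodule.span_singleton_eq_bot]
    obtain ⟨w, ⟨hw1, z, rfl⟩, hw0⟩ := Submodule.exists_mem_ne_zero_of_ne_bot (hess _ hK)
    obtain ⟨r, hr⟩ := Submodule.mem_span_singleton.1 hw1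
    obtain ⟨b, rfl⟩ := Ideal.Quotient.mk_surjective z
    have hrp : r ∉ p := fun h => hw0 (by rw [← hr, hpy r h])
    refine ⟨IsLocalization.mk' _ b (⟨r, hrp⟩ : p.primeCompl), ?_⟩
    apply hext
    apply (hb hrp).1
    change r • f 1 = r • e (_ * 1)
    have h5 : r • IsLocalization.mk' (Localization.AtPrime p) b (⟨r, hrp⟩ : p.primeCompl) =
        algebraMap R _ b := by
      rw [Algebra.smul_def]; exact IsLocalization.mk'_spec' _ b (⟨r, hrp⟩ : p.primeCompl)
    rw [mul_one, ← map_smul e, h5, Algebra.algebraMap_eq_smul_one, map_smul, he, hr, ← map_smul]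
    congr 1
    rw [← map_one (Ideal.Quotient.mk p)]
    exact congrArg (Ideal.Quotient.mk p) (mul_one b).symm

end hull
end PD

/-! ### Lengths and existence of injective hulls -/

namespace PD
open Abelian IsLocalRing

section length
variable {A : Type u} [CommRing A] [IsLocalRing A] {E : Type u} [AddCommGroup E] [Module A E]
  {ε : E}

/-- An injective module over a local ring with a nonzero socle element `ε` detects nonzero finitely
generated modules. -/
theorem hom_subsingleton (hε0 : ε ≠ 0) (hε : ∀ a ∈ maximalIdeal A, a • ε = 0)
    (X : Type u) [AddCommGroup X] [Module A X] [Module.Finite A X]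
    (h : Subsingleton (X →ₗ[A] E)) : Subsingleton X := by
  by_contra hX
  rw [not_subsingleton_iff_nontrivial] at hX
  obtain ⟨N, hN, -⟩ := (eq_top_or_exists_le_coatom (⊥ : Submodule A X)).resolve_left bot_ne_top
  have hs : IsSimpleModule A (X ⧸ N) := isSimpleModule_iff_isCoatom.2 hN
  obtain ⟨I, hI, ⟨e⟩⟩ := isSimpleModule_iff_quot_maximal.1 hs
  obtain rfl := eq_maximalIdeal hI
  let g : (A ⧸ maximalIdeal A) →ₗ[A] E :=
    Submodule.liftQ _ (LinearMap.toSpanSingleton A E ε) hε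
  have hg : g (Submodule.Quotient.mk 1) = ε := one_smul A ε
  obtain ⟨x, hx⟩ := (e.surjective.comp N.mkQ_surjective) (Submodule.Quotient.mk 1)
  have h0 := LinearMap.congr_fun (Subsingleton.elim (g.comp (e.toLinearMap.comp N.mkQ)) 0) x
  apply hε0
  rw [← hg, ← hx]
  exact h0

/-- If the socle of `E` is generated by `ε`, the dual of a one-dimensional `k`-vector space is
one-dimensional. -/
theorem hom_simple (hε0 : ε ≠ 0) (hε : ∀ a ∈ maximalIdeal A, a • ε = 0)
    (hεs : ∀ f : E, (∀ a ∈ maximalIdeal A, a • f = 0) → ∃ a : A, f = a • ε)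
    (X : Type u) [AddCommGroup X] [Module A X] (e : X) (he0 : e ≠ 0)
    (he : ∀ a ∈ maximalIdeal A, a • e = 0) (hgen : ∀ x : X, ∃ a : A, x = a • e) :
    IsSimpleModule A (X →ₗ[A] E) := by
  have hunit : ∀ a : A, a ∉ maximalIdeal A → IsUnit a := fun a ha => by
    simpa using ha
  rw [isSimpleModule_iff_toSpanSingleton_surjective]
  constructor
  · have hπ : Function.Surjective (LinearMap.toSpanSingleton A X e) := fun x =>
      (hgen x).imp fun a ha => ha.symm
    have hle : LinearMap.ker (LinearMap.toSpanSingleton A X e) ≤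
        LinearMap.ker (LinearMap.toSpanSingleton A E ε) := by
      intro a ha
      refine hε a ?_
      by_contra hm
      exact he0 (((hunit a hm).smul_eq_zero).1 ha)
    refine ⟨⟨(Submodule.liftQ _ _ hle).comp
      (LinearMap.quotKerEquivOfSurjective _ hπ).symm.toLinearMap, 0, fun h => hε0 ?_⟩⟩
    have h1 := LinearMap.congr_fun h (LinearMap.toSpanSingleton A X e 1)
    have h2 : (LinearMap.quotKerEquivOfSurjective _ hπ).symm
        (LinearMap.toSpanSingleton A X e 1) = Submodule.Quotient.mk 1 :=
      (LinearEquiv.symm_apply_eq _).2 rfl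
    have h3 : (Submodule.liftQ _ _ hle) ((LinearMap.quotKerEquivOfSurjective _ hπ).symm
        (LinearMap.toSpanSingleton A X e 1)) = 0 := h1
    rw [h2] at h3
    exact (one_smul A ε).symm.trans h3
  · intro φ hφ ψ
    have hk : ∀ χ : X →ₗ[A] E, ∃ a : A, χ e = a • ε := fun χ =>
      hεs _ fun a ha => by rw [← map_smul, he a ha, map_zero]
    obtain ⟨a, ha⟩ := hk φ
    obtain ⟨b, hb⟩ := hk ψ
    have hau : IsUnit a := by
      refine hunit a fun hm => hφ (LinearMap.ext fun x => ?_)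
      obtain ⟨c, rfl⟩ := hgen x
      rw [map_smul, ha, hε a hm, smul_zero]
      rfl
    obtain ⟨u, rfl⟩ := hau
    refine ⟨b * ↑u⁻¹, LinearMap.ext fun x => ?_⟩
    obtain ⟨c, rfl⟩ := hgen x
    change (b * ↑u⁻¹ : A) • φ (c • e) = ψ (c • e)
    rw [map_smul, map_smul, ha, hb, smul_comm, smul_smul _ (u : A) ε, mul_assoc, Units.inv_mul,
      mul_one]

end length

section mlength
variable {A : Type u} [CommRing A]

theorem mLength_eq {M N : Type u} [AddCommGroup M] [Module A M] [AddCommGroup N] [Module A N]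
    (e : M ≃ₗ[A] N) : mLength A M = mLength A N := by
  have := e.length_eq
  rwa [Module.length_eq_height, Module.length_eq_height] at this

theorem mLength_simple {M : Type u} [AddCommGroup M] [Module A M] (h : IsSimpleModule A M) :
    mLength A M = 1 :=
  (Module.length_eq_height A M).symm.trans (Module.length_eq_one_iff.2 h)

theorem mLength_zero {M : Type u} [AddCommGroup M] [Module A M] :
    mLength A M = 0 ↔ Subsingleton M := by
  rw [← Module.length_eq_zero_iff (R := A), Module.length_eq_height]
  rfl

end mlength

section exist
variable {R : Type u} [CommRing R]

/-- Chain step for Zorn's lemma: a nonzero submodule of the supremum of a chain meets a member. -/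
theorem exists_essential_inf {I : Type u} [AddCommGroup I] [Module R I]
    {c : Set (Submodule R I)} (hc : IsChain (· ≤ ·) c) (L : Submodule R I)
    (hL : L ≤ sSup c) (h0 : L ≠ ⊥) : ∃ b ∈ c, L ⊓ b ≠ ⊥ := by
  by_contra! hcon
  apply h0
  rw [← inf_eq_left.2 hL, hc.directedOn.inf_sSup_eq]
  simpa using hcon

/-- Every module has an injective hull: a maximal essential extension inside an injective
module. -/
theorem exists_hull (N : Type u) [AddCommGroup N] [Module R N] :
    ∃ (E : Type u) (_ : AddCommGroup E) (_ : Module R E), IsInjectiveHull R N E := by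
  obtain ⟨⟨J, hJ, f, hf⟩⟩ := EnoughInjectives.presentation (ModuleCat.of R N)
  have hJ' : Module.Injective R J := Module.injective_module_of_injective_object R J
  have hf' : Function.Injective f.hom := (ModuleCat.mono_iff_injective f).1 hf
  let N' := LinearMap.range f.hom
  -- a maximal essential extension `K` of `N` inside `J`
  obtain ⟨K, hNK, hK⟩ := zorn_le_nonempty₀
    {K : Submodule R J | N' ≤ K ∧ ∀ L ≤ K, L ≠ ⊥ → L ⊓ N' ≠ ⊥}
    (fun c hc hch y hy => ⟨sSup c, ⟨(hc hy).1.trans (le_sSup hy), fun L hL h0 => by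
      obtain ⟨b, hb, hLb⟩ := exists_essential_inf hch L hL h0
      have h1 := (hc hb).2 (L ⊓ b) inf_le_right hLb
      exact fun h => h1 (le_bot_iff.1 (h ▸ inf_le_inf_right _ inf_le_left))⟩,
      fun _ => le_sSup⟩) N' ⟨le_rfl, fun L hL h0 => by rwa [inf_eq_left.2 hL]⟩
  -- a maximal submodule `L` meeting `K` trivially
  obtain ⟨L, -, hL⟩ := zorn_le_nonempty₀ {L : Submodule R J | L ⊓ K = ⊥}
    (fun c hc hch y hy => ⟨sSup c, by
      by_contra h0
      obtain ⟨b, hb, hb0⟩ := exists_essential_inf hch (sSup c ⊓ K) inf_le_left h0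
      refine hb0 (le_bot_iff.1 ?_)
      rw [← (hc hb : b ⊓ K = ⊥)]
      exact le_inf inf_le_right (inf_le_left.trans inf_le_right), fun _ => le_sSup⟩) ⊥ (bot_inf_eq K)
  have hLK : L ⊓ K = ⊥ := hL.prop
  let q : K →ₗ[R] (J ⧸ L) := L.mkQ.comp K.subtype
  have hq : Function.Injective q := by
    rw [← LinearMap.ker_eq_bot, eq_bot_iff]
    intro x hx
    have h1 : (x : J) ∈ L := (Submodule.Quotient.mk_eq_zero L).1 hx
    have h2 : (x : J) ∈ L ⊓ K := ⟨h1, x.2⟩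
    rw [hLK] at h2
    exact Subtype.ext h2
  obtain ⟨h, hh⟩ := hJ'.out q hq K.subtype
  -- `K` is essential in `J ⧸ L`
  have hqe : ∀ P : Submodule R (J ⧸ L), P ≠ ⊥ → ∃ x : K, q x ∈ P ∧ x ≠ 0 := by
    intro P hP
    by_contra! hcon
    have h1 : P.comap L.mkQ ⊓ K = ⊥ := by
      rw [eq_bot_iff]
      rintro x ⟨hx1, hx2⟩
      exact congrArg Subtype.val (hcon ⟨x, hx2⟩ hx1)
    have h2 : L ≤ P.comap L.mkQ := fun x hx => by
      rw [Submodule.mem_comap, Submodule.mkQ_apply, (Submodule.Quotient.mk_eq_zero L).2 hx]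
      exact P.zero_mem
    have h3 : P.comap L.mkQ ≤ L := hL.le_of_ge h1 h2
    apply hP
    rw [eq_bot_iff]
    intro x hx
    obtain ⟨x, rfl⟩ := L.mkQ_surjective x
    exact (Submodule.Quotient.mk_eq_zero L).2 (h3 hx)
  have hhinj : Function.Injective h := by
    rw [← LinearMap.ker_eq_bot]
    by_contra hne
    obtain ⟨x, hx, hx0⟩ := hqe _ hne
    apply hx0
    have h1 : h (q x) = 0 := hx
    rw [hh] at h1
    exact Subtype.ext h1
  have hrange : LinearMap.range h ≤ K := by
    refine hK.le_of_ge ⟨?_, fun P hP hP0 => ?_⟩ ?_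
    · exact fun x hx => ⟨q ⟨x, hK.prop.1 hx⟩, hh _⟩
    · have h1 : P.comap h ≠ ⊥ := by
        obtain ⟨y, hy, hy0⟩ := Submodule.exists_mem_ne_zero_of_ne_bot hP0
        obtain ⟨z, rfl⟩ := hP hy
        intro hb
        have : z ∈ P.comap h := hy
        rw [hb] at this
        exact hy0 (by rw [(this : z = 0), map_zero])
      obtain ⟨x, hx, hx0⟩ := hqe _ h1
      have hx' : (x : J) ∈ P := by
        have : h (q x) ∈ P := hx
        rwa [hh] at this
      have h2 := hK.prop.2 (P ⊓ K) inf_le_right fun hb => hx0 (Subtype.ext (by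
        have : (x : J) ∈ P ⊓ K := ⟨hx', x.2⟩
        rwa [hb] at this))
      exact fun hb => h2 (le_bot_iff.1 (hb ▸ inf_le_inf_right _ inf_le_left))
    · exact fun x hx => ⟨q ⟨x, hx⟩, hh _⟩
  -- the composite `J → J ⧸ L → K` is a retraction
  let ρ : J →ₗ[R] K := (h.comp L.mkQ).codRestrict K fun x => hrange ⟨_, rfl⟩
  have hρ : ∀ x : K, ρ x = x := fun x => Subtype.ext (hh x)
  refine ⟨K, inferInstance, inferInstance, ⟨⟨?_⟩,
    f.hom.codRestrict K fun x => hK.prop.1 ⟨x, rfl⟩, ?_, ?_⟩⟩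
  · intro X Y _ _ _ _ i hi g
    obtain ⟨k, hk⟩ := hJ'.out i hi (K.subtype.comp g)
    exact ⟨ρ.comp k, fun x => (congrArg ρ (hk x)).trans (hρ _)⟩
  · intro x y hxy
    exact hf' (congrArg Subtype.val hxy)
  · intro P hP
    have h1 : P.map K.subtype ≠ ⊥ := by
      obtain ⟨x, hx, hx0⟩ := Submodule.exists_mem_ne_zero_of_ne_bot hP
      intro hb
      have : (x : J) ∈ P.map K.subtype := ⟨x, hx, rfl⟩
      rw [hb] at this
      exact hx0 (Subtype.ext this)
    obtain ⟨y, ⟨⟨x, hx, rfl⟩, z, hz⟩, hy0⟩ := Submodule.exists_mem_ne_zero_of_ne_bot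
      (hK.prop.2 _ (Submodule.map_subtype_le K P) h1)
    intro hb
    have h2 : x ∈ P ⊓ LinearMap.range (f.hom.codRestrict K fun x => hK.prop.1 ⟨x, rfl⟩) :=
      ⟨hx, z, Subtype.ext hz⟩
    rw [hb] at h2
    exact hy0 (congrArg K.subtype (h2 : x = 0))

end exist
end PD

/-! ### Localization of semidualizing modules -/

namespace PD
open Abelian IsLocalRing

section loc
variable {R : Type u} [CommRing R] [IsNoetherianRing R] (S : Submonoid R)

/-- `Ext` over the localization vanishes exactly when `Ext` over `R` is `S`-torsion. -/
theorem loc_sub_iff (M N : ModuleCat.{u} R) [Module.Finite R M] (n : ℕ) :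
    Subsingleton (Ext ((locF S).obj M) ((locF S).obj N) n) ↔
      ∀ e : Ext M N n, ∃ s ∈ S, s • e = 0 := by
  obtain ⟨ha, hb⟩ := ext_loc S N n M
  refine ⟨fun h e => ha e (Subsingleton.elim _ _), fun h => subsingleton_of_forall_eq 0 fun y => ?_⟩
  obtain ⟨s, hs, e, he⟩ := hb y
  obtain ⟨t, ht, hte⟩ := h e
  have h1 : algebraMap R (Localization S) t • (algebraMap R (Localization S) s • y) = 0 := by
    rw [he, ← mapExact_loc_smul, hte, Ext.mapExactFunctor_zero]
  rw [smul_smul] at h1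
  have hu : IsUnit (algebraMap R (Localization S) t * algebraMap R (Localization S) s) :=
    (IsLocalization.map_units (Localization S) ⟨t, ht⟩).mul
      (IsLocalization.map_units (Localization S) ⟨s, hs⟩)
  exact hu.smul_eq_zero.1 h1

theorem SD.loc {C : ModuleCat.{u} R} (hC : SD C) : SD ((locF S).obj C) where
  fin := by
    have := hC.fin
    exact Module.Finite.of_isLocalizedModule S (locMk S C)
  inj := by
    intro r hr
    have := hC.fin
    obtain ⟨a, s, rfl⟩ := IsLocalization.exists_mk'_eq S r
    have h1 : (locF S).map (a • 𝟙 C) = 0 := by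
      refine ModuleCat.hom_ext (LinearMap.ext fun y => ?_)
      rw [locF_smul]
      change algebraMap R (Localization S) a • y = 0
      rw [← IsLocalization.mk'_spec' _ a s, mul_smul, hr, smul_zero]
    obtain ⟨t, ht, h2⟩ := (ext_loc S C 0 C).1 (Ext.mk₀ (a • 𝟙 C)) (by
      rw [Ext.mapExactFunctor_mk₀, h1]
      exact Ext.mk₀_zero _ _)
    rw [← Ext.mk₀_smul] at h2
    have h3 : t • (a • 𝟙 C) = 0 := (Ext.mk₀_bijective C C).1 (h2.trans (Ext.mk₀_zero _ _).symm)
    have h4 : t * a = 0 := hC.inj _ fun c => by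
      rw [mul_smul]
      exact congrArg (fun f : C ⟶ C => f.hom c) h3
    rw [IsLocalization.mk'_eq_zero_iff]
    exact ⟨⟨t, ht⟩, h4⟩
  surj := by
    intro φ
    have := hC.fin
    obtain ⟨g, rfl⟩ : ∃ g : (locF S).obj C ⟶ (locF S).obj C, g.hom = φ :=
      ⟨ModuleCat.ofHom φ, rfl⟩
    obtain ⟨s, hs, e, he⟩ := (ext_loc S C 0 C).2 (Ext.mk₀ g)
    obtain ⟨f, rfl⟩ := (Ext.mk₀_bijective C C).2 e
    rw [Ext.mapExactFunctor_mk₀, ← Ext.mk₀_smul] at he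
    have h1 := (Ext.mk₀_bijective _ _).1 he
    obtain ⟨r, hr⟩ := hC.surj f.hom
    have hf : f = r • 𝟙 C := ModuleCat.hom_ext (LinearMap.ext hr)
    rw [hf, locF_smul] at h1
    refine ⟨IsLocalization.mk' _ r (⟨s, hs⟩ : S), fun c => ?_⟩
    have h2 : algebraMap R (Localization S) s • g.hom c = algebraMap R (Localization S) r • c :=
      congrArg (fun g : (locF S).obj C ⟶ (locF S).obj C => g.hom c) h1
    have hu := IsLocalization.map_units (Localization S) (⟨s, hs⟩ : S)
    refine hu.smul_left_cancel.1 (h2.trans ?_)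
    rw [smul_smul, IsLocalization.mk'_spec']
  ext := fun i => by
    have := hC.fin
    have := hC.ext i
    rw [loc_sub_iff]
    exact fun e => ⟨1, S.one_mem, Subsingleton.elim _ _⟩

end loc

section bridge
variable {R : Type u} [CommRing R] (S : Submonoid R)

/-- The two models of the localized module agree. -/
theorem locIso (M : ModuleCat.{u} R) :
    Nonempty ((locF S).obj M ≅ ModuleCat.of (Localization S) (LocalizedModule S M)) := by
  let e : (locF S).obj M ≃ₗ[R] LocalizedModule S M :=
    IsLocalizedModule.linearEquiv S (locMk S M) (LocalizedModule.mkLinearMap S M)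
  exact ⟨(e.extendScalarsOfIsLocalization S (Localization S)).toModuleIso⟩

theorem SD.of_semidualizing {C : Type u} [AddCommGroup C] [Module R C]
    (hC : IsSemidualizing R C) : SD (ModuleCat.of R C) where
  fin := hC.1
  inj _ hr := hC.2.1.1 (LinearMap.ext fun c => (hr c).trans (zero_smul R c).symm)
  surj φ := (hC.2.1.2 φ).imp fun _ hr c => (LinearMap.congr_fun hr c).symm
  ext i := (subsingleton_extM_iff R C C i).1 (hC.2.2 (i + 1) i.succ_pos)

theorem SD.iso {C C' : ModuleCat.{u} R} (e : C ≅ C') (hC : SD C) : SD C' where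
  fin := by
    have := hC.fin
    exact Module.Finite.equiv e.toLinearEquiv
  inj _ hr := hC.inj _ fun c => e.toLinearEquiv.injective (by rw [map_smul, hr, map_zero])
  surj φ := by
    obtain ⟨r, hr⟩ := hC.surj (e.toLinearEquiv.symm.toLinearMap.comp
      (φ.comp e.toLinearEquiv.toLinearMap))
    refine ⟨r, fun c => e.toLinearEquiv.symm.injective ?_⟩
    have := hr (e.toLinearEquiv.symm c)
    rw [map_smul, ← this]
    exact congrArg (fun x => e.toLinearEquiv.symm (φ x)) (e.toLinearEquiv.apply_symm_apply c).symm
  ext i := have := hC.ext i; sub_of_iso e e (i + 1) this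

theorem SD.semidualizing {C : Type u} [AddCommGroup C] [Module R C]
    (hC : SD (ModuleCat.of R C)) : IsSemidualizing R C := by
  refine ⟨hC.fin, ⟨fun r s h => ?_, fun φ => ?_⟩, fun i hi => ?_⟩
  · refine sub_eq_zero.1 (hC.inj _ fun c => ?_)
    rw [sub_smul, sub_eq_zero]
    exact LinearMap.congr_fun h c
  · exact (hC.surj φ).imp fun r hr => LinearMap.ext fun c => (hr c).symm
  · obtain ⟨i, rfl⟩ := Nat.exists_eq_succ_of_ne_zero hi.ne'
    exact (subsingleton_extM_iff R C C i).2 (hC.ext i)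

variable (p : Ideal R) [p.IsPrime]

theorem loc_residue_aux (M : ModuleCat.{u} R) (u : M) (hu : ∀ m : M, ∃ r : R, m = r • u)
    (hu0 : ∀ r : R, r • u = 0 ↔ r ∈ p) :
    Nonempty ((locF p.primeCompl).obj M ≅ kk (Localization.AtPrime p)) := by
  let A := Localization.AtPrime p
  let z := locMk p.primeCompl M u
  let q : A →ₗ[A] (locF p.primeCompl).obj M := LinearMap.toSpanSingleton A _ z
  have hz : ∀ (a : R) (s : p.primeCompl), (s : R) • q (IsLocalization.mk' A a s) =
      locMk p.primeCompl M (a • u) := by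
    intro a s
    rw [map_smul, ← algebraMap_smul A (s : R) (q _), ← map_smul, smul_eq_mul,
      IsLocalization.mk'_spec']
    exact algebraMap_smul A a z
  have hs : ∀ (s : p.primeCompl) (x y : (locF p.primeCompl).obj M),
      (s : R) • x = (s : R) • y → x = y := fun s x y h =>
    IsLocalizedModule.smul_injective (locMk p.primeCompl M) s h
  have hq : Function.Surjective q := by
    intro x
    obtain ⟨⟨m, s⟩, hx⟩ := IsLocalizedModule.surj p.primeCompl (locMk p.primeCompl M) x
    obtain ⟨r, rfl⟩ := hu m
    exact ⟨IsLocalization.mk' A r s, hs s _ _ ((hz r s).trans hx.symm)⟩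
  have hk : LinearMap.ker q = maximalIdeal A := by
    ext a
    obtain ⟨a, s, rfl⟩ := IsLocalization.exists_mk'_eq p.primeCompl a
    rw [IsLocalization.AtPrime.mk'_mem_maximal_iff A p, LinearMap.mem_ker]
    constructor
    · intro h
      have h1 := hz a s
      rw [h, smul_zero] at h1
      obtain ⟨t, ht⟩ := (IsLocalizedModule.eq_zero_iff p.primeCompl
        (locMk p.primeCompl M)).1 h1.symm
      have h2 : ((t : R) * a) • u = 0 := (mul_smul _ _ _).trans ht
      exact (Ideal.IsPrime.mem_or_mem ‹_› ((hu0 _).1 h2)).resolve_left t.2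
    · intro h
      apply hs s
      rw [hz, (hu0 a).2 h, map_zero, smul_zero]
  exact ⟨(((Submodule.quotEquivOfEq _ _ hk.symm).trans
    (q.quotKerEquivOfSurjective hq)).toModuleIso).symm⟩

/-- The localization of `R/p` at `p` is the residue field of `R_p`. -/
theorem loc_residue : Nonempty ((locF p.primeCompl).obj (ModuleCat.of R (R ⧸ p)) ≅
    kk (Localization.AtPrime p)) := by
  refine loc_residue_aux p (ModuleCat.of R (R ⧸ p)) (1 : R ⧸ p) (fun m => ?_) fun r => ?_
  · obtain ⟨r, rfl⟩ := Ideal.Quotient.mk_surjective (I := p) m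
    exact ⟨r, (congrArg (Ideal.Quotient.mk p) (mul_one r)).symm⟩
  · rw [← Ideal.Quotient.eq_zero_iff_mem]
    exact ⟨fun h => (congrArg (Ideal.Quotient.mk p) (mul_one r)).symm.trans h,
      fun h => (congrArg (Ideal.Quotient.mk p) (mul_one r)).trans h⟩

end bridge
end PD

/-! ### Dual Bass numbers -/

namespace PD
open Abelian IsLocalRing

section final
variable {R : Type u} [CommRing R]

theorem torM_congr (M : Type u) [AddCommGroup M] [Module R M] {N N' : Type u} [AddCommGroup N]
    [Module R N] [AddCommGroup N'] [Module R N'] (e : N ≃ₗ[R] N') (i : ℕ) :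
    Nonempty (torM R M N i ≃ₗ[R] torM R M N' i) :=
  ⟨(((Tor (ModuleCat.{u} R) i).obj (ModuleCat.of R M)).mapIso e.toModuleIso).toLinearEquiv⟩

theorem kk_smul_ext {A : Type u} [CommRing A] [IsLocalRing A] (C : ModuleCat.{u} A) (i : ℕ)
    (a : A) (ha : a ∈ maximalIdeal A) (e : Ext (kk A) C i) : a • e = 0 := by
  have h : (0 : kk A ⟶ kk A) = a • 𝟙 (kk A) := by
    refine ModuleCat.hom_ext (LinearMap.ext fun y => ?_)
    obtain ⟨b, hb⟩ := Ideal.Quotient.mk_surjective (I := maximalIdeal A) y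
    rw [← hb]
    exact (Ideal.Quotient.eq_zero_iff_mem.2 ((maximalIdeal A).mul_mem_right b ha)).symm
  rw [← mk₀_comp_of_eq_smul a h e]
  simp

variable [IsNoetherianRing R] (p : Ideal R) [p.IsPrime]

/-- `π_i(p, Hom_R(C, E))` is the length of `Hom(Ext^i(k(p), C_p), Hom_R(R_p, E))`. -/
theorem dualBass_eq (C E : Type u) [AddCommGroup C] [Module R C] [AddCommGroup E] [Module R E]
    (hE : Module.Injective R E) (i : ℕ) :
    dualBassNumber R p i (C →ₗ[R] E) = mLength (Localization.AtPrime p)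
      (Ext (kk (Localization.AtPrime p)) (ModuleCat.of (Localization.AtPrime p)
        (LocalizedModule p.primeCompl C)) i →ₗ[Localization.AtPrime p]
          (Localization.AtPrime p →ₗ[R] E)) := by
  obtain ⟨e₁⟩ := homDom_adj (Localization.AtPrime p) p.primeCompl C E
    (LocalizedModule p.primeCompl C) (LocalizedModule.mkLinearMap p.primeCompl C)
  obtain ⟨e₂⟩ := torM_congr (ResidueField (Localization.AtPrime p)) e₁ i
  obtain ⟨e₃⟩ := tor_ext (ModuleCat.of (Localization.AtPrime p)
        (LocalizedModule p.primeCompl C)) (Localization.AtPrime p →ₗ[R] E)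
        (homDom_injective _ E hE) (ResidueField (Localization.AtPrime p)) i
  exact mLength_eq (e₂.trans e₃)

/-- The height of `p` is finite and equals the dimension of `R_p`. -/
theorem primeHeight_finite : ∃ d : ℕ, primeHeight R p = d ∧
    ringKrullDim (Localization.AtPrime p) = d := by
  have h1 : primeHeight R p = p.height := (PrimeSpectrum.height_eq_orderHeight ⟨p, ‹_›⟩).symm
  have h2 : p.height ≠ ⊤ := Ideal.height_ne_top (Ideal.IsPrime.ne_top ‹_›)
  obtain ⟨d, hd⟩ := ENat.ne_top_iff_exists.1 h2
  refine ⟨d, h1.trans hd.symm, ?_⟩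
  rw [IsLocalization.AtPrime.ringKrullDim_eq_height p, ← hd]
  rfl

/-- The local computation of the dual Bass numbers. -/
theorem dualBass_of_vanish (C : Type u) [AddCommGroup C] [Module R C] (hC : IsSemidualizing R C)
    (n : ℕ) (hn : ∀ i > n, Subsingleton (Ext (kk (Localization.AtPrime p))
      ((locF p.primeCompl).obj (ModuleCat.of R C)) i))
    (E : Type u) [AddCommGroup E] [Module R E] (hE : IsInjectiveHull R (R ⧸ p) E) (i : ℕ) :
    dualBassNumber R p i (C →ₗ[R] E) = if (i : ℕ∞) = primeHeight R p then 1 else 0 := by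
  obtain ⟨d, hd, hd'⟩ := primeHeight_finite p
  obtain ⟨α⟩ := locIso p.primeCompl (ModuleCat.of R C)
  have hSD := ((SD.of_semidualizing hC).loc p.primeCompl).iso α
  obtain ⟨h1, e, he0, he⟩ := main_local d (Localization.AtPrime p) _ hd' hSD
    ⟨n, fun i hi => sub_of_iso (Iso.refl _) α i (hn i hi)⟩
  obtain ⟨ε, hε0, hε, hεs⟩ := hull_socle p hE
  rw [dualBass_eq p C E hE.1, hd]
  by_cases hi : i = d
  · subst hi
    rw [if_pos rfl]
    exact mLength_simple (hom_simple hε0 hε hεs _ e he0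
      (fun a ha => kk_smul_ext _ _ a ha e) he)
  · rw [if_neg (by exact_mod_cast hi), mLength_zero]
    have := h1 i hi
    exact ⟨fun f g => LinearMap.ext fun x => by
      rw [Subsingleton.elim x 0, map_zero, map_zero]⟩

theorem injDim_lt_top_iff {A : Type u} [CommRing A] (C : Type u) [AddCommGroup C] [Module A C] :
    injDim A C < ⊤ ↔ ∃ n : ℕ, ∀ (N : Type u) (_ : AddCommGroup N) (_ : Module A N) (i : ℕ),
      n < i → Subsingleton (extM A N C i) := by
  unfold injDim
  rw [sInf_lt_iff]
  constructor
  · rintro ⟨n, hn, hlt⟩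
    obtain ⟨n, rfl⟩ := ENat.ne_top_iff_exists.1 hlt.ne
    exact ⟨n, fun N _ _ i hi => hn N _ _ i (by exact_mod_cast hi)⟩
  · rintro ⟨n, hn⟩
    exact ⟨n, fun N _ _ i hi => hn N _ _ i (by exact_mod_cast hi), ENat.natCast_lt_top n⟩

/-- If `C` is pointwise dualizing, `Ext^i(k(p), C_p)` vanishes for large `i`, by localizing the
corresponding vanishing at a maximal ideal above `p`. -/
theorem forward (C : Type u) [AddCommGroup C] [Module R C] (hC : IsPointwiseDualizing R C) :
    ∃ n : ℕ, ∀ i > n, Subsingleton (Ext (kk (Localization.AtPrime p))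
      ((locF p.primeCompl).obj (ModuleCat.of R C)) i) := by
  obtain ⟨m, hm, hpm⟩ := Ideal.exists_le_maximal p (Ideal.IsPrime.ne_top ‹_›)
  obtain ⟨n, hn⟩ := (injDim_lt_top_iff _).1 (hC.2 m hm).2
  obtain ⟨α⟩ := locIso m.primeCompl (ModuleCat.of R C)
  obtain ⟨β⟩ := loc_residue p
  refine ⟨n, fun i hi => ?_⟩
  obtain ⟨i, rfl⟩ := Nat.exists_eq_succ_of_ne_zero (by omega : i ≠ 0)
  have h1 : Subsingleton (Ext ((locF m.primeCompl).obj (ModuleCat.of R (R ⧸ p)))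
      ((locF m.primeCompl).obj (ModuleCat.of R C)) (i + 1)) :=
    sub_of_iso (Iso.refl _) α.symm (i + 1) ((subsingleton_extM_iff _ _ _ i).1 (hn
      ((locF m.primeCompl).obj (ModuleCat.of R (R ⧸ p))) inferInstance inferInstance (i + 1) hi))
  rw [loc_sub_iff] at h1
  refine sub_of_iso β (Iso.refl _) (i + 1) ((loc_sub_iff p.primeCompl _ _ _).2 fun e => ?_)
  obtain ⟨s, hs, hse⟩ := h1 e
  exact ⟨s, fun h => hs (hpm h), hse⟩

/-- If the dual Bass numbers at `p` have the prescribed values, `C_p` has finite injective dimension: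
the numbers force `Ext^i(k(p), C_p) = 0` for `i > ht(p)`. -/
theorem backward (C : Type u) [AddCommGroup C] [Module R C] (hC : IsSemidualizing R C)
    (h : ∀ (E : Type u) (_ : AddCommGroup E) (_ : Module R E),
      IsInjectiveHull R (R ⧸ p) E → ∀ i : ℕ,
        dualBassNumber R p i (C →ₗ[R] E) = if (i : ℕ∞) = primeHeight R p then 1 else 0) :
    IsDualizing (Localization.AtPrime p) (LocalizedModule p.primeCompl C) := by
  obtain ⟨d, hd, hd'⟩ := primeHeight_finite p
  obtain ⟨α⟩ := locIso p.primeCompl (ModuleCat.of R C)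
  have hSD : SD (ModuleCat.of (Localization.AtPrime p) (LocalizedModule p.primeCompl C)) :=
    ((SD.of_semidualizing hC).loc p.primeCompl).iso α
  have := hSD.fin
  refine ⟨hSD.semidualizing, ?_⟩
  obtain ⟨E, _, _, hE⟩ := exists_hull (R := R) (R ⧸ p)
  obtain ⟨ε, hε0, hε, -⟩ := hull_socle p hE
  have h1 : ∀ i ≥ d + 1, Subsingleton (Ext (kk (Localization.AtPrime p))
      (ModuleCat.of (Localization.AtPrime p) (LocalizedModule p.primeCompl C)) i) := by
    intro i hi
    have h2 := h E _ _ hE i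
    rw [dualBass_eq p C E hE.1, hd, if_neg (by exact_mod_cast (by omega : i ≠ d)),
      mLength_zero] at h2
    exact hom_subsingleton hε0 hε _ h2
  have h3 := sub_cyclic_of_residue _ (d + 1) h1
  have h4 := sub_cyclic_of_sub_cyclic d _ fun I => h3 I (d + 1) le_rfl
  refine (injDim_lt_top_iff _).2 ⟨d, fun N _ _ i hi => ?_⟩
  obtain ⟨i, rfl⟩ := Nat.exists_eq_succ_of_ne_zero (by omega : i ≠ 0)
  exact (subsingleton_extM_iff _ _ _ i).2 (HasInjectiveDimensionLT.subsingleton _ (d + 1) (i + 1) (by omega) _)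

end final
end PD

/-- A semidualizing module `C` over a Noetherian ring `R` is pointwise dualizing
iff for every prime `p`, `π_i(p, Hom_R(C, E(R/p)))` is `1` for `i = ht(p)` and `0` otherwise. -/
theorem pointwiseDualizing_iff_dualBass_hom_injectiveHull (R : Type u) [CommRing R]
    [IsNoetherianRing R] (C : Type u) [AddCommGroup C] [Module R C]
    (hC : IsSemidualizing R C) :
    IsPointwiseDualizing R C ↔
      ∀ (p : Ideal R) [p.IsPrime], ∀ (E : Type u) (_ : AddCommGroup E) (_ : Module R E),
        IsInjectiveHull R (R ⧸ p) E → ∀ i : ℕ,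
          dualBassNumber R p i (C →ₗ[R] E) =
            if (i : ℕ∞) = primeHeight R p then 1 else 0 := by
  refine ⟨fun h p _ E _ _ hE i => ?_, fun h => ⟨hC, fun p _ _ => PD.backward p C hC (h p)⟩⟩
  obtain ⟨n, hn⟩ := PD.forward p C h
  exact PD.dualBass_of_vanish p C hC n hn E hE i
end

section
/- Let (R,m) be a Cohen-Macaulay commutative Noetherian local ring of dimension d. Then Tor_i^R(H^d_m(R), H^d_m(R)) is isomorphic to H^d_m(R) when i = d, and Tor_i^R(H^d_m(R), H^d_m(R)) = 0 when i ≠ d. -/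
open CategoryTheory

universe u

/-!
Since the depth of `R` is its dimension `d`, the maximal ideal `m` contains a regular sequence
`x₁, …, x_d` (`TorTop.exists_isWeaklyRegular_of_ext`), and this sequence generates an `m`-primary
ideal. Put `M₀ = R` and `M_{k+1} = M_k[1/x_{k+1}] / M_k`. The remaining elements of the sequence stay
regular on each `M_k` (`TorTop.IsCechSequence.isWeaklyRegular_right`), so the sequences
`0 → M_k → M_k[1/x_{k+1}] → M_{k+1} → 0` are exact; let `H = M_d`, which is `m`-power torsion.

The middle terms are invisible to torsion modules: as `x_{k+1}` acts bijectively on them,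
`Ext^i(R / m^n, M_k[1/x_{k+1}]) = 0`, and `Tor_i(M_k[1/x_{k+1}], N) = 0` for every `x_{k+1}`-power
torsion module `N`. Hence the long exact sequences give, in `TorTop.exists_iterated_cech`,

* `Ext^{i+d}(R / m^n, R) ≅ Ext^i(R / m^n, H)` compatibly in `n`, so that in the colimit
  `H^d_m(R) ≅ colim Hom(R / m^n, H) ≅ H`;
* `Tor_{i+d}(H, N) ≅ Tor_i(R, N)` for `m`-power torsion `N`, and `Tor_i(H, N) = 0` for `i < d`.

Taking `N = H` proves the claim, since `Tor_0(R, H) = H` and `Tor_i(R, H) = 0` for `i > 0`.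
-/

/-! ### Long exact sequences and vanishing for left derived functors -/

namespace TorTop
open Limits

section Derived

universe v₁ v₂ u₁ u₂

variable {C : Type u₁} [Category.{v₁} C] [Abelian C] [HasProjectiveResolutions C]
  {D : Type u₂} [Category.{v₂} D] [Abelian D]
  {F₁ F₂ F₃ : C ⥤ D} [F₁.Additive] [F₂.Additive] [F₃.Additive]
  (α : F₁ ⟶ F₂) (β : F₂ ⟶ F₃) (w : α ≫ β = 0)

omit [Abelian D] in
/-- Pastes three commutative squares into one. Stated for arbitrary objects, so that the naturality
of `connecting` can be checked up to definitional equality only. -/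
lemma paste_squares {A A' B B' E E' K K' : D} {x : A ⟶ A'} {q₃ : A' ⟶ B'} {p₃ : A ⟶ B}
    {m₃ : B ⟶ B'} {m₁ : E ⟶ E'} {δ : B ⟶ E} {δ' : B' ⟶ E'} {p₁ : E ⟶ K} {q₁ : E' ⟶ K'}
    {y : K ⟶ K'} (e₁ : x ≫ q₃ = p₃ ≫ m₃) (key : δ ≫ m₁ = m₃ ≫ δ') (e₂ : p₁ ≫ y = m₁ ≫ q₁) :
    x ≫ q₃ ≫ δ' ≫ q₁ = (p₃ ≫ δ ≫ p₁) ≫ y := by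
  simp only [Category.assoc, e₂]
  rw [← Category.assoc x, e₁, Category.assoc, ← Category.assoc δ, key, Category.assoc]

/-- The sequence `F₁ P ⟶ F₂ P ⟶ F₃ P` of complexes obtained from `F₁ ⟶ F₂ ⟶ F₃`. -/
noncomputable def complexSeq (P : ChainComplex C ℕ) : ShortComplex (ChainComplex D ℕ) :=
  ShortComplex.mk ((NatTrans.mapHomologicalComplex α _).app P)
    ((NatTrans.mapHomologicalComplex β _).app P) (by
      ext n
      exact congr_app w (P.X n))

/-- Functoriality of `complexSeq` in the complex. -/
noncomputable def complexSeqMap {P Q : ChainComplex C ℕ} (φ : P ⟶ Q) :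
    complexSeq α β w P ⟶ complexSeq α β w Q where
  τ₁ := (F₁.mapHomologicalComplex _).map φ
  τ₂ := (F₂.mapHomologicalComplex _).map φ
  τ₃ := (F₃.mapHomologicalComplex _).map φ
  comm₁₂ := (NatTrans.mapHomologicalComplex α _).naturality φ
  comm₂₃ := (NatTrans.mapHomologicalComplex β _).naturality φ

variable (h : ∀ (X : C) [Projective X],
  (ShortComplex.mk (α.app X) (β.app X) (by simpa using congr_app w X)).ShortExact)

include h in
omit [HasProjectiveResolutions C] in
lemma complexSeq_shortExact (P : ChainComplex C ℕ) [∀ n, Projective (P.X n)] :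
    (complexSeq α β w P).ShortExact :=
  HomologicalComplex.shortExact_of_degreewise_shortExact _ fun n ↦ h (P.X n)

/-- The connecting morphism `L_{n+1} F₃ ⟶ L_n F₁` of a sequence of functors `F₁ ⟶ F₂ ⟶ F₃` that is
short exact on projective objects, natural in the argument of the functors. -/
noncomputable def connecting (n : ℕ) : F₃.leftDerived (n + 1) ⟶ F₁.leftDerived n where
  app X :=
    let P := projectiveResolution X
    (P.isoLeftDerivedObj F₃ (n + 1)).hom ≫
      (complexSeq_shortExact α β w h P.complex).δ (n + 1) n (ComplexShape.down_mk _ _ rfl) ≫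
      (P.isoLeftDerivedObj F₁ n).inv
  naturality X Y f := by
    let P := projectiveResolution X
    let Q := projectiveResolution Y
    let φ := ProjectiveResolution.lift f P Q
    have comm : φ.f 0 ≫ Q.π.f 0 = P.π.f 0 ≫ f := by
      exact ProjectiveResolution.lift_commutes_zero f P Q
    have key := HomologicalComplex.HomologySequence.δ_naturality (complexSeqMap α β w φ)
      (complexSeq_shortExact α β w h P.complex) (complexSeq_shortExact α β w h Q.complex)
      (n + 1) n (ComplexShape.down_mk _ _ rfl)
    have e₁ := ProjectiveResolution.isoLeftDerivedObj_hom_naturality f P Q φ comm F₃ (n + 1)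
    have e₂ := ProjectiveResolution.isoLeftDerivedObj_inv_naturality f P Q φ comm F₁ n
    exact paste_squares e₁ key e₂

/-- In the long exact sequence, the connecting morphism at `X` is an isomorphism once the derived
functors of the middle functor vanish at `X`. -/
lemma isIso_connecting_app (n : ℕ) (X : C) (h₁ : IsZero ((F₂.leftDerived (n + 1)).obj X))
    (h₀ : IsZero ((F₂.leftDerived n).obj X)) : IsIso ((connecting α β w h n).app X) := by
  let P := projectiveResolution X
  have : IsIso ((complexSeq_shortExact α β w h P.complex).δ (n + 1) n (ComplexShape.down_mk _ _ rfl)) :=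
    (complexSeq_shortExact α β w h P.complex).isIso_δ _ _ _
      (h₁.of_iso (P.isoLeftDerivedObj F₂ (n + 1)).symm)
      (h₀.of_iso (P.isoLeftDerivedObj F₂ n).symm)
  exact IsIso.comp_isIso' (Iso.isIso_hom (P.isoLeftDerivedObj F₃ (n + 1)))
    (IsIso.comp_isIso' this (Iso.isIso_inv (P.isoLeftDerivedObj F₁ n)))

include h in
/-- The part `L_{n+1} F₃ X ⟶ L_n F₁ X ⟶ L_n F₂ X` of the long exact sequence. -/
lemma isZero_leftDerived₁ (n : ℕ) (X : C) (h₃ : IsZero ((F₃.leftDerived (n + 1)).obj X))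
    (h₂ : IsZero ((F₂.leftDerived n).obj X)) : IsZero ((F₁.leftDerived n).obj X) := by
  let P := projectiveResolution X
  refine IsZero.of_iso ?_ (P.isoLeftDerivedObj F₁ n)
  refine ((complexSeq_shortExact α β w h P.complex).homology_exact₁ (n + 1) n
    (ComplexShape.down_mk _ _ rfl)).isZero_of_both_zeros ?_ ?_
  · exact (h₃.of_iso (P.isoLeftDerivedObj F₃ (n + 1)).symm).eq_of_src _ _
  · exact (h₂.of_iso (P.isoLeftDerivedObj F₂ n).symm).eq_of_tgt _ _

lemma isZero_leftDerived_of_exact (F : C ⥤ D) [F.Additive]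
    (hF : ∀ S : ShortComplex C, S.Exact → (S.map F).Exact) (n : ℕ) (X : C) :
    IsZero ((F.leftDerived (n + 1)).obj X) := by
  let P := projectiveResolution X
  refine IsZero.of_iso ?_ (P.isoLeftDerivedObj F (n + 1))
  refine (HomologicalComplex.exactAt_iff_isZero_homology _ _).1 ?_
  exact hF _ ((HomologicalComplex.exactAt_iff _ _).1 (P.complex_exactAt_succ n))

omit [HasProjectiveResolutions C] in
/-- If the scalar `t` acts invertibly on the functor `F` and as zero on `X`, then `t` is both
invertible and zero on `L_n F X`, which therefore vanishes. -/
lemma isZero_leftDerived_of_smul (A : Type*) [CommRing A] [Linear A C]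
    [HasProjectiveResolutions C]
    (F : C ⥤ D) [F.Additive] (t : A) (τ : F ⟶ F)
    (hτ : ∀ X, τ.app X = F.map (t • 𝟙 X)) [IsIso τ] (n : ℕ) (X : C)
    (hX : t • 𝟙 X = 0) : IsZero ((F.leftDerived n).obj X) := by
  let P := projectiveResolution X
  have e₁ : (NatTrans.leftDerived τ n).app X = (F.leftDerived n).map (t • 𝟙 X) := by
    rw [ProjectiveResolution.leftDerived_app_eq τ P n,
      Functor.leftDerived_map_eq F n (t • 𝟙 X) (P := P) (Q := P) (t • 𝟙 P.complex) (by
        ext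
        simp only [HomologicalComplex.comp_f, HomologicalComplex.smul_f_apply, Linear.smul_comp, Category.id_comp]
        rw [ChainComplex.single₀_map_f_zero]
        exact (congrArg (t • ·) (Category.comp_id (Y := X) _).symm).trans
          (Linear.comp_smul (Y := X) _ _ _ _ _).symm)]
    congr 3
    ext i
    exact hτ _
  have : IsIso (NatTrans.leftDerived τ n) :=
    ⟨NatTrans.leftDerived (inv τ) n, by simp [← NatTrans.leftDerived_comp],
      by simp [← NatTrans.leftDerived_comp]⟩
  have : IsIso ((NatTrans.leftDerived τ n).app X) := inferInstance
  rw [e₁, hX] at this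
  refine (IsZero.iff_id_eq_zero _).2 ?_
  have h0 : (F.leftDerived n).map (0 : X ⟶ X) = 0 := by
    rw [Functor.leftDerived_map_eq F n (0 : X ⟶ X) (P := P) (Q := P) 0 (by simp)]
    simp only [Functor.map_zero, zero_comp, comp_zero]
  rw [h0] at this
  have h2 := IsIso.hom_inv_id (I := this)
  rw [zero_comp] at h2
  exact h2.symm

end Derived
end TorTop

/-! ### Tor and Ext of modules -/

namespace TorTop
open Limits MonoidalCategory

section TorExt
variable {R : Type u} [CommRing R]

/-- The functor `Tor_i(X, -)`, definitionally `(Tor (ModuleCat R) i).obj X`. -/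
noncomputable abbrev torF (X : ModuleCat.{u} R) (i : ℕ) : ModuleCat.{u} R ⥤ ModuleCat.{u} R :=
  ((tensoringLeft (ModuleCat.{u} R)).obj X).leftDerived i

/-- The functor `Hom(-, Y)`, with values in the opposite category. Its left derived functors are
(up to `op`) the modules `Ext^i(-, Y)` underlying `CategoryTheory.Ext`. -/
noncomputable abbrev homOp (Y : ModuleCat.{u} R) : ModuleCat.{u} R ⥤ (ModuleCat.{u} R)ᵒᵖ :=
  ((linearYoneda R (ModuleCat.{u} R)).obj Y).rightOp

lemma tensor_shortExact {S : ShortComplex (ModuleCat.{u} R)} (hS : S.ShortExact)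
    (P : ModuleCat.{u} R) [Projective P] :
    (S.map ((tensoringRight (ModuleCat.{u} R)).obj P)).ShortExact := by
  have : Module.Projective R P := P.projective_of_module_projective
  have := Module.Flat.rTensor_shortComplex_exact P S hS.exact
  have h1 := hS.mono_f
  have h2 := hS.epi_g
  refine ShortComplex.ShortExact.mk' this ?_ ?_
  · rw [ModuleCat.mono_iff_injective] at h1 ⊢
    exact Module.Flat.rTensor_preserves_injective_linearMap (M := P) S.f.hom h1
  · rw [ModuleCat.epi_iff_surjective] at h2 ⊢
    exact LinearMap.rTensor_surjective P h2

lemma hom_shortExact {S : ShortComplex (ModuleCat.{u} R)} (hS : S.ShortExact)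
    (P : ModuleCat.{u} R) [Projective P] :
    (S.map ((linearCoyoneda R (ModuleCat.{u} R)).obj (Opposite.op P))).ShortExact := by
  have h1 := hS.mono_f
  have h2 := hS.epi_g
  refine ShortComplex.ShortExact.mk' ?_ ?_ ?_
  · rw [ShortComplex.moduleCat_exact_iff]
    intro (f : P ⟶ S.X₂) (hf : f ≫ S.g = 0)
    exact ⟨hS.exact.lift f hf, hS.exact.lift_f f hf⟩
  · rw [ModuleCat.mono_iff_injective]
    intro (f : P ⟶ S.X₁) (g : P ⟶ S.X₁) (hfg : f ≫ S.f = g ≫ S.f)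
    exact (cancel_mono _).1 hfg
  · rw [ModuleCat.epi_iff_surjective]
    intro (f : P ⟶ S.X₃)
    exact ⟨Projective.factorThru f S.g, Projective.factorThru_comp f S.g⟩

lemma tensor_seq_zero (S : ShortComplex (ModuleCat.{u} R)) :
    (tensoringLeft (ModuleCat.{u} R)).map S.f ≫ (tensoringLeft (ModuleCat.{u} R)).map S.g = 0 := by
  ext X : 2
  exact (S.map ((tensoringRight (ModuleCat.{u} R)).obj X)).zero

lemma hom_seq_zero (S : ShortComplex (ModuleCat.{u} R)) :
    NatTrans.rightOp ((linearYoneda R (ModuleCat.{u} R)).map S.g) ≫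
      NatTrans.rightOp ((linearYoneda R (ModuleCat.{u} R)).map S.f) = 0 := by
  ext X : 2
  exact (S.map ((linearCoyoneda R (ModuleCat.{u} R)).obj (Opposite.op X))).op.zero

/-- The connecting morphism `Tor_{n+1}(X₃, -) ⟶ Tor_n(X₁, -)`. -/
noncomputable def torConnecting {S : ShortComplex (ModuleCat.{u} R)} (hS : S.ShortExact) (n : ℕ) :
    torF S.X₃ (n + 1) ⟶ torF S.X₁ n :=
  connecting _ _ (tensor_seq_zero S) (fun P _ ↦ tensor_shortExact hS P) n

/-- The connecting morphism `Ext^n(-, X₃) ⟶ Ext^{n+1}(-, X₁)`, written in the opposite category. -/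
noncomputable def extConnecting {S : ShortComplex (ModuleCat.{u} R)} (hS : S.ShortExact) (n : ℕ) :
    (homOp S.X₁).leftDerived (n + 1) ⟶ (homOp S.X₃).leftDerived n :=
  connecting _ _ (hom_seq_zero S) (fun P _ ↦ (hom_shortExact hS P).op) n

lemma isIso_torConnecting {S : ShortComplex (ModuleCat.{u} R)} (hS : S.ShortExact) (n : ℕ)
    (N : ModuleCat.{u} R) (h : ∀ i, IsZero ((torF S.X₂ i).obj N)) :
    IsIso ((torConnecting hS n).app N) :=
  isIso_connecting_app _ _ _ _ _ _ (h _) (h _)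

lemma isIso_extConnecting {S : ShortComplex (ModuleCat.{u} R)} (hS : S.ShortExact) (n : ℕ)
    (N : ModuleCat.{u} R) (h : ∀ i, IsZero (((homOp S.X₂).leftDerived i).obj N)) :
    IsIso ((extConnecting hS n).app N) :=
  isIso_connecting_app _ _ _ _ _ _ (h _) (h _)

/-- The part `Ext^n(N, X₂) ⟶ Ext^n(N, X₃) ⟶ Ext^{n+1}(N, X₁)` of the long exact sequence. -/
lemma isZero_ext₃ {S : ShortComplex (ModuleCat.{u} R)} (hS : S.ShortExact) (n : ℕ)
    (N : ModuleCat.{u} R) (h₁ : IsZero (((homOp S.X₁).leftDerived (n + 1)).obj N))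
    (h₂ : IsZero (((homOp S.X₂).leftDerived n).obj N)) :
    IsZero (((homOp S.X₃).leftDerived n).obj N) :=
  isZero_leftDerived₁ _ _ (hom_seq_zero S) (fun P _ ↦ (hom_shortExact hS P).op) n N h₁ h₂

lemma isZero_tor_of_flat (X N : ModuleCat.{u} R) [Module.Flat R X] (n : ℕ) :
    IsZero ((torF X (n + 1)).obj N) :=
  isZero_leftDerived_of_exact _ (fun S hS ↦ Module.Flat.lTensor_shortComplex_exact X S hS) n N

/-- `Tor_0(X, -)` is the tensor product with `X`. -/
noncomputable def torZeroIso (X : ModuleCat.{u} R) :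
    torF X 0 ≅ (tensoringLeft (ModuleCat.{u} R)).obj X :=
  haveI : PreservesFiniteColimits ((tensoringLeft (ModuleCat.{u} R)).obj X) :=
    inferInstanceAs (PreservesFiniteColimits (tensorLeft X))
  Functor.leftDerivedZeroIsoSelf _

/-- `Ext^0(-, Y)` is `Hom(-, Y)`. -/
noncomputable def extZeroIso (Y : ModuleCat.{u} R) :
    (homOp Y).leftDerived 0 ≅ homOp Y :=
  haveI : PreservesFiniteColimits (homOp Y) := by
    have : PreservesFiniteLimits ((linearYoneda R (ModuleCat.{u} R)).obj Y ⋙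
        CategoryTheory.forget (ModuleCat.{u} R)) :=
      inferInstanceAs (PreservesFiniteLimits (yoneda.obj Y))
    have : PreservesFiniteLimits ((linearYoneda R (ModuleCat.{u} R)).obj Y) :=
      preservesFiniteLimits_of_reflects_of_preserves _ (CategoryTheory.forget (ModuleCat.{u} R))
    exact preservesFiniteColimits_rightOp _
  Functor.leftDerivedZeroIsoSelf _

/-- `Ext^i(N, Y)` vanishes when `x` acts bijectively on `Y` and a power of `x` kills `N`: the action of
`x ^ n` on `Ext^i(N, Y)` can be computed through either argument. -/
lemma isZero_ext_of_bijective (Y N : ModuleCat.{u} R) (x : R) (n i : ℕ)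
    (hY : Function.Bijective (fun y : Y ↦ x • y)) (hN : ∀ z : N, x ^ n • z = 0) :
    IsZero (((homOp Y).leftDerived i).obj N) := by
  have : IsIso (x ^ n • 𝟙 Y) := by
    rw [ConcreteCategory.isIso_iff_bijective]
    have := hY.iterate n
    convert this using 1
    ext y
    simp [smul_iterate]
  let τ : homOp Y ⟶ homOp Y :=
    NatTrans.rightOp ((linearYoneda R (ModuleCat.{u} R)).map (x ^ n • 𝟙 Y))
  have : IsIso τ := by
    refine ⟨NatTrans.rightOp ((linearYoneda R (ModuleCat.{u} R)).map (inv (x ^ n • 𝟙 Y))), ?_, ?_⟩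
    · change NatTrans.rightOp ((linearYoneda R (ModuleCat.{u} R)).map _ ≫
        (linearYoneda R (ModuleCat.{u} R)).map _) = _
      rw [← Functor.map_comp, IsIso.inv_hom_id, CategoryTheory.Functor.map_id]
      rfl
    · change NatTrans.rightOp ((linearYoneda R (ModuleCat.{u} R)).map _ ≫
        (linearYoneda R (ModuleCat.{u} R)).map _) = _
      rw [← Functor.map_comp, IsIso.hom_inv_id, CategoryTheory.Functor.map_id]
      rfl
  refine isZero_leftDerived_of_smul R (homOp Y) (x ^ n) τ (fun X ↦ ?_) i N ?_
  -- the two actions of `x ^ n` on `Hom(X, Y)` agree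
  · apply Quiver.Hom.unop_inj
    ext (f : X ⟶ Y) : 2
    change f ≫ (x ^ n • 𝟙 Y) = (x ^ n • 𝟙 X) ≫ f
    simp
  · ext z
    exact hN z

end TorExt
end TorTop

/-! ### Čech sequences and regular sequences -/

namespace TorTop
section Cech
open RingTheory.Sequence Pointwise

variable {R : Type u} [CommRing R]

lemma quotSMulTop_mk_eq_zero {x : R} {M : Type*} [AddCommGroup M] [Module R M] {m : M} :
    (Submodule.Quotient.mk m : QuotSMulTop x M) = 0 ↔ ∃ m', x • m' = m := by
  rw [Submodule.Quotient.mk_eq_zero, Submodule.mem_smul_pointwise_iff_exists]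
  simp

/-- Regularity of `y` on `M / xM`, phrased without quotients. -/
lemma isSMulRegular_quotSMulTop_iff {x y : R} {M : Type*} [AddCommGroup M] [Module R M] :
    IsSMulRegular (QuotSMulTop x M) y ↔ ∀ m m' : M, y • m = x • m' → ∃ m'', m = x • m'' := by
  rw [isSMulRegular_iff_right_eq_zero_of_smul]
  constructor
  · intro h m m' e
    have := h (Submodule.Quotient.mk m) (by
      rw [← Submodule.Quotient.mk_smul, quotSMulTop_mk_eq_zero]
      exact ⟨m', e.symm⟩)
    obtain ⟨m'', h⟩ := quotSMulTop_mk_eq_zero.1 this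
    exact ⟨m'', h.symm⟩
  · intro h q hq
    obtain ⟨m, rfl⟩ := Submodule.Quotient.mk_surjective _ q
    rw [← Submodule.Quotient.mk_smul, quotSMulTop_mk_eq_zero] at hq
    obtain ⟨m', hm'⟩ := hq
    obtain ⟨n, rfl⟩ := h m m' hm'.symm
    exact quotSMulTop_mk_eq_zero.2 ⟨n, rfl⟩

/-- The canonical map `(M / xM) / y(M / xM) → (M / yM) / x(M / yM)`. -/
def quotSwapHom (x y : R) (M : Type*) [AddCommGroup M] [Module R M] :
    QuotSMulTop y (QuotSMulTop x M) →ₗ[R] QuotSMulTop x (QuotSMulTop y M) :=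
  Submodule.liftQ _ (QuotSMulTop.map x (Submodule.mkQ (y • (⊤ : Submodule R M)))) (by
    intro q hq
    obtain ⟨q, -, rfl⟩ := (Submodule.mem_smul_pointwise_iff_exists _ _ _).1 hq
    obtain ⟨m, rfl⟩ := Submodule.Quotient.mk_surjective _ q
    rw [LinearMap.mem_ker, ← Submodule.Quotient.mk_smul]
    change Submodule.Quotient.mk (Submodule.Quotient.mk (y • m)) = _
    rw [quotSMulTop_mk_eq_zero.2 ⟨m, rfl⟩, Submodule.Quotient.mk_zero])

/-- Forming quotients by `x` and `y` commutes. -/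
def quotSwap (x y : R) (M : Type*) [AddCommGroup M] [Module R M] :
    QuotSMulTop y (QuotSMulTop x M) ≃ₗ[R] QuotSMulTop x (QuotSMulTop y M) :=
  LinearEquiv.ofLinearMap (quotSwapHom x y M) (quotSwapHom y x M) (by ext m; rfl) (by ext m; rfl)

/-- `0 → M → L → C → 0` is a short exact sequence that exhibits `L` as the localization of `M` at
the powers of `x`, so that `C` is the first local cohomology of `M` with support in `(x)`. -/
structure IsCechSequence (x : R) {M L C : Type*} [AddCommGroup M] [Module R M] [AddCommGroup L]
    [Module R L] [AddCommGroup C] [Module R C] (f : M →ₗ[R] L) (g : L →ₗ[R] C) : Prop where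
  injective : Function.Injective f
  exact : Function.Exact f g
  surjective : Function.Surjective g
  bijective : Function.Bijective (fun l : L ↦ x • l)
  torsion : ∀ l, ∃ (j : ℕ) (m : M), x ^ j • l = f m

namespace IsCechSequence

variable {x : R} {M L C : Type u} [AddCommGroup M] [Module R M] [AddCommGroup L]
    [Module R L] [AddCommGroup C] [Module R C] {f : M →ₗ[R] L} {g : L →ₗ[R] C}

/-- For `x` regular on `M`, the sequence `0 → M → M[1/x] → M[1/x] / M → 0` is a Čech sequence. -/
lemma exists_of_isSMulRegular (hx : IsSMulRegular M x) :
    ∃ (L C : ModuleCat.{u} R) (f : M →ₗ[R] L) (g : L →ₗ[R] C), IsCechSequence x f g := by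
  let f := LocalizedModule.mkLinearMap (Submonoid.powers x) M
  refine ⟨ModuleCat.of R (LocalizedModule (Submonoid.powers x) M),
    ModuleCat.of R (LocalizedModule (Submonoid.powers x) M ⧸ LinearMap.range f), f,
    (LinearMap.range f).mkQ, ⟨?_, ?_, ?_, ?_, ?_⟩⟩
  · intro a b hab
    obtain ⟨⟨_, n, rfl⟩, hc⟩ := (IsLocalizedModule.eq_iff_exists (Submonoid.powers x) f).1 hab
    exact hx.pow n hc
  · exact LinearMap.exact_map_mkQ_range f
  · exact Submodule.mkQ_surjective _
  · exact (Module.End.isUnit_iff _).1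
      (IsLocalizedModule.map_units f (⟨x, 1, pow_one x⟩ : Submonoid.powers x))
  · intro l
    obtain ⟨⟨m, ⟨_, n, rfl⟩⟩, hm⟩ := IsLocalizedModule.surj (Submonoid.powers x) f l
    exact ⟨n, m, hm⟩

lemma torsion_self (h : IsCechSequence x f g) (c : C) : ∃ j : ℕ, x ^ j • c = 0 := by
  obtain ⟨l, rfl⟩ := h.surjective c
  obtain ⟨j, m, e⟩ := h.torsion l
  exact ⟨j, by rw [← map_smul, e, h.exact.apply_apply_eq_zero]⟩

lemma pow_injective (h : IsCechSequence x f g) (j : ℕ) :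
    Function.Injective (fun l : L ↦ x ^ j • l) :=
  IsSMulRegular.pow j (show IsSMulRegular L x from h.bijective.1)

lemma torsion_of_torsion (h : IsCechSequence x f g) {y : R} (hy : ∀ m : M, ∃ j : ℕ, y ^ j • m = 0)
    (c : C) : ∃ j : ℕ, y ^ j • c = 0 := by
  obtain ⟨l, rfl⟩ := h.surjective c
  obtain ⟨j, m, e⟩ := h.torsion l
  obtain ⟨k, hk⟩ := hy m
  refine ⟨k, ?_⟩
  rw [← map_smul, h.pow_injective j (show x ^ j • (y ^ k • l) = x ^ j • 0 by
    rw [smul_comm, e, ← map_smul, hk, map_zero, smul_zero]), map_zero]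

lemma isSMulRegular_left (h : IsCechSequence x f g) : IsSMulRegular M x := by
  intro a b (hab : x • a = x • b)
  apply h.injective
  apply h.bijective.1
  simp only [← map_smul, hab]

/-- If `y` is regular on `M / xM`, then it is regular on all `M / x ^ j M`, hence on their union
`C = M[1/x] / M`. -/
lemma isSMulRegular_right (h : IsCechSequence x f g) {y : R}
    (hy : IsSMulRegular (QuotSMulTop x M) y) : IsSMulRegular C y := by
  rw [isSMulRegular_quotSMulTop_iff] at hy
  -- regularity of `y` on `M / x ^ j M`
  have key : ∀ (j : ℕ) (m m' : M), y • m = x ^ j • m' → ∃ m'', m = x ^ j • m'' := by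
    intro j
    induction j with
    | zero => exact fun m m' _ ↦ ⟨m, by simp⟩
    | succ j ih =>
      intro m m' e
      obtain ⟨n, rfl⟩ := hy m (x ^ j • m') (by rw [e, pow_succ', mul_smul])
      obtain ⟨n', rfl⟩ := ih n m' (h.isSMulRegular_left (by
        change x • y • n = x • x ^ j • m'
        rw [smul_comm, e, pow_succ', mul_smul]))
      exact ⟨n', by rw [pow_succ', mul_smul]⟩
  rw [isSMulRegular_iff_right_eq_zero_of_smul]
  intro c hc
  obtain ⟨l, rfl⟩ := h.surjective c
  rw [← map_smul] at hc
  obtain ⟨m', hm'⟩ := (h.exact _).1 hc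
  obtain ⟨j, m, e⟩ := h.torsion l
  obtain ⟨m'', rfl⟩ := key j m m' (h.injective (by
    rw [map_smul, map_smul, ← e, hm', smul_comm]))
  rw [map_smul] at e
  rw [h.pow_injective j e, h.exact.apply_apply_eq_zero]

/-- A Čech sequence stays one modulo an element that is regular on its right-hand term. -/
lemma quotSMulTop (h : IsCechSequence x f g) {y : R} (hy : IsSMulRegular C y) :
    IsCechSequence x (QuotSMulTop.map y f) (QuotSMulTop.map y g) where
  injective := by
    rw [← LinearMap.ker_eq_bot, LinearMap.ker_eq_bot']
    intro q hq
    obtain ⟨m, rfl⟩ := Submodule.Quotient.mk_surjective _ q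
    rw [QuotSMulTop.map_apply_mk, quotSMulTop_mk_eq_zero] at hq
    obtain ⟨l, hl⟩ := hq
    have : g l = 0 := hy (by
      change y • g l = y • 0
      rw [← map_smul, hl, h.exact.apply_apply_eq_zero, smul_zero])
    obtain ⟨m', rfl⟩ := (h.exact _).1 this
    rw [← map_smul] at hl
    exact quotSMulTop_mk_eq_zero.2 ⟨m', h.injective hl⟩
  exact := QuotSMulTop.map_exact _ h.exact h.surjective
  surjective := QuotSMulTop.map_surjective _ h.surjective
  bijective := by
    constructor
    · refine isSMulRegular_quotSMulTop_iff.2 fun l l' e ↦ ?_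
      obtain ⟨l'', rfl⟩ := h.bijective.2 l'
      exact ⟨l'', h.bijective.1 (by simpa only [smul_comm y] using e)⟩
    · intro q
      obtain ⟨l, rfl⟩ := Submodule.Quotient.mk_surjective _ q
      obtain ⟨l, rfl⟩ := h.bijective.2 l
      exact ⟨Submodule.Quotient.mk l, rfl⟩
  torsion := by
    intro q
    obtain ⟨l, rfl⟩ := Submodule.Quotient.mk_surjective _ q
    obtain ⟨j, m, e⟩ := h.torsion l
    exact ⟨j, Submodule.Quotient.mk m, by
      rw [QuotSMulTop.map_apply_mk, ← e, Submodule.Quotient.mk_smul]⟩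

/-- If `x, rs` is weakly regular on `M`, then `rs` is weakly regular on `M[1/x] / M`. -/
lemma isWeaklyRegular_right {rs : List R} (h : IsCechSequence x f g)
    (hrs : IsWeaklyRegular (QuotSMulTop x M) rs) : IsWeaklyRegular C rs := by
  induction rs generalizing M L C with
  | nil => exact .nil _ _
  | cons y rs ih =>
    rw [isWeaklyRegular_cons_iff] at hrs ⊢
    have hy := h.isSMulRegular_right hrs.1
    exact ⟨hy, ih (h.quotSMulTop hy) (((quotSwap x y M).isWeaklyRegular_congr rs).1 hrs.2)⟩

end IsCechSequence

/-- If `Ext^i(N, M) = 0` for all `i < d`, then the annihilator of `N` contains an `M`-regular sequence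
of length `d` (one direction of the theorem of Rees). -/
lemma exists_isWeaklyRegular_of_ext [IsNoetherianRing R] (I : Ideal R) (N : ModuleCat.{u} R)
    [Module.Finite R N] (hN : Module.annihilator R N = I) (d : ℕ) (M : ModuleCat.{u} R)
    [Module.Finite R M]
    (h : ∀ i < d, Limits.IsZero (((homOp M).leftDerived i).obj N)) :
    ∃ rs : List R, rs.length = d ∧ (∀ x ∈ rs, x ∈ I) ∧ IsWeaklyRegular M rs := by
  induction d generalizing M with
  | zero => exact ⟨[], rfl, by simp, .nil _ _⟩
  | succ d ih =>
    -- `Hom(N, M) = 0` provides an `M`-regular element `x` annihilating `N`, and the long exact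
    -- sequence of `x : M → M` passes the hypothesis on to `M / xM` with `d` lowered by one.
    have h0 := ((h 0 d.succ_pos).of_iso ((extZeroIso M).app N).symm).unop
    have : Subsingleton (N →ₗ[R] M) :=
      (ModuleCat.homLinearEquiv (S := R)).symm.toEquiv.subsingleton_congr.2
        (ModuleCat.subsingleton_of_isZero h0)
    obtain ⟨x, hxN, hx⟩ := IsSMulRegular.subsingleton_linearMap_iff.1 this
    obtain ⟨rs, hl, hI, hr⟩ := ih (ModuleCat.of R (QuotSMulTop x M)) fun i hi ↦
      isZero_ext₃ hx.smulShortComplex_shortExact i N (h (i + 1) (by omega)) (h i (by omega))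
    refine ⟨x :: rs, by simp [hl], ?_, (isWeaklyRegular_cons_iff _ _ _).2 ⟨hx, hr⟩⟩
    simpa [← hN] using ⟨hxN, fun a ha ↦ by simpa [← hN] using hI a ha⟩

end Cech
end TorTop

/-! ### Dimension shifting for Tor and local cohomology -/

namespace TorTop
open Limits

section Vanishing
open TensorProduct

variable {R : Type u} [CommRing R]

/-- Every element of `N` is killed by a power of `x`. -/
def IsPowTorsion (x : R) (N : Type*) [AddCommGroup N] [Module R N] : Prop :=
  ∀ n : N, ∃ j : ℕ, x ^ j • n = 0

lemma subsingleton_tensor_of_surjective {x : R} {X N : Type*} [AddCommGroup X] [Module R X]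
    [AddCommGroup N] [Module R N] (hX : Function.Surjective (fun a : X ↦ x • a))
    (hN : IsPowTorsion x N) : Subsingleton (X ⊗[R] N) := by
  refine subsingleton_of_forall_eq 0 fun t ↦ ?_
  induction t with
  | zero => rfl
  | add a b ha hb => rw [ha, hb, add_zero]
  | tmul a n =>
    obtain ⟨j, hj⟩ := hN n
    have : Function.Surjective (fun a : X ↦ x ^ j • a) := by
      have := hX.iterate j
      rwa [smul_iterate] at this
    obtain ⟨b, rfl⟩ := this a
    rw [TensorProduct.smul_tmul, hj, TensorProduct.tmul_zero]

lemma isZero_tor_zero {x : R} {X N : ModuleCat.{u} R}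
    (hX : Function.Surjective (fun a : X ↦ x • a)) (hN : IsPowTorsion x N) :
    IsZero ((torF X 0).obj N) := by
  refine IsZero.of_iso ?_ ((torZeroIso X).app N)
  have := subsingleton_tensor_of_surjective hX hN
  exact ModuleCat.isZero_of_iff_subsingleton.2 this

/-- A module on which `x` acts bijectively is a quotient of a flat module with the same property. -/
lemma exists_flat_cover {x : R} (X : ModuleCat.{u} R)
    (hX : Function.Bijective (fun a : X ↦ x • a)) :
    ∃ S : ShortComplex (ModuleCat.{u} R), S.ShortExact ∧ S.X₃ = X ∧ Module.Flat R S.X₂ ∧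
      Function.Bijective (fun a : S.X₂ ↦ x • a) ∧ Function.Bijective (fun a : S.X₁ ↦ x • a) := by
  let P := Submonoid.powers x
  have hu : ∀ s : P, IsUnit (algebraMap R (Module.End R X) s) := by
    rintro ⟨_, n, rfl⟩
    rw [map_pow]
    exact ((Module.End.isUnit_iff _).2 hX).pow n
  let π₀ : (X →₀ R) →ₗ[R] X := Finsupp.linearCombination R id
  obtain ⟨F, _, hF, π, hπ⟩ : ∃ (F : ModuleCat.{u} R) (_ : Module.Flat R F)
      (_ : Function.Bijective (fun a : F ↦ x • a)) (π : F →ₗ[R] X), Function.Surjective π := by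
    refine ⟨ModuleCat.of R (LocalizedModule P (X →₀ R)), ?_, ?_, LocalizedModule.lift P π₀ hu, ?_⟩
    · have := IsLocalization.flat (Localization P) P
      exact Module.Flat.trans R (Localization P) (LocalizedModule P (X →₀ R))
    · exact (Module.End.isUnit_iff _).1 (IsLocalizedModule.map_units
        (LocalizedModule.mkLinearMap P (X →₀ R)) (⟨x, 1, pow_one x⟩ : P))
    · intro a
      refine ⟨LocalizedModule.mk (Finsupp.single a 1) 1, ?_⟩
      have := LinearMap.congr_fun (LocalizedModule.lift_comp P π₀ hu) (Finsupp.single a 1)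
      refine Eq.trans this ?_
      simp [π₀]
  let S : ShortComplex (ModuleCat.{u} R) :=
    { X₁ := ModuleCat.of R (LinearMap.ker π)
      X₂ := F
      X₃ := X
      f := ModuleCat.ofHom (LinearMap.ker π).subtype
      g := ModuleCat.ofHom π
      zero := ModuleCat.hom_ext (LinearMap.ext fun a ↦ a.2) }
  refine ⟨S, ShortComplex.ShortExact.mk' ?_ ?_ ?_, rfl, ‹_›, hF, ?_⟩
  · rw [ShortComplex.moduleCat_exact_iff]
    exact fun a ha ↦ ⟨⟨a, ha⟩, rfl⟩
  · rw [ModuleCat.mono_iff_injective]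
    exact Subtype.val_injective
  · rw [ModuleCat.epi_iff_surjective]
    exact hπ
  · constructor
    · intro a b hab
      exact Subtype.ext (hF.1 (congrArg Subtype.val hab))
    · rintro ⟨a, ha⟩
      obtain ⟨b, rfl⟩ := hF.2 a
      refine ⟨⟨b, hX.1 ?_⟩, rfl⟩
      change x • π b = x • 0
      rw [← map_smul, smul_zero]
      exact ha

/-- `Tor_i(X, N)` vanishes when `x` acts bijectively on `X` and `N` is `x`-power torsion, by dimension
shifting along `exists_flat_cover`. As `N` need not be killed by a single power of `x`, the argument
of `isZero_ext_of_bijective` does not apply. -/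
lemma isZero_tor_of_bijective {x : R} (X N : ModuleCat.{u} R)
    (hX : Function.Bijective (fun a : X ↦ x • a)) (hN : IsPowTorsion x N) (i : ℕ) :
    IsZero ((torF X i).obj N) := by
  induction i generalizing X with
  | zero => exact isZero_tor_zero hX.2 hN
  | succ i ih =>
    obtain ⟨S, hS, rfl, _, h₂, h₁⟩ := exists_flat_cover X hX
    have := isIso_torConnecting hS i N (by
      rintro (_ | j)
      · exact isZero_tor_zero h₂.2 hN
      · exact isZero_tor_of_flat _ _ _)
    exact (ih S.X₁ h₁).of_iso (asIso ((torConnecting hS i).app N))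

end Vanishing

section Iterate
open RingTheory.Sequence localCohomology

variable {R : Type u} [CommRing R]

/-- The direct system of the modules `Ext^i(R / J^n, Y)`, whose colimit is `H^i_J(Y)`. -/
noncomputable def extSystem (J : Ideal R) (i : ℕ) (Y : ModuleCat.{u} R) :
    ℕᵒᵖᵒᵖ ⥤ ModuleCat.{u} R :=
  (ringModIdeals (idealPowersDiagram J)).op ⋙ ((homOp Y).leftDerived i).leftOp

/-- `H^i_J(Y)` as the colimit of modules (rather than of functors). -/
noncomputable def localCohomologyIso (J : Ideal R) (i : ℕ) (Y : ModuleCat.{u} R) :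
    (localCohomology J i).obj Y ≅ colimit (extSystem J i Y) :=
  colimitObjIsoColimitCompEvaluation (diagram (idealPowersDiagram J) i) Y

/-- Dimension shifting `Ext^i(R / J^n, X₃) ≅ Ext^{i+1}(R / J^n, X₁)`, compatibly in `n`. -/
lemma nonempty_extSystem_iso {S : ShortComplex (ModuleCat.{u} R)} (hS : S.ShortExact)
    {J : Ideal R} {x : R} (hx : x ∈ J) (hL : Function.Bijective (fun a : S.X₂ ↦ x • a)) (i : ℕ) :
    Nonempty (extSystem J (i + 1) S.X₁ ≅ extSystem J i S.X₃) := by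
  let τ : extSystem J i S.X₃ ⟶ extSystem J (i + 1) S.X₁ :=
    Functor.whiskerLeft _ (NatTrans.leftOp (extConnecting hS i))
  have (n : ℕᵒᵖᵒᵖ) : IsIso (τ.app n) := by
    have := isIso_extConnecting hS i (ModuleCat.of R (R ⧸ J ^ n.unop.unop)) fun j ↦
      isZero_ext_of_bijective _ _ x n.unop.unop _ hL (by
        intro z
        obtain ⟨r, rfl⟩ := Ideal.Quotient.mk_surjective z
        refine Ideal.Quotient.eq_zero_iff_mem.2 ?_
        exact Ideal.mul_mem_right _ _ (Ideal.pow_mem_pow hx _))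
    exact inferInstanceAs (IsIso ((extConnecting hS i).app
      (ModuleCat.of R (R ⧸ J ^ n.unop.unop))).unop)
  have := NatIso.isIso_of_isIso_app τ
  exact ⟨(asIso τ).symm⟩

/-- Starting from `M` and replacing `M` by `M[1/x] / M` for the successive members `x` of a weakly
regular sequence of length `d` yields a module `H` such that, for `N` torsion with respect to the
sequence, `Tor_{i+d}(H, N) ≅ Tor_i(M, N)` and the lower Tor modules vanish. Also
`Ext^{i+d}(R / J^n, M) ≅ Ext^i(R / J^n, H)` compatibly in `n`. The last clause, that torsion of `M`
passes to `H`, serves the induction. -/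
theorem exists_iterated_cech (J : Ideal R) (rs : List R) (hJ : ∀ x ∈ rs, x ∈ J)
    (M : ModuleCat.{u} R) (hM : IsWeaklyRegular M rs) :
    ∃ H : ModuleCat.{u} R,
      (∀ N : ModuleCat.{u} R, (∀ x ∈ rs, IsPowTorsion x N) →
        (∀ i, Nonempty ((torF H (i + rs.length)).obj N ≅ (torF M i).obj N)) ∧
        ∀ i < rs.length, IsZero ((torF H i).obj N)) ∧
      (∀ i, Nonempty (extSystem J (i + rs.length) M ≅ extSystem J i H)) ∧
      (∀ x ∈ rs, IsPowTorsion x H) ∧ ∀ y : R, IsPowTorsion y M → IsPowTorsion y H := by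
  induction rs generalizing M with
  | nil => exact ⟨M, fun N _ ↦ ⟨fun i ↦ ⟨Iso.refl _⟩, by simp⟩, fun i ↦ ⟨Iso.refl _⟩, by simp,
      fun y hy ↦ hy⟩
  | cons x rs ih =>
    rw [isWeaklyRegular_cons_iff] at hM
    obtain ⟨L, C, f, g, h⟩ := IsCechSequence.exists_of_isSMulRegular hM.1
    let S : ShortComplex (ModuleCat.{u} R) := ShortComplex.mk (ModuleCat.ofHom f)
      (ModuleCat.ofHom g) (by ext m; exact h.exact.apply_apply_eq_zero m)
    have hS : S.ShortExact := by
      refine ShortComplex.ShortExact.mk' ?_ ?_ ?_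
      · rw [ShortComplex.moduleCat_exact_iff]
        exact fun l hl ↦ (h.exact l).1 hl
      · rw [ModuleCat.mono_iff_injective]
        exact h.injective
      · rw [ModuleCat.epi_iff_surjective]
        exact h.surjective
    obtain ⟨H, hTor, hExt, hrs, htors⟩ := ih (fun y hy ↦ hJ y (List.mem_cons_of_mem _ hy)) C
      (h.isWeaklyRegular_right hM.2)
    refine ⟨H, fun N hN ↦ ⟨fun i ↦ ?_, fun i hi ↦ ?_⟩, fun i ↦ ?_, ?_, ?_⟩
    · obtain ⟨e⟩ := (hTor N fun y hy ↦ hN y (List.mem_cons_of_mem _ hy)).1 (i + 1)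
      have := isIso_torConnecting hS i N
        (isZero_tor_of_bijective _ _ h.bijective (hN x List.mem_cons_self))
      rw [List.length_cons, ← add_assoc, add_right_comm]
      exact ⟨e ≪≫ asIso ((torConnecting hS i).app N)⟩
    · have hN' := hTor N fun y hy ↦ hN y (List.mem_cons_of_mem _ hy)
      rcases (Nat.lt_succ_iff.1 hi).lt_or_eq with hi | rfl
      · exact hN'.2 i hi
      -- degree `rs.length`: here `Tor_0(C, N) = C ⊗ N`, and `x` acts surjectively on `C`
      · obtain ⟨e⟩ := hN'.1 0
        rw [zero_add] at e
        refine IsZero.of_iso (isZero_tor_zero (x := x) ?_ (hN x List.mem_cons_self)) e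
        intro c
        obtain ⟨l, rfl⟩ := h.surjective c
        obtain ⟨l, rfl⟩ := h.bijective.2 l
        exact ⟨g l, (map_smul g x l).symm⟩
    · obtain ⟨e⟩ := hExt i
      obtain ⟨e'⟩ := nonempty_extSystem_iso hS (hJ x List.mem_cons_self) h.bijective
        (i + rs.length)
      exact ⟨e' ≪≫ e⟩
    · rintro y hy
      rcases List.mem_cons.1 hy with rfl | hy
      · exact htors _ h.torsion_self
      · exact hrs y hy
    · exact fun y hy ↦ htors y (h.torsion_of_torsion hy)

/-- Every `J`-power torsion module `H` is the colimit of the modules `Hom(R / J^n, H)`. -/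
lemma nonempty_colimit_iso (J : Ideal R) (H : ModuleCat.{u} R)
    (hH : ∀ h : H, ∃ n : ℕ, ∀ a ∈ J ^ n, a • h = 0) :
    Nonempty (colimit (extSystem J 0 H) ≅ H) := by
  let G : ℕᵒᵖᵒᵖ ⥤ ModuleCat.{u} R :=
    (ringModIdeals (idealPowersDiagram J)).op ⋙ (linearYoneda R (ModuleCat.{u} R)).obj H
  have e : extSystem J 0 H ≅ G :=
    Functor.isoWhiskerLeft _ ((Functor.leftOpRightOpEquiv _ _).inverse.mapIso (extZeroIso H)).unop.symm
  let c : Cocone G :=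
    { pt := H
      ι :=
        { app := fun n ↦ ModuleCat.ofHom
            { toFun := fun f ↦ (ModuleCat.Hom.hom
                (show ModuleCat.of R (R ⧸ J ^ n.unop.unop) ⟶ H from f)) (Ideal.Quotient.mk _ 1)
              map_add' := fun f g ↦ rfl
              map_smul' := fun r f ↦ rfl }
          naturality := fun n m φ ↦ rfl } }
  -- `c` evaluates a homomorphism `R / J^n → H` at the class of `1`
  have hc : Function.Bijective (colimit.desc G c) := by
    have hι (n) (f : G.obj n) : colimit.desc G c (colimit.ι G n f) = c.ι.app n f := by
      rw [← ConcreteCategory.comp_apply, colimit.ι_desc]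
    constructor
    · refine (injective_iff_map_eq_zero (colimit.desc G c).hom).2 fun z hz ↦ ?_
      have := preservesSmallestFilteredColimits_of_preservesFilteredColimits
        (CategoryTheory.forget (ModuleCat.{u} R))
      obtain ⟨n, f, rfl⟩ := Concrete.colimit_exists_rep G z
      have hf : f = 0 := by
        have : c.ι.app n f = 0 := (hι n f).symm.trans hz
        have : ∀ q, ModuleCat.Hom.hom (show ModuleCat.of R (R ⧸ J ^ n.unop.unop) ⟶ H from f) q = 0 := by
          intro q
          obtain ⟨r, rfl⟩ := Ideal.Quotient.mk_surjective q
          have e : Ideal.Quotient.mk (J ^ n.unop.unop) r = r • Ideal.Quotient.mk _ 1 := by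
            rw [← Ideal.Quotient.mk_eq_mk, ← Ideal.Quotient.mk_eq_mk, ← Submodule.Quotient.mk_smul]
            simp
          rw [e, map_smul]
          exact (congrArg (r • ·) this).trans (smul_zero r)
        exact ModuleCat.hom_ext (LinearMap.ext this)
      rw [hf]
      exact map_zero _
    · intro h
      obtain ⟨n, hn⟩ := hH h
      let f : ModuleCat.of R (R ⧸ J ^ n) ⟶ H := ModuleCat.ofHom
        (Submodule.liftQ (J ^ n) (LinearMap.toSpanSingleton R H h) (by
          intro a ha
          exact hn a ha))
      refine ⟨colimit.ι G (Opposite.op (Opposite.op n)) f, ?_⟩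
      exact (hι (Opposite.op (Opposite.op n)) f).trans (one_smul R h)
  have : IsIso (colimit.desc G c) := (ConcreteCategory.isIso_iff_bijective _).2 hc
  exact ⟨HasColimit.isoOfNatIso e ≪≫ asIso (colimit.desc G c)⟩

end Iterate
end TorTop

/-! ### Cohen-Macaulay local rings -/

namespace TorTop
section Final
open Limits RingTheory.Sequence IsLocalRing

variable {R : Type u} [CommRing R]

lemma IsPowTorsion.congr {x : R} {M N : Type*} [AddCommGroup M] [Module R M] [AddCommGroup N]
    [Module R N] (e : M ≃ₗ[R] N) (h : IsPowTorsion x M) : IsPowTorsion x N := fun n ↦ by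
  obtain ⟨j, hj⟩ := h (e.symm n)
  exact ⟨j, by rw [← e.apply_symm_apply n, ← map_smul, hj, map_zero]⟩

variable [IsNoetherianRing R] [IsLocalRing R]

/-- A regular sequence whose length is the dimension generates an ideal primary to the maximal ideal,
so torsion with respect to its members is torsion with respect to the maximal ideal. -/
lemma exists_pow_maximalIdeal_smul_eq_zero {rs : List R} (hrs : IsRegular R rs)
    (hdim : ringKrullDim R = rs.length) {H : Type*} [AddCommGroup H] [Module R H]
    (hH : ∀ x ∈ rs, IsPowTorsion x H) (h : H) :
    ∃ n : ℕ, ∀ a ∈ maximalIdeal R ^ n, a • h = 0 := by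
  have h0 : ringKrullDim (R ⧸ Ideal.ofList rs) = 0 := by
    have := ringKrullDim_add_length_eq_ringKrullDim_of_isRegular rs hrs
    rw [hdim] at this
    refine (ENat.WithBot.add_natCast_cancel (c := rs.length)).1 ?_
    rw [this, zero_add]
  have hne : Ideal.ofList rs ≠ ⊤ := by
    intro he
    have := hrs.top_ne_smul
    simp [he] at this
  have : Nontrivial (R ⧸ Ideal.ofList rs) := Ideal.Quotient.nontrivial_iff.2 hne
  rw [← ringKrullDimZero_iff_ringKrullDim_eq_zero,
    Ideal.krullDimLE_zero_quotient_iff_forall_minimalPrimes_isMaximal] at h0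
  have h1 : maximalIdeal R ≤ (Ideal.ofList rs).radical := by
    rw [← Ideal.sInf_minimalPrimes]
    exact le_sInf fun P hP ↦ (eq_maximalIdeal (h0 P hP)).ge
  let I : Ideal R := LinearMap.ker (LinearMap.toSpanSingleton R H h)
  have h2 : Ideal.ofList rs ≤ I.radical := Ideal.span_le.2 fun x hx ↦ by
    obtain ⟨j, hj⟩ := hH x hx h
    exact ⟨j, hj⟩
  obtain ⟨n, hn⟩ := Ideal.exists_pow_le_of_le_radical_of_fg
    (h1.trans (Ideal.radical_le_radical_iff.2 h2)) (IsNoetherian.noetherian (maximalIdeal R))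
  exact ⟨n, fun a ha ↦ hn ha⟩

omit [IsNoetherianRing R] in
lemma isZero_ext_of_lt_depth {i : ℕ} (hi : (i : ℕ∞) < depth R R) :
    IsZero (((homOp (ModuleCat.of R R)).leftDerived i).obj
      (ModuleCat.of R (ResidueField R))) := by
  have h : Subsingleton (extM R (ResidueField R) R i) := by
    rw [← not_nontrivial_iff_subsingleton]
    exact fun h ↦ hi.not_ge (sInf_le ⟨i, rfl, h⟩)
  have h' : IsZero (extM R (ResidueField R) R i) :=
    @ModuleCat.isZero_of_subsingleton _ _ (extM R (ResidueField R) R i) h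
  exact h'.op

end Final
end TorTop

/-- Let `(R, m)` be a `d`-dimensional Cohen-Macaulay Noetherian local ring. Then
`Tor_i^R(H^d_m(R), H^d_m(R))` is isomorphic to `H^d_m(R)` when `i = d`, and vanishes
when `i ≠ d`. -/
theorem tor_top_localCohomology (R : Type u) [CommRing R] [IsNoetherianRing R]
    [IsLocalRing R] (hCM : (depth R R : WithBot ℕ∞) = ringKrullDim R)
    (d : ℕ) (hd : ringKrullDim R = d) :
    Nonempty
      (torM R (↥((localCohomology (IsLocalRing.maximalIdeal R) d).obj (ModuleCat.of R R)))
          (↥((localCohomology (IsLocalRing.maximalIdeal R) d).obj (ModuleCat.of R R))) d ≅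
        (localCohomology (IsLocalRing.maximalIdeal R) d).obj (ModuleCat.of R R)) ∧
    ∀ i : ℕ, i ≠ d →
      Subsingleton
        (torM R (↥((localCohomology (IsLocalRing.maximalIdeal R) d).obj (ModuleCat.of R R)))
          (↥((localCohomology (IsLocalRing.maximalIdeal R) d).obj (ModuleCat.of R R))) i) := by
  have hdepth : depth R R = d := by
    rw [hd] at hCM
    exact_mod_cast hCM
  -- since the depth is `d`, the maximal ideal contains a regular sequence of length `d`
  obtain ⟨rs, rfl, hmem, hrs⟩ := TorTop.exists_isWeaklyRegular_of_ext (IsLocalRing.maximalIdeal R)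
    (ModuleCat.of R (IsLocalRing.ResidueField R)) Ideal.annihilator_quotient d (ModuleCat.of R R)
    fun i hi ↦ TorTop.isZero_ext_of_lt_depth (by rw [hdepth]; exact_mod_cast hi)
  have hreg : RingTheory.Sequence.IsRegular R rs :=
    (IsLocalRing.isRegular_iff_isWeaklyRegular_of_subset_maximalIdeal hmem).2 hrs
  obtain ⟨H, hTor, hExt, hH, -⟩ :=
    TorTop.exists_iterated_cech (IsLocalRing.maximalIdeal R) rs hmem _ hrs
  -- `H` is the top local cohomology module: `H^d_m(R) = colim Ext^d(R / m^n, R)` is isomorphic to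
  -- `colim Hom(R / m^n, H)`, which is `H` because `H` is `m`-power torsion
  obtain ⟨e₁⟩ := hExt 0
  obtain ⟨e₂⟩ := TorTop.nonempty_colimit_iso (IsLocalRing.maximalIdeal R) H
    (TorTop.exists_pow_maximalIdeal_smul_eq_zero hreg hd hH)
  rw [zero_add] at e₁
  set N := (localCohomology (IsLocalRing.maximalIdeal R) rs.length).obj (ModuleCat.of R R) with hN
  let e : N ≅ H := TorTop.localCohomologyIso _ _ _ ≪≫ Limits.HasColimit.isoOfNatIso e₁ ≪≫ e₂
  have hNtors : ∀ x ∈ rs, TorTop.IsPowTorsion x N := fun x hx ↦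
    (hH x hx).congr e.symm.toLinearEquiv
  -- the Tor modules of `H` and the torsion module `N ≅ H` are those of `R` and `N`, shifted by `d`
  obtain ⟨hge, hlt⟩ := hTor N hNtors
  let eTor (i : ℕ) : torM R N N i ≅ (TorTop.torF H i).obj N :=
    ((Tor (ModuleCat.{u} R) i).mapIso e).app N
  constructor
  · obtain ⟨f⟩ := hge 0
    rw [zero_add] at f
    exact ⟨eTor _ ≪≫ f ≪≫ (TorTop.torZeroIso _).app N ≪≫ MonoidalCategory.leftUnitor N⟩
  · intro i hi
    have h0 : Limits.IsZero ((TorTop.torF H i).obj N) := by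
      rcases hi.lt_or_gt with hi | hi
      · exact hlt i hi
      · obtain ⟨k, rfl⟩ := Nat.exists_eq_add_of_lt hi
        obtain ⟨f⟩ := hge (k + 1)
        rw [show rs.length + k + 1 = k + 1 + rs.length by omega]
        have : Module.Flat R (ModuleCat.of R R) := inferInstanceAs (Module.Flat R R)
        exact (TorTop.isZero_tor_of_flat (ModuleCat.of R R) N k).of_iso f
    exact ModuleCat.subsingleton_of_isZero (h0.of_iso (eTor i))
end
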